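/- There exists ε₀ > 0 such that for every 0 < ε ≤ ε₀ the spherefication map ℱ : (B̄(0,ε) \ V) → {z ∈ ℂ : 0 < ‖z‖ ≤ ε}, ℱ(x) = ‖x‖·f(x)/‖f(x)‖, is a locally trivial fibration; moreover, for every 0 < ε' ≤ ε the restriction of ℱ to S(0,ε') \ V is a locally trivial fibration onto the circle {z ∈ ℂ : ‖z‖ = ε'}. -/

import Mathlib

/-!
The total space is trivialized by flowing along two vector fields on `{x | ‖x‖ < R, f x ≠ 0}`
(structure `Fields`): `v` is tangent to the spheres and rotates `f / |f|` at unit speed, while `w`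
rescales `‖x‖` at unit logarithmic speed and leaves `f / |f|` fixed. The time-one map of `θ v + τ w`
then covers the map `z ↦ exp (τ + iθ) z` of the base, so that near a point `b` of the base the fibre
over `z` is carried onto one model fibre `{‖y‖ = r₀, f y / |f y| = 1}`, continuously in `z`
(`Fields.exists_isLocTrivFib`). For the flow to last up to time one, orbits must not run into
`{f = 0}`; this holds because `log |f|` has bounded derivative along `v`, and along `w` away from
the origin. A cutoff, the Picard–Lindelöf theorem and Grönwall's inequality then give existence and
continuity of the flow.

The fields exist because of Milnor's inequalities. Put `μ = Df(x)x / f(x)` and `M = ‖x‖ ‖Df(x)‖ /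
|f(x)|`. Near the origin, where `f ≠ 0`, one has `2 |Im μ| < M` (`im_mu_lt`), so that the gradient
of `arg f` makes a definite angle with the radial direction, and both `v` and `w` can be written
down; and `M ‖x‖ ≤ 1` wherever `M² ≤ 2 |μ|²` (`bigM_mul_norm_le`), which bounds the derivative of
`log |f|` along `w`. Both are proved by contradiction: the curve selection lemma gives a real
analytic arc `γ(t) = t^α a(t)` with `f(γ(t)) = t^β b(t)` along which the inequality fails, and
differentiating `f ∘ γ` shows that `α μ` equals the positive number `β` up to an error `O(t) (1 +
M)` (`curve_estimate`).

The curve selection lemma (`curveSel`), for sign conditions on finitely many germs of real analytic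
functions, is proved by induction on the dimension. After a linear change of coordinates,
Weierstrass preparation (`weierstrass`) turns the germs into polynomials in one variable with
analytic coefficients. Sign determination (`signDet`) reduces the existence of a point over `x`
with the given signs to a sign condition on finitely many germs at `x`, for which the induction
hypothesis gives a curve; over that curve, Puiseux's theorem (`puiseux`) parametrizes the roots
analytically, and hence a point of each cell that they cut out on the line. Weierstrass preparation
and the Hensel step of Puiseux's theorem both come from the analytic inverse function theorem, the
former in the disc algebra. Osgood's lemma (`osgood`) supplies the analyticity of a holomorphic
function of several variables.
-/

/-- `p : Z → B` is a locally trivial fibration (with some fibre `F`). -/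
def IsLocTrivFib {Z B : Type} [TopologicalSpace Z] [TopologicalSpace B] (p : Z → B) : Prop :=
  ∃ (F : Type) (_ : TopologicalSpace F), Continuous p ∧
    ∀ b : B, ∃ W : Set B, IsOpen W ∧ b ∈ W ∧
      ∃ e : (p ⁻¹' W) ≃ₜ (W × F), ∀ z : (p ⁻¹' W), ((e z).1 : B) = p (z : Z)

/-! ### Sign patterns of functions on the line -/

section

open Set Filter Topology Polynomial
namespace MilnorFib

theorem bump_aux {a b u v : ℝ} (hau : a < u) (huv : u ≤ v) (hvb : v < b) :
    ∃ κ : ℝ ≃o ℝ, κ u = v ∧ ∀ x, x ∉ Ioo a b → κ x = x := by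
  have h1 : 0 < u - a := by linarith
  have h2 : 0 < b - u := by linarith
  have h3 : 0 < b - v := by linarith
  have h4 : 0 < v - a := by linarith
  set L1 : ℝ → ℝ := fun x => a + (x - a) * ((v - a) / (u - a)) with hL1
  set L2 : ℝ → ℝ := fun x => b - (b - x) * ((b - v) / (b - u)) with hL2
  have e1 : 0 < (v - a) / (u - a) := by positivity
  have e2 : 0 < (b - v) / (b - u) := by positivity
  have e1' : 1 ≤ (v - a) / (u - a) := by rw [le_div_iff₀ h1]; linarith
  have e2' : (b - v) / (b - u) ≤ 1 := by rw [div_le_iff₀ h2]; linarith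
  have m1 : StrictMono L1 := fun x y hxy => by
    simp only [hL1]; nlinarith
  have m2 : StrictMono L2 := fun x y hxy => by
    simp only [hL2]; nlinarith
  set κ : ℝ → ℝ := fun x => max x (min (L1 x) (L2 x)) with hκ
  have hm : StrictMono κ := fun x y h => max_lt_max h (min_lt_min (m1 h) (m2 h))
  have out : ∀ x, x ∉ Ioo a b → κ x = x := by
    intro x hx
    simp only [mem_Ioo, not_and, not_lt] at hx
    refine max_eq_left ?_
    by_cases hxa : a < x
    · refine (min_le_right _ _).trans ?_
      have := hx hxa
      simp only [hL2]; nlinarith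
    · refine (min_le_left _ _).trans ?_
      simp only [hL1]; nlinarith
  have hc : Continuous κ := by
    simp only [hκ, hL1, hL2]; fun_prop
  have hs : Function.Surjective κ := by
    refine hc.surjective (tendsto_atTop_mono (fun x => le_max_left _ _) tendsto_id) ?_
    refine tendsto_id.congr' ?_
    filter_upwards [eventually_le_atBot a] with x hx
    exact (out x (fun h => absurd h.1 (not_lt.2 hx))).symm
  refine ⟨hm.orderIsoOfSurjective κ hs, ?_, out⟩
  change κ u = v
  have : L1 u = v := by simp only [hL1]; field_simp; ring
  have hpr : L2 u = v := by simp only [hL2]; field_simp; ring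
  simp [hκ, this, hpr, huv]

/-- An increasing bijection of the line supported in `(a, b)` can move any point of `(a, b)` to
any other one. -/
theorem exists_bump {a b u v : ℝ} (hu : u ∈ Ioo a b) (hv : v ∈ Ioo a b) :
    ∃ κ : ℝ ≃o ℝ, κ u = v ∧ ∀ x, x ∉ Ioo a b → κ x = x := by
  rcases le_total u v with h | h
  · exact bump_aux hu.1 h hv.2
  · obtain ⟨κ, h1, h2⟩ := bump_aux hv.1 h hu.2
    refine ⟨κ.symm, by rw [← h1]; simp, fun x hx => ?_⟩
    rw [OrderIso.symm_apply_eq, h2 x hx]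

/-- The component of `x` in the complement of the finite set `X`. -/
abbrev comp (X : Finset ℝ) (x : ℝ) : Set ℝ := ordConnectedComponent ((X : Set ℝ)ᶜ) x

theorem mem_comp {X : Finset ℝ} {x y : ℝ} : y ∈ comp X x ↔ ∀ z ∈ uIcc x y, z ∉ X := by
  simp [comp, mem_ordConnectedComponent, subset_def]

theorem self_mem_comp {X : Finset ℝ} {x : ℝ} (hx : x ∉ X) : x ∈ comp X x := by
  simp [hx]

theorem notMem_of_mem_comp {X : Finset ℝ} {x y : ℝ} (h : y ∈ comp X x) : y ∉ X :=
  mem_comp.1 h y right_mem_uIcc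

theorem ordConnected_comp {X : Finset ℝ} {x : ℝ} : OrdConnected (comp X x) := inferInstance

theorem isOpen_comp {X : Finset ℝ} {x : ℝ} : IsOpen (comp X x) := by
  rw [isOpen_iff_mem_nhds]
  intro y hy
  have h1 : ((X : Set ℝ)ᶜ) ∈ 𝓝 y :=
    X.finite_toSet.isClosed.isOpen_compl.mem_nhds (notMem_of_mem_comp hy)
  have h2 : ordConnectedComponent ((X : Set ℝ)ᶜ) y ∈ 𝓝 y := by
    obtain ⟨ε, hε, hb⟩ := Metric.mem_nhds_iff.1 h1
    refine Filter.mem_of_superset (Metric.ball_mem_nhds y hε) fun z hz => ?_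
    rw [mem_ordConnectedComponent]
    refine subset_trans ?_ hb
    have : OrdConnected (Metric.ball y ε) := by rw [Real.ball_eq_Ioo]; infer_instance
    exact this.uIcc_subset (Metric.mem_ball_self hε) hz
  have : ordConnectedComponent ((X : Set ℝ)ᶜ) y = comp X x :=
    (ordConnectedComponent_eq (mem_ordConnectedComponent.1 hy)).symm
  rwa [this] at h2

theorem comp_eq {X : Finset ℝ} {x y : ℝ} (h : y ∈ comp X x) : comp X y = comp X x :=
    (ordConnectedComponent_eq (mem_ordConnectedComponent.1 h)).symm

theorem exists_window {X : Finset ℝ} {x u v : ℝ} (hu : u ∈ comp X x) (hv : v ∈ comp X x) :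
    ∃ a b, u ∈ Ioo a b ∧ v ∈ Ioo a b ∧ Ioo a b ⊆ comp X x := by
  have hmin : min u v ∈ comp X x := by rcases min_choice u v with h | h <;> rw [h] <;> assumption
  have hmax : max u v ∈ comp X x := by rcases max_choice u v with h | h <;> rw [h] <;> assumption
  obtain ⟨a, ha, ha'⟩ := exists_Ioc_subset_of_mem_nhds (isOpen_comp.mem_nhds hmin) ⟨_, sub_one_lt _⟩
  obtain ⟨b, hb, hb'⟩ := exists_Ico_subset_of_mem_nhds (isOpen_comp.mem_nhds hmax) ⟨_, lt_add_one _⟩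
  refine ⟨a, b, ⟨by simp at ha; exact ha.1, by simp at hb; exact hb.1⟩,
    ⟨by simp at ha; exact ha.2, by simp at hb; exact hb.2⟩, fun y hy => ?_⟩
  by_cases h1 : y ≤ min u v
  · exact ha' ⟨hy.1, h1⟩
  by_cases h2 : max u v ≤ y
  · exact hb' ⟨h2, hy.2⟩
  · exact ordConnected_comp.out hmin hmax ⟨(not_le.1 h1).le, (not_le.1 h2).le⟩

theorem orderIso_mem_comp {X : Finset ℝ} {κ : ℝ ≃o ℝ} (hκ : ∀ z ∈ X, κ z = z) {x : ℝ}
    (hx : x ∉ X) : κ x ∈ comp X x := by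
  rw [mem_comp]
  intro z hz hzX
  have hzx : z ≠ x := fun h => hx (h ▸ hzX)
  rw [mem_uIcc] at hz
  have h0 := hκ z hzX
  rcases hz with ⟨h1, h2⟩ | ⟨h1, h2⟩
  · have := κ.strictMono (lt_of_le_of_ne h1 hzx.symm)
    linarith
  · have := κ.strictMono (lt_of_le_of_ne h2 hzx)
    linarith

end MilnorFib

end

section

open Set Filter Topology Polynomial
namespace MilnorFib

/-- The component of `x` is unbounded above or has a right end point in `X`. -/
theorem comp_right {X : Finset ℝ} {x : ℝ} (hx : x ∉ X) :
    (Ici x ⊆ comp X x) ∨ ∃ b ∈ X, x < b ∧ Ico x b ⊆ comp X x := by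
  by_cases h : ((X.filter (x < ·)).Nonempty)
  · right
    refine ⟨(X.filter (x < ·)).min' h, (Finset.mem_filter.1 (Finset.min'_mem _ h)).1,
      (Finset.mem_filter.1 (Finset.min'_mem _ h)).2, fun y hy => mem_comp.2 fun z hz hzX => ?_⟩
    rw [uIcc_of_le hy.1] at hz
    have hzx : x < z := lt_of_le_of_ne hz.1 (fun hpr => hx (hpr ▸ hzX))
    have := Finset.min'_le _ z (Finset.mem_filter.2 ⟨hzX, hzx⟩)
    linarith [hz.2, hy.2]
  · left
    intro y hy
    refine mem_comp.2 fun z hz hzX => h ⟨z, Finset.mem_filter.2 ⟨hzX, ?_⟩⟩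
    rw [uIcc_of_le hy] at hz
    exact lt_of_le_of_ne hz.1 (fun hpr => hx (hpr ▸ hzX))

theorem comp_left {X : Finset ℝ} {x : ℝ} (hx : x ∉ X) :
    (Iic x ⊆ comp X x) ∨ ∃ b ∈ X, b < x ∧ Ioc b x ⊆ comp X x := by
  by_cases h : ((X.filter (· < x)).Nonempty)
  · right
    refine ⟨(X.filter (· < x)).max' h, (Finset.mem_filter.1 (Finset.max'_mem _ h)).1,
      (Finset.mem_filter.1 (Finset.max'_mem _ h)).2, fun y hy => mem_comp.2 fun z hz hzX => ?_⟩
    rw [uIcc_of_ge hy.2] at hz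
    have hzx : z < x := lt_of_le_of_ne hz.2 (fun hpr => hx (hpr ▸ hzX))
    have := Finset.le_max' (X.filter (· < x)) z (Finset.mem_filter.2 ⟨hzX, hzx⟩)
    linarith [hz.1, hy.1]
  · left
    intro y hy
    refine mem_comp.2 fun z hz hzX => h ⟨z, Finset.mem_filter.2 ⟨hzX, ?_⟩⟩
    rw [uIcc_of_ge hy] at hz
    exact lt_of_le_of_ne hz.2 (fun hpr => hx (hpr ▸ hzX))

/-- If `P` and `P'` have the same sign on `X` and the same direction of monotonicity on the
component of `x`, then `P'` takes a positive value there as soon as `P` does. -/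
theorem exists_pos_of_exists_pos {X : Finset ℝ} {P P' : ℝ → ℝ} (hP : Continuous P)
    (hP' : Continuous P') (htop : Tendsto (fun x => |P' x|) atTop atTop)
    (hbot : Tendsto (fun x => |P' x|) atBot atTop)
    (hX : ∀ x ∈ X, 0 < P x → 0 < P' x) {x : ℝ} (hx : x ∉ X)
    (hmono : (StrictMonoOn P (comp X x) ∧ StrictMonoOn P' (comp X x)) ∨
      (StrictAntiOn P (comp X x) ∧ StrictAntiOn P' (comp X x)))
    (h : 0 < P x) : ∃ y ∈ comp X x, 0 < P' y := by
  have hxx := self_mem_comp hx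
  rcases hmono with ⟨m, m'⟩ | ⟨m, m'⟩
  · rcases comp_right hx with hr | ⟨b, hbX, hxb, hr⟩
    · obtain ⟨y, hy1, hy2⟩ :=
        ((htop.eventually_gt_atTop (|P' x|)).and (eventually_gt_atTop x)).exists
      have hy : y ∈ comp X x := hr hy2.le
      have h3 := m' hxx hy hy2
      refine ⟨y, hy, ?_⟩
      by_contra hcon
      rw [abs_of_nonpos (not_lt.1 hcon)] at hy1
      have := neg_abs_le (P' x)
      linarith
    · have hPb : P x ≤ P b := by
        have : ∀ᶠ y in 𝓝[<] b, P x ≤ P y := by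
          filter_upwards [Ioo_mem_nhdsLT hxb] with y hy
          exact (m hxx (hr ⟨hy.1.le, hy.2⟩) hy.1).le
        exact ge_of_tendsto (hP.continuousAt.tendsto.mono_left nhdsWithin_le_nhds) this
      have h1 := hX b hbX (h.trans_le hPb)
      have : ∀ᶠ y in 𝓝[<] b, 0 < P' y :=
        (hP'.continuousAt.tendsto.mono_left nhdsWithin_le_nhds).eventually (lt_mem_nhds h1)
      obtain ⟨y, hy, hy'⟩ := (this.and (Ioo_mem_nhdsLT hxb)).exists
      exact ⟨y, hr ⟨hy'.1.le, hy'.2⟩, hy⟩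
  · rcases comp_left hx with hr | ⟨b, hbX, hxb, hr⟩
    · obtain ⟨y, hy1, hy2⟩ :=
        ((hbot.eventually_gt_atTop (|P' x|)).and (eventually_lt_atBot x)).exists
      have hy : y ∈ comp X x := hr hy2.le
      have h3 := m' hy hxx hy2
      refine ⟨y, hy, ?_⟩
      by_contra hcon
      rw [abs_of_nonpos (not_lt.1 hcon)] at hy1
      have := neg_abs_le (P' x)
      linarith
    · have hPb : P x ≤ P b := by
        have : ∀ᶠ y in 𝓝[>] b, P x ≤ P y := by
          filter_upwards [Ioo_mem_nhdsGT hxb] with y hy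
          exact (m (hr ⟨hy.1, hy.2.le⟩) hxx hy.2).le
        exact ge_of_tendsto (hP.continuousAt.tendsto.mono_left nhdsWithin_le_nhds) this
      have h1 := hX b hbX (h.trans_le hPb)
      have : ∀ᶠ y in 𝓝[>] b, 0 < P' y :=
        (hP'.continuousAt.tendsto.mono_left nhdsWithin_le_nhds).eventually (lt_mem_nhds h1)
      obtain ⟨y, hy, hy'⟩ := (this.and (Ioo_mem_nhdsGT hxb)).exists
      exact ⟨y, hr ⟨hy'.1, hy'.2.le⟩, hy⟩

/-- Around a zero inside a component on which it is strictly monotone, a function takes both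
signs. -/
theorem exists_signs_of_root {X : Finset ℝ} {P : ℝ → ℝ} {x ξ : ℝ} (hξ : ξ ∈ comp X x)
    (hm : StrictMonoOn P (comp X x) ∨ StrictAntiOn P (comp X x)) (h0 : P ξ = 0) :
    (∃ y ∈ comp X x, 0 < P y) ∧ (∃ y ∈ comp X x, P y < 0) := by
  obtain ⟨a, b, h1, -, h2⟩ := exists_window hξ hξ
  have ha : (a + ξ) / 2 ∈ comp X x := h2 ⟨by linarith [h1.1], by linarith [h1.1, h1.2]⟩
  have hb : (ξ + b) / 2 ∈ comp X x := h2 ⟨by linarith [h1.1, h1.2], by linarith [h1.2]⟩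
  have la : (a + ξ) / 2 < ξ := by linarith [h1.1]
  have lb : ξ < (ξ + b) / 2 := by linarith [h1.2]
  rcases hm with m | m
  · exact ⟨⟨_, hb, h0 ▸ m hξ hb lb⟩, ⟨_, ha, h0 ▸ m ha hξ la⟩⟩
  · exact ⟨⟨_, ha, h0 ▸ m ha hξ la⟩, ⟨_, hb, h0 ▸ m hξ hb lb⟩⟩

/-- Two functions with equal signs on a finite set `X`, monotone in the same direction on every
component of its complement and unbounded at both ends, have the same sign diagram: an increasing
bijection of the line which fixes `X` matches their signs. -/
theorem exists_orderIso_sign_eq {X Z : Finset ℝ} {P P' : ℝ → ℝ} (hP : Continuous P)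
    (hP' : Continuous P')
    (htop : Tendsto (fun x => |P x|) atTop atTop) (hbot : Tendsto (fun x => |P x|) atBot atTop)
    (htop' : Tendsto (fun x => |P' x|) atTop atTop) (hbot' : Tendsto (fun x => |P' x|) atBot atTop)
    (hX : ∀ x ∈ X, SignType.sign (P x) = SignType.sign (P' x))
    (hmono : ∀ x ∉ X, (StrictMonoOn P (comp X x) ∧ StrictMonoOn P' (comp X x)) ∨
      (StrictAntiOn P (comp X x) ∧ StrictAntiOn P' (comp X x)))
    (hZ : ∀ x, P x = 0 → x ∈ Z) :
    ∃ κ : ℝ ≃o ℝ, (∀ x ∈ X, κ x = x) ∧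
      ∀ x, SignType.sign (P x) = SignType.sign (P' (κ x)) := by
  have hmono1 : ∀ x ∉ X, StrictMonoOn P (comp X x) ∨ StrictAntiOn P (comp X x) := fun x hx =>
    (hmono x hx).imp And.left And.left
  have hmono2 : ∀ x ∉ X, StrictMonoOn P' (comp X x) ∨ StrictAntiOn P' (comp X x) := fun x hx =>
    (hmono x hx).imp And.right And.right
  -- transfer of signs inside a component, in both directions
  have posT : ∀ x ∉ X, (∃ y ∈ comp X x, 0 < P y) → ∃ y ∈ comp X x, 0 < P' y := by
    rintro x hx ⟨y, hy, h⟩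
    rw [← comp_eq hy]
    exact exists_pos_of_exists_pos hP hP' htop' hbot'
      (fun z hz h => by rw [← sign_eq_one_iff, ← hX z hz]; exact sign_eq_one_iff.2 h)
      (notMem_of_mem_comp hy) (by rw [comp_eq hy]; exact hmono x hx) h
  have negT : ∀ x ∉ X, (∃ y ∈ comp X x, P y < 0) → ∃ y ∈ comp X x, P' y < 0 := by
    rintro x hx ⟨y, hy, h⟩
    rw [← comp_eq hy]
    have := exists_pos_of_exists_pos (X := X) hP.neg hP'.neg (by simpa using htop')
      (by simpa using hbot')
      (fun z hz h => by
        have hpr := hX z hz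
        rw [Pi.neg_apply, Left.neg_pos_iff, ← sign_eq_neg_one_iff] at h ⊢; rw [← hpr, h])
      (notMem_of_mem_comp hy)
      (by
        rw [comp_eq hy]
        exact (hmono x hx).symm.imp (fun h => ⟨h.1.neg, h.2.neg⟩) (fun h => ⟨h.1.neg, h.2.neg⟩))
      (by simpa using h)
    simpa using this
  have negT' : ∀ x ∉ X, (∃ y ∈ comp X x, P' y < 0) → ∃ y ∈ comp X x, P y < 0 := by
    rintro x hx ⟨y, hy, h⟩
    rw [← comp_eq hy]
    have := exists_pos_of_exists_pos (X := X) hP'.neg hP.neg (by simpa using htop)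
      (by simpa using hbot)
      (fun z hz h => by
        have hpr := hX z hz
        rw [Pi.neg_apply, Left.neg_pos_iff, ← sign_eq_neg_one_iff] at h ⊢; rw [hpr, h])
      (notMem_of_mem_comp hy)
      (by
        rw [comp_eq hy]
        exact (hmono x hx).symm.imp (fun h => ⟨h.2.neg, h.1.neg⟩) (fun h => ⟨h.2.neg, h.1.neg⟩))
      (by simpa using h)
    simpa using this
  have posT' : ∀ x ∉ X, (∃ y ∈ comp X x, 0 < P' y) → ∃ y ∈ comp X x, 0 < P y := by
    rintro x hx ⟨y, hy, h⟩
    rw [← comp_eq hy]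
    exact exists_pos_of_exists_pos hP' hP htop hbot
      (fun z hz h => by rw [← sign_eq_one_iff, hX z hz]; exact sign_eq_one_iff.2 h)
      (notMem_of_mem_comp hy) (by rw [comp_eq hy]; exact (hmono x hx).imp And.symm And.symm) h
  have root : ∀ x ∉ X, P x = 0 → ∃ y ∈ comp X x, P' y = 0 := by
    intro x hx h0
    obtain ⟨h1, h2⟩ := exists_signs_of_root (self_mem_comp hx) (hmono1 x hx) h0
    obtain ⟨y1, hy1, h1⟩ := posT x hx h1
    obtain ⟨y2, hy2, h2⟩ := negT x hx h2
    have hpc : IsPreconnected (comp X x) := ordConnected_comp.isPreconnected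
    obtain ⟨y, hy, h⟩ := hpc.intermediate_value hy2 hy1 hP'.continuousOn ⟨h2.le, h1.le⟩
    exact ⟨y, hy, h⟩
  have uniq : ∀ x ∉ X, ∀ y ∈ comp X x, ∀ z ∈ comp X x, P y = P z → y = z := by
    intro x hx y hy z hz h
    rcases hmono1 x hx with m | m
    · exact m.injOn hy hz h
    · exact m.injOn hy hz h
  -- move the zeros of `P` one after the other
  have key : ∀ S : Finset ℝ, (∀ ξ ∈ S, ξ ∉ X ∧ P ξ = 0) →
      ∃ κ : ℝ ≃o ℝ, (∀ x ∈ X, κ x = x) ∧ ∀ ξ ∈ S, P' (κ ξ) = 0 := by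
    intro S
    induction S using Finset.induction_on with
    | empty => exact fun _ => ⟨OrderIso.refl ℝ, by simp, by simp⟩
    | insert ξ S hξS ih =>
      intro hS
      obtain ⟨κ, h1, h2⟩ := ih fun η hη => hS η (Finset.mem_insert_of_mem hη)
      obtain ⟨hξX, hξ0⟩ := hS ξ (Finset.mem_insert_self _ _)
      obtain ⟨y, hy, hy0⟩ := root ξ hξX hξ0
      obtain ⟨a, b, hu, hv, hab⟩ := exists_window (orderIso_mem_comp h1 hξX) hy
      obtain ⟨l, hl1, hl2⟩ := exists_bump hu hv
      refine ⟨κ.trans l, fun x hx => ?_, fun η hη => ?_⟩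
      · rw [OrderIso.trans_apply, h1 x hx]
        exact hl2 x fun h => notMem_of_mem_comp (hab h) hx
      · rcases Finset.mem_insert.1 hη with rfl | hη'
        · rw [OrderIso.trans_apply, hl1, hy0]
        · rw [OrderIso.trans_apply, hl2, h2 η hη']
          intro hin
          obtain ⟨hηX, hη0⟩ := hS η hη
          have e1 := comp_eq (hab hin)
          rw [comp_eq (orderIso_mem_comp h1 hηX)] at e1
          have : η ∈ comp X ξ := e1 ▸ self_mem_comp hηX
          have := uniq ξ hξX η this ξ (self_mem_comp hξX) (hη0.trans hξ0.symm)
          exact hξS (this ▸ hη')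
  obtain ⟨κ, h1, h2⟩ := key (Z.filter fun ξ => ξ ∉ X ∧ P ξ = 0)
    (fun ξ hξ => (Finset.mem_filter.1 hξ).2)
  refine ⟨κ, h1, fun x => ?_⟩
  by_cases hx : x ∈ X
  · rw [h1 x hx, hX x hx]
  have hxx := self_mem_comp hx
  have hκx := orderIso_mem_comp h1 hx
  by_cases hr : ∃ ξ ∈ comp X x, P ξ = 0
  · obtain ⟨ξ, hξ, h0⟩ := hr
    have hξX := notMem_of_mem_comp hξ
    have h0' : P' (κ ξ) = 0 := h2 ξ (Finset.mem_filter.2 ⟨hZ ξ h0, hξX, h0⟩)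
    have hκξ : κ ξ ∈ comp X x := comp_eq hξ ▸ orderIso_mem_comp h1 hξX
    rcases lt_trichotomy x ξ with hlt | heq | hgt
    · have hlt' := κ.strictMono hlt
      rcases hmono x hx with ⟨m, m'⟩ | ⟨m, m'⟩
      · rw [sign_neg (h0 ▸ m hxx hξ hlt), sign_neg (h0' ▸ m' hκx hκξ hlt')]
      · rw [sign_pos (h0 ▸ m hxx hξ hlt), sign_pos (h0' ▸ m' hκx hκξ hlt')]
    · rw [heq, h0, h0']
    · have hlt' := κ.strictMono hgt
      rcases hmono x hx with ⟨m, m'⟩ | ⟨m, m'⟩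
      · rw [sign_pos (h0 ▸ m hξ hxx hgt), sign_pos (h0' ▸ m' hκξ hκx hlt')]
      · rw [sign_neg (h0 ▸ m hξ hxx hgt), sign_neg (h0' ▸ m' hκξ hκx hlt')]
  · have hpc : IsPreconnected (comp X x) := ordConnected_comp.isPreconnected
    have noboth : ¬ ((∃ y ∈ comp X x, 0 < P y) ∧ (∃ y ∈ comp X x, P y < 0)) := by
      rintro ⟨⟨y1, hy1, g1⟩, ⟨y2, hy2, g2⟩⟩
      obtain ⟨y, hy, h⟩ := hpc.intermediate_value hy2 hy1 hP.continuousOn ⟨g2.le, g1.le⟩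
      exact hr ⟨y, hy, h⟩
    have noboth' : ¬ ((∃ y ∈ comp X x, 0 < P' y) ∧ (∃ y ∈ comp X x, P' y < 0)) := fun h =>
      noboth ⟨posT' x hx h.1, negT' x hx h.2⟩
    have hne' : P' (κ x) ≠ 0 := fun h =>
      noboth' (exists_signs_of_root hκx (hmono2 x hx) h)
    have hne : P x ≠ 0 := fun h => hr ⟨x, hxx, h⟩
    rcases lt_or_gt_of_ne hne with h | h
    · have : P' (κ x) < 0 := lt_of_le_of_ne (not_lt.1 fun hpr =>
        noboth' ⟨⟨_, hκx, hpr⟩, negT x hx ⟨x, hxx, h⟩⟩) hne'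
      rw [sign_neg h, sign_neg this]
    · have : 0 < P' (κ x) := lt_of_le_of_ne (not_lt.1 fun hpr =>
        noboth' ⟨posT x hx ⟨x, hxx, h⟩, ⟨_, hκx, hpr⟩⟩) hne'.symm
      rw [sign_pos h, sign_pos this]

end MilnorFib

end

/-! ### Sign determination for families of polynomials -/

section

open Set Filter Topology Polynomial
namespace MilnorFib

/-- The signs of the finitely many polynomials in `G` on the line, after specialising the
coefficients along a ring homomorphism to `ℝ`, are determined up to an increasing bijection of the
line by the signs of finitely many elements of the coefficient ring. -/
def SignDet {R : Type*} [CommRing R] (G : Finset R[X]) : Prop :=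
  ∃ G' : Finset R, ∀ φ ψ : R →+* ℝ, (∀ c ∈ G', SignType.sign (φ c) = SignType.sign (ψ c)) →
    ∃ h : ℝ ≃o ℝ, ∀ g ∈ G, ∀ x, SignType.sign ((g.map φ).eval x) =
      SignType.sign ((g.map ψ).eval (h x))

theorem sign_eq_of_forall_ne_zero {s : Set ℝ} (hs : OrdConnected s) {P : ℝ → ℝ}
    (hP : Continuous P) (h0 : ∀ x ∈ s, P x ≠ 0) {x y : ℝ} (hx : x ∈ s) (hy : y ∈ s) :
    SignType.sign (P x) = SignType.sign (P y) := by
  have hpc : IsPreconnected s := hs.isPreconnected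
  rcases lt_or_gt_of_ne (h0 x hx) with h | h <;> rcases lt_or_gt_of_ne (h0 y hy) with hpr | hpr
  · rw [sign_neg h, sign_neg hpr]
  · obtain ⟨z, hz, hz0⟩ := hpc.intermediate_value hx hy hP.continuousOn ⟨h.le, hpr.le⟩
    exact absurd hz0 (h0 z hz)
  · obtain ⟨z, hz, hz0⟩ := hpc.intermediate_value hy hx hP.continuousOn ⟨hpr.le, h.le⟩
    exact absurd hz0 (h0 z hz)
  · rw [sign_pos h, sign_pos hpr]

theorem abs_eval_tendsto_atBot (P : ℝ[X]) (h : 0 < P.natDegree) :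
    Tendsto (fun x => |P.eval x|) atBot atTop := by
  have h1 : 0 < (P.comp (-X)).degree := by
    rw [← natDegree_pos_iff_degree_pos, natDegree_comp]; simpa using h
  have := (Polynomial.abs_tendsto_atTop (P.comp (-X)) h1).comp tendsto_neg_atBot_atTop
  refine this.congr fun x => ?_
  simp

theorem abs_eval_tendsto_atTop (P : ℝ[X]) (h : 0 < P.natDegree) :
    Tendsto (fun x => |P.eval x|) atTop atTop :=
  Polynomial.abs_tendsto_atTop P (natDegree_pos_iff_degree_pos.1 h)

/-- The part of `q` of degree at most `e`. -/
noncomputable def truncLE {R : Type*} [CommRing R] (q : R[X]) (e : ℕ) : R[X] :=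
  ∑ i ∈ Finset.range (e + 1), C (q.coeff i) * X ^ i

/-- A pseudo-remainder of `p` (of formal degree `m`) by the truncation of `q` in degree `e`: at the
zeros of `q`, if `q` has degree `e`, it has the sign of `p`. -/
noncomputable def rem {R : Type*} [CommRing R] (m : ℕ) (p q : R[X]) (e : ℕ) : R[X] :=
  C (q.coeff e ^ 2) * p - C (q.coeff e * p.coeff m) * X ^ (m - e) * truncLE q e

theorem natDegree_rem_le {R : Type*} [CommRing R] {d : ℕ} {p q : R[X]} {e : ℕ}
    (hp : p.natDegree ≤ d + 1) (he : e ≤ d + 1) : (rem (d + 1) p q e).natDegree ≤ d := by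
  have h1 : (truncLE q e).natDegree ≤ e := by
    refine natDegree_sum_le_of_forall_le _ _ fun i hi => ?_
    exact (natDegree_C_mul_X_pow_le _ _).trans (Nat.lt_succ_iff.1 (Finset.mem_range.1 hi))
  have hc : (truncLE q e).coeff e = q.coeff e := by
    simp [truncLE]
  have h2 : (rem (d + 1) p q e).natDegree ≤ d + 1 := by
    refine (natDegree_sub_le _ _).trans (max_le ((natDegree_C_mul_le _ _).trans hp) ?_)
    refine natDegree_mul_le.trans ?_
    have := natDegree_C_mul_X_pow_le (q.coeff e * p.coeff (d + 1)) (d + 1 - e)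
    omega
  have h3 : (rem (d + 1) p q e).coeff (d + 1) = 0 := by
    have : (C (q.coeff e * p.coeff (d + 1)) * X ^ (d + 1 - e) * truncLE q e).coeff (d + 1)
        = q.coeff e * p.coeff (d + 1) * q.coeff e := by
      have h4 : (X ^ (d + 1 - e) * truncLE q e).coeff (d + 1) = q.coeff e := by
        have := coeff_X_pow_mul (truncLE q e) (d + 1 - e) e
        rw [← hc, ← this]; congr 1; omega
      rw [mul_assoc, coeff_C_mul, h4]
    rw [rem, coeff_sub, this, coeff_C_mul]; ring
  by_contra hcon
  have h4 : (rem (d + 1) p q e).natDegree = d + 1 := by omega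
  have h5 : (rem (d + 1) p q e).leadingCoeff = 0 := by rw [leadingCoeff, h4, h3]
  rw [leadingCoeff_eq_zero] at h5
  rw [h5] at h4; simp at h4

theorem sign_eval_rem {R : Type*} [CommRing R] {m : ℕ} {p q : R[X]} {e : ℕ} (φ : R →+* ℝ)
    (he : (q.map φ).natDegree = e) (h0 : q.map φ ≠ 0) {x : ℝ} (hx : (q.map φ).eval x = 0) :
    SignType.sign (((rem m p q e).map φ).eval x) = SignType.sign ((p.map φ).eval x) := by
  have h1 : (truncLE q e).map φ = q.map φ := by
    conv_rhs => rw [as_sum_range_C_mul_X_pow (q.map φ), he]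
    simp [truncLE, Polynomial.map_sum]
  have h2 : φ (q.coeff e) ≠ 0 := by
    rw [← coeff_map, ← he]; exact leadingCoeff_ne_zero.2 h0
  have : ((rem m p q e).map φ).eval x = φ (q.coeff e) ^ 2 * (p.map φ).eval x := by
    simp [rem, Polynomial.map_sub, Polynomial.map_mul, h1, hx]
  rw [this, sign_mul, sign_pos (by positivity), one_mul]

theorem natDegree_map_eq_of_sign {R : Type*} [CommRing R] {q : R[X]} {φ ψ : R →+* ℝ}
    (h : ∀ i, SignType.sign (φ (q.coeff i)) = SignType.sign (ψ (q.coeff i))) :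
    (q.map φ).natDegree = (q.map ψ).natDegree ∧ (q.map φ = 0 ↔ q.map ψ = 0) := by
  have hpr : ∀ i, φ (q.coeff i) = 0 ↔ ψ (q.coeff i) = 0 := fun i => by
    rw [← sign_eq_zero_iff, h i, sign_eq_zero_iff]
  constructor
  · apply le_antisymm <;> rw [natDegree_le_iff_coeff_eq_zero] <;> intro N hN
    · rw [coeff_map, hpr, ← coeff_map]; exact coeff_eq_zero_of_natDegree_lt hN
    · rw [coeff_map, ← hpr, ← coeff_map]; exact coeff_eq_zero_of_natDegree_lt hN
  · simp [Polynomial.ext_iff, hpr]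

/-- Strict monotonicity of a polynomial and of a reparametrised one on a component where their
derivatives have the same constant sign. -/
theorem mono_step {P Q : ℝ[X]} (h : ℝ ≃o ℝ) {s : Set ℝ} (hs : OrdConnected s)
    (hder : ∀ x, SignType.sign ((derivative P).eval x) =
      SignType.sign ((derivative Q).eval (h x)))
    (h0 : ∀ x ∈ s, (derivative P).eval x ≠ 0) :
    (StrictMonoOn (fun x => P.eval x) s ∧ StrictMonoOn (fun x => Q.eval (h x)) s) ∨
      (StrictAntiOn (fun x => P.eval x) s ∧ StrictAntiOn (fun x => Q.eval (h x)) s) := by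
  rcases s.eq_empty_or_nonempty with rfl | ⟨x, hx⟩
  · left; simp [StrictMonoOn]
  have hs' : OrdConnected (h.symm ⁻¹' s) := hs.preimage_mono h.symm.monotone
  have hsgn : ∀ y ∈ s, SignType.sign ((derivative P).eval y) =
      SignType.sign ((derivative P).eval x) := fun y hy =>
    sign_eq_of_forall_ne_zero hs (derivative P).continuous h0 hy hx
  have hsgn' : ∀ y ∈ h.symm ⁻¹' s, SignType.sign ((derivative Q).eval y) =
      SignType.sign ((derivative P).eval x) := fun y hy => by
    rw [← hsgn _ hy, hder]; simp
  rcases lt_or_gt_of_ne (h0 x hx) with hlt | hgt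
  · right
    rw [sign_neg hlt] at hsgn hsgn'
    constructor
    · refine strictAntiOn_of_deriv_neg hs.convex P.continuous.continuousOn fun y hy => ?_
      rw [Polynomial.deriv]; exact sign_eq_neg_one_iff.1 (hsgn y (interior_subset hy))
    · have := strictAntiOn_of_deriv_neg hs'.convex Q.continuous.continuousOn fun y hy => by
        rw [Polynomial.deriv]; exact sign_eq_neg_one_iff.1 (hsgn' y (interior_subset hy))
      intro y hy z hz hyz
      exact this (by simpa using hy) (by simpa using hz) (h.strictMono hyz)
  · left
    rw [sign_pos hgt] at hsgn hsgn'
    constructor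
    · refine strictMonoOn_of_deriv_pos hs.convex P.continuous.continuousOn fun y hy => ?_
      rw [Polynomial.deriv]; exact sign_eq_one_iff.1 (hsgn y (interior_subset hy))
    · have := strictMonoOn_of_deriv_pos hs'.convex Q.continuous.continuousOn fun y hy => by
        rw [Polynomial.deriv]; exact sign_eq_one_iff.1 (hsgn' y (interior_subset hy))
      intro y hy z hz hyz
      exact this (by simpa using hy) (by simpa using hz) (h.strictMono hyz)

/-- The inductive step of sign determination: a polynomial `p` of top degree may be traded for its
derivative, its pseudo-remainders by the other polynomials, and its truncation. -/
theorem signDet_step {R : Type*} [CommRing R] [DecidableEq R[X]] {d : ℕ} {p : R[X]}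
    {G : Finset R[X]} (hp : p.natDegree = d + 1) (hG : ∀ q ∈ G, q.natDegree ≤ d + 1)
    (h1 : SignDet ((insert (derivative p) G) ∪
      ((insert (derivative p) G) ×ˢ Finset.range (d + 2)).image fun x => rem (d + 1) p x.1 x.2))
    (h2 : SignDet (insert p.eraseLead G)) : SignDet (insert p G) := by
  classical
  obtain ⟨A, hA⟩ := h1
  obtain ⟨B, hB⟩ := h2
  set Q := insert (derivative p) G with hQ
  have hQd : ∀ q ∈ Q, q.natDegree ≤ d + 1 := by
    intro q hq
    rcases Finset.mem_insert.1 hq with rfl | hq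
    · exact (natDegree_derivative_le p).trans (by omega)
    · exact hG q hq
  refine ⟨A ∪ B ∪ {p.coeff (d + 1)} ∪
    (Q ×ˢ Finset.range (d + 2)).image (fun x => x.1.coeff x.2), fun φ ψ hs => ?_⟩
  have hs1 : ∀ c ∈ A, SignType.sign (φ c) = SignType.sign (ψ c) := fun c hc =>
    hs c (by simp [hc])
  have hs2 : ∀ c ∈ B, SignType.sign (φ c) = SignType.sign (ψ c) := fun c hc =>
    hs c (by simp [hc])
  have hs3 : SignType.sign (φ (p.coeff (d + 1))) = SignType.sign (ψ (p.coeff (d + 1))) :=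
    hs _ (by simp)
  have hs4 : ∀ q ∈ Q, ∀ i, SignType.sign (φ (q.coeff i)) = SignType.sign (ψ (q.coeff i)) := by
    intro q hq i
    by_cases hi : i < d + 2
    · exact hs _ (by
        rw [Finset.mem_union]; right
        exact Finset.mem_image.2 ⟨(q, i), Finset.mem_product.2 ⟨hq, Finset.mem_range.2 hi⟩, rfl⟩)
    · rw [coeff_eq_zero_of_natDegree_lt (by have := hQd q hq; omega)]; simp
  by_cases ha : φ (p.coeff (d + 1)) = 0
  · have ha' : ψ (p.coeff (d + 1)) = 0 := by
      rw [← sign_eq_zero_iff, ← hs3, ha, sign_zero]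
    obtain ⟨h, hh⟩ := hB φ ψ hs2
    refine ⟨h, fun g hg x => ?_⟩
    rcases Finset.mem_insert.1 hg with rfl | hg
    · have key : ∀ χ : R →+* ℝ, χ (g.coeff (d + 1)) = 0 → g.map χ = g.eraseLead.map χ := by
        intro χ hχ
        conv_lhs => rw [← eraseLead_add_C_mul_X_pow g]
        rw [leadingCoeff, hp]
        simp [hχ]
      rw [key φ ha, key ψ ha']
      exact hh _ (Finset.mem_insert_self _ _) x
    · exact hh g (Finset.mem_insert_of_mem hg) x
  have ha' : ψ (p.coeff (d + 1)) ≠ 0 := fun h => ha (by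
    rw [← sign_eq_zero_iff, hs3, h, sign_zero])
  obtain ⟨h, hh⟩ := hA φ ψ hs1
  have hhQ : ∀ q ∈ Q, ∀ x, SignType.sign ((q.map φ).eval x) =
      SignType.sign ((q.map ψ).eval (h x)) := fun q hq =>
    hh q (Finset.mem_union_left _ hq)
  have hdeg : ∀ χ : R →+* ℝ, χ (p.coeff (d + 1)) ≠ 0 → (p.map χ).natDegree = d + 1 := by
    intro χ hχ
    refine le_antisymm (natDegree_map_le.trans hp.le) (le_natDegree_of_ne_zero (by rwa [coeff_map]))
  set X : Finset ℝ := Q.biUnion fun q => (q.map φ).roots.toFinset with hX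
  have hXmem : ∀ {x}, x ∈ X ↔ ∃ q ∈ Q, q.map φ ≠ 0 ∧ (q.map φ).eval x = 0 := by
    intro x
    simp [hX]
  have hQconst : ∀ q ∈ Q, q.map φ ≠ 0 → ∀ x ∉ X, ∀ y ∈ comp X x, (q.map φ).eval y ≠ 0 := by
    intro q hq hq0 x hx y hy h0
    exact notMem_of_mem_comp hy (hXmem.2 ⟨q, hq, hq0, h0⟩)
  have hdp : derivative p ∈ Q := Finset.mem_insert_self _ _
  have hdp0 : (derivative p).map φ ≠ 0 := by
    intro h0
    have : ((derivative p).map φ).coeff d = 0 := by rw [h0, coeff_zero]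
    rw [← derivative_map, coeff_derivative, coeff_map] at this
    rcases mul_eq_zero.1 this with h | h
    · exact ha h
    · have : (0 : ℝ) < d + 1 := by positivity
      linarith
  obtain ⟨κ, hκ1, hκ2⟩ := exists_orderIso_sign_eq (X := X) (Z := (p.map φ).roots.toFinset)
    (P := fun x => (p.map φ).eval x) (P' := fun x => (p.map ψ).eval (h x))
    (p.map φ).continuous ((p.map ψ).continuous.comp h.continuous)
    (abs_eval_tendsto_atTop _ (by rw [hdeg φ ha]; omega))
    (abs_eval_tendsto_atBot _ (by rw [hdeg φ ha]; omega))
    ((abs_eval_tendsto_atTop _ (by rw [hdeg ψ ha']; omega)).comp h.tendsto_atTop)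
    ((abs_eval_tendsto_atBot _ (by rw [hdeg ψ ha']; omega)).comp h.tendsto_atBot)
    (by
      intro x hx
      obtain ⟨q, hq, hq0, hqx⟩ := hXmem.1 hx
      obtain ⟨e1, e2⟩ := natDegree_map_eq_of_sign (hs4 q hq)
      have hqx' : (q.map ψ).eval (h x) = 0 := by
        rw [← sign_eq_zero_iff, ← hhQ q hq, hqx, sign_zero]
      have hle : (q.map φ).natDegree < d + 2 :=
        lt_of_le_of_lt natDegree_map_le (Nat.lt_succ_of_le (hQd q hq))
      have := hh (rem (d + 1) p q (q.map φ).natDegree) (Finset.mem_union_right _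
        (Finset.mem_image.2 ⟨(q, (q.map φ).natDegree),
          Finset.mem_product.2 ⟨hq, Finset.mem_range.2 hle⟩, rfl⟩)) x
      rw [sign_eval_rem φ rfl hq0 hqx, sign_eval_rem ψ e1.symm (by rwa [Ne, ← e2]) hqx'] at this
      exact this)
    (by
      intro x hx
      refine mono_step h ordConnected_comp ?_ ?_
      · intro y; rw [derivative_map, derivative_map]; exact hhQ _ hdp y
      · intro y hy; rw [derivative_map]; exact hQconst _ hdp hdp0 x hx y hy)
    (by
      intro x hx
      have : p.map φ ≠ 0 := by
        intro h0
        have := hdeg φ ha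
        rw [h0] at this; simp at this
      simp only [Multiset.mem_toFinset, mem_roots', IsRoot.def]
      exact ⟨this, hx⟩)
  refine ⟨κ.trans h, fun g hg x => ?_⟩
  rcases Finset.mem_insert.1 hg with rfl | hg
  · exact hκ2 x
  · have hgQ : g ∈ Q := Finset.mem_insert_of_mem hg
    rw [OrderIso.trans_apply, ← hhQ g hgQ]
    by_cases h0 : g.map φ = 0
    · simp [h0]
    by_cases hx : x ∈ X
    · rw [hκ1 x hx]
    · exact sign_eq_of_forall_ne_zero ordConnected_comp (g.map φ).continuous
        (hQconst g hgQ h0 x hx) (self_mem_comp hx) (orderIso_mem_comp hκ1 hx)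

theorem SignDet.mono {R : Type*} [CommRing R] {G H : Finset R[X]} (h : SignDet H) (hGH : G ⊆ H) :
    SignDet G := by
  obtain ⟨A, hA⟩ := h
  refine ⟨A, fun φ ψ hs => ?_⟩
  obtain ⟨k, hk⟩ := hA φ ψ hs
  exact ⟨k, fun g hg => hk g (hGH hg)⟩

/-- Sign determination for all finite families of polynomials in one variable. -/
theorem signDet {R : Type*} [CommRing R] (G : Finset R[X]) : SignDet G := by
  classical
  suffices H : ∀ d : ℕ, ∀ G : Finset R[X], (∀ q ∈ G, q.natDegree ≤ d) → SignDet G from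
    H (G.sup natDegree) G fun q hq => Finset.le_sup hq
  intro d
  induction d with
  | zero =>
    intro G hG
    refine ⟨G.image fun q => q.coeff 0, fun φ ψ hs => ⟨OrderIso.refl ℝ, fun g hg x => ?_⟩⟩
    rw [eq_C_of_natDegree_le_zero (hG g hg)]
    simpa using hs _ (Finset.mem_image_of_mem _ hg)
  | succ d ih =>
    suffices H : ∀ k : ℕ, ∀ G : Finset R[X], (∀ q ∈ G, q.natDegree ≤ d + 1) →
        (G.filter fun q => q.natDegree = d + 1).card ≤ k → SignDet G from
      fun G hG => H _ G hG le_rfl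
    intro k
    induction k with
    | zero =>
      intro G hG hc
      refine ih G fun q hq => ?_
      have h1 := Finset.card_eq_zero.1 (Nat.le_zero.1 hc)
      have h2 := Finset.filter_eq_empty_iff.1 h1 hq
      have := hG q hq
      omega
    | succ k ihk =>
      intro G hG hc
      by_cases hne : (G.filter fun q => q.natDegree = d + 1).Nonempty
      · obtain ⟨p, hp⟩ := hne
        have hpG := (Finset.mem_filter.1 hp).1
        have hpd : p.natDegree = d + 1 := (Finset.mem_filter.1 hp).2
        have hsub : ∀ H : Finset R[X], (∀ q ∈ H, q ∈ G.erase p ∨ q.natDegree ≤ d) →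
            SignDet H := by
          intro H hH
          refine ihk H (fun q hq => ?_) ?_
          · rcases hH q hq with h | h
            · exact hG q (Finset.mem_of_mem_erase h)
            · omega
          · have : (H.filter fun q => q.natDegree = d + 1) ⊆
                (G.filter fun q => q.natDegree = d + 1).erase p := by
              intro q hq
              obtain ⟨h1, h2⟩ := Finset.mem_filter.1 hq
              rcases hH q h1 with h | h
              · exact Finset.mem_erase.2 ⟨Finset.ne_of_mem_erase h,
                  Finset.mem_filter.2 ⟨Finset.mem_of_mem_erase h, h2⟩⟩
              · omega
            have := Finset.card_le_card this
            rw [Finset.card_erase_of_mem hp] at this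
            omega
        rw [← Finset.insert_erase hpG]
        refine signDet_step hpd (fun q hq => hG q (Finset.mem_of_mem_erase hq))
          (hsub _ fun q hq => ?_) (hsub _ fun q hq => ?_)
        · rcases Finset.mem_union.1 hq with hq | hq
          · rcases Finset.mem_insert.1 hq with rfl | hq
            · exact Or.inr ((natDegree_derivative_le p).trans (by omega))
            · exact Or.inl hq
          · obtain ⟨x, hx, rfl⟩ := Finset.mem_image.1 hq
            have := Finset.mem_range.1 (Finset.mem_product.1 hx).2
            exact Or.inr (natDegree_rem_le hpd.le (by omega))
        · rcases Finset.mem_insert.1 hq with rfl | hq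
          · exact Or.inr ((eraseLead_natDegree_le p).trans (by omega))
          · exact Or.inl hq
      · refine ihk G hG ?_
        rw [Finset.not_nonempty_iff_eq_empty.1 hne]; simp

end MilnorFib

end

/-! ### Extension of analytic functions to Banach algebras -/

section

open Set Filter Topology
namespace MilnorFib

variable {ι : Type*} [Fintype ι] {𝔸 : Type*} [NormedCommRing 𝔸] [NormedAlgebra ℝ 𝔸]

/-- The extension of scalars of a multilinear form on `ι → ℝ` to a commutative Banach algebra. -/
noncomputable def baseChangeTerm [DecidableEq ι] {k : ℕ}
    (p : ContinuousMultilinearMap ℝ (fun _ : Fin k => ι → ℝ) ℝ) :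
    ContinuousMultilinearMap ℝ (fun _ : Fin k => ι → 𝔸) 𝔸 :=
  ∑ i : Fin k → ι, p (fun j => Pi.single (i j) 1) •
    (ContinuousMultilinearMap.mkPiAlgebra ℝ (Fin k) 𝔸).compContinuousLinearMap
      (fun j => ContinuousLinearMap.proj (i j))

theorem baseChangeTerm_apply [DecidableEq ι] {k : ℕ}
    (p : ContinuousMultilinearMap ℝ (fun _ : Fin k => ι → ℝ) ℝ) (y : Fin k → ι → 𝔸) :
    baseChangeTerm p y = ∑ i : Fin k → ι, p (fun j => Pi.single (i j) 1) • ∏ j, y j (i j) := by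
  simp [baseChangeTerm]

theorem norm_baseChangeTerm_le [DecidableEq ι] [NormOneClass 𝔸] {k : ℕ}
    (p : ContinuousMultilinearMap ℝ (fun _ : Fin k => ι → ℝ) ℝ) :
    ‖(baseChangeTerm p : ContinuousMultilinearMap ℝ (fun _ : Fin k => ι → 𝔸) 𝔸)‖ ≤
      ‖p‖ * (Fintype.card ι : ℝ) ^ k := by
  refine ContinuousMultilinearMap.opNorm_le_bound (by positivity) fun y => ?_
  rw [baseChangeTerm_apply]
  refine (norm_sum_le _ _).trans ?_
  have h : ∀ i ∈ (Finset.univ : Finset (Fin k → ι)),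
      ‖p (fun j => Pi.single (i j) 1) • ∏ j, y j (i j)‖ ≤ ‖p‖ * ∏ j, ‖y j‖ := by
    intro i _
    rw [norm_smul]
    gcongr
    · refine (p.le_opNorm _).trans ?_
      have : ∀ j, ‖(Pi.single (i j) (1 : ℝ) : ι → ℝ)‖ = 1 := fun j => by
        simp [Pi.norm_single]
      simp [this]
    · refine (Finset.norm_prod_le _ _).trans ?_
      exact Finset.prod_le_prod (fun _ _ => norm_nonneg _) fun j _ => norm_le_pi_norm (y j) (i j)
  refine (Finset.sum_le_sum h).trans (le_of_eq ?_)
  simp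
  ring

theorem map_baseChangeTerm [DecidableEq ι] {k : ℕ}
    (p : ContinuousMultilinearMap ℝ (fun _ : Fin k => ι → ℝ) ℝ) (χ : 𝔸 →ₐ[ℝ] ℝ)
    (y : Fin k → ι → 𝔸) : χ (baseChangeTerm p y) = p (fun j i => χ (y j i)) := by
  rw [baseChangeTerm_apply, map_sum]
  have : (fun j i => χ (y j i)) = fun j => ∑ i, (χ (y j i)) • (Pi.single i (1 : ℝ) : ι → ℝ) := by
    funext j
    conv_lhs => rw [pi_eq_sum_univ' (fun i => χ (y j i))]
  rw [this]
  rw [ContinuousMultilinearMap.map_sum]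
  refine Finset.sum_congr rfl fun i _ => ?_
  rw [ContinuousMultilinearMap.map_smul_univ]
  simp [mul_comm]

/-- A real analytic function near `0 : ι → ℝ` extends to an analytic function on `ι → 𝔸` for any
commutative real Banach algebra `𝔸`, compatibly with all characters of norm at most one. -/
theorem exists_baseChange [NormOneClass 𝔸] [CompleteSpace 𝔸] {g : (ι → ℝ) → ℝ}
    (hg : AnalyticAt ℝ g 0) :
    ∃ G : (ι → 𝔸) → 𝔸, AnalyticAt ℝ G 0 ∧
      ∃ r > 0, ∀ χ : 𝔸 →ₐ[ℝ] ℝ, (∀ a, ‖χ a‖ ≤ ‖a‖) → ∀ y : ι → 𝔸, ‖y‖ < r →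
        χ (G y) = g (fun i => χ (y i)) := by
  classical
  obtain ⟨p, r, hp⟩ := hg
  obtain ⟨r', hr0, hr'⟩ := ENNReal.lt_iff_exists_nnreal_btwn.1 hp.r_pos
  obtain ⟨C, hC0, hC⟩ := p.norm_mul_pow_le_of_lt_radius (hr'.trans_le hp.r_le)
  let q : FormalMultilinearSeries ℝ (ι → 𝔸) 𝔸 := fun k => baseChangeTerm (p k)
  set c : NNReal := (Fintype.card ι : NNReal) + 1 with hc
  have hrpos : 0 < r' := by exact_mod_cast hr0
  have hq : ((r' / c : NNReal) : ENNReal) ≤ q.radius := by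
    refine q.le_radius_of_bound C fun k => ?_
    refine le_trans ?_ (hC k)
    have h1 := norm_baseChangeTerm_le (𝔸 := 𝔸) (p k)
    have h2 : (0:ℝ) < c := by simp [hc]; positivity
    have h3 : (Fintype.card ι : ℝ) ≤ c := by simp [hc]
    calc ‖q k‖ * ((r' / c : NNReal) : ℝ) ^ k
        ≤ (‖p k‖ * (c : ℝ) ^ k) * ((r' / c : NNReal) : ℝ) ^ k := by
          gcongr
          exact h1.trans (by gcongr)
      _ = ‖p k‖ * (r' : ℝ) ^ k := by
          rw [mul_assoc, ← mul_pow]; congr 2; push_cast; field_simp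
  have hcpos : 0 < r' / c := by positivity
  have hqpos : 0 < q.radius := lt_of_lt_of_le (by exact_mod_cast hcpos) hq
  have hq' := (q.hasFPowerSeriesOnBall hqpos)
  refine ⟨q.sum, hq'.analyticAt, min (r' / c : NNReal) r', by positivity, fun χ hχ y hy => ?_⟩
  have hy1 : ‖y‖ < ((r' / c : NNReal) : ℝ) := hy.trans_le (min_le_left _ _)
  have hy2 : ‖y‖ < (r' : ℝ) := hy.trans_le (min_le_right _ _)
  have s1 := hq'.hasSum (y := y) (by
    refine Metric.eball_subset_eball hq ?_
    rw [Metric.eball_coe]; simpa using hy1)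
  have hχc : Continuous χ := AddMonoidHomClass.continuous_of_bound χ 1 (by simpa using hχ)
  have s2 := s1.map χ hχc
  have hχy : ‖(fun i => χ (y i))‖ < r' := lt_of_le_of_lt
    ((pi_norm_le_iff_of_nonneg (norm_nonneg _)).2 fun i => (hχ _).trans (norm_le_pi_norm y i)) hy2
  have s3 := hp.hasSum (y := fun i => χ (y i)) (by
    refine Metric.eball_subset_eball hr'.le ?_
    rw [Metric.eball_coe]; simpa using hχy)
  rw [zero_add] at s2 s3
  refine s2.unique ?_
  have e : (χ ∘ fun k => q k fun _ => y) = fun k => p k fun _ => fun i => χ (y i) :=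
    funext fun k => map_baseChangeTerm (p k) χ _
  rwa [e]

/-- Analytic inverse function theorem in the form used here: an equation `Φ s = G x` whose
linearisation at `a` is bijective has an analytic solution `s x`. -/
theorem exists_analytic_solution {E F Y : Type*} [NormedAddCommGroup E] [NormedSpace ℝ E]
    [CompleteSpace E] [NormedAddCommGroup F] [NormedSpace ℝ F] [CompleteSpace F]
    [NormedAddCommGroup Y] [NormedSpace ℝ Y] {Φ : E → F} {a : E} (hΦ : AnalyticAt ℝ Φ a)
    {L : E →L[ℝ] F} (hL : HasFDerivAt Φ L a) (hinj : Function.Injective L)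
    (hsurj : Function.Surjective L) {G : Y → F} {y₀ : Y} (hG : AnalyticAt ℝ G y₀)
    (h0 : G y₀ = Φ a) :
    ∃ s : Y → E, AnalyticAt ℝ s y₀ ∧ s y₀ = a ∧ ∀ᶠ y in 𝓝 y₀, Φ (s y) = G y := by
  let L' : E ≃L[ℝ] F := ContinuousLinearEquiv.ofBijective L (LinearMap.ker_eq_bot.2 hinj)
    (LinearMap.range_eq_top.2 hsurj)
  have hL' : HasFDerivAt Φ (L' : E →L[ℝ] F) a := by
    convert hL using 1
    ext x
    rfl
  have hc : ContDiffAt ℝ ⊤ Φ a := hΦ.contDiffAt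
  have hst := hc.hasStrictFDerivAt' hL' (by simp)
  refine ⟨fun y => hc.localInverse hL' (by simp) (G y), ?_, ?_, ?_⟩
  · have h1 := (hc.to_localInverse hL' (by simp)).analyticAt
    rw [← h0] at h1
    exact h1.comp hG
  · change hc.localInverse hL' (by simp) (G y₀) = a
    rw [h0]; exact hc.localInverse_apply_image hL' (by simp)
  · have h2 := hst.eventually_right_inverse
    rw [← h0] at h2
    exact hG.continuousAt.eventually h2

end MilnorFib

end

/-! ### The real disc algebra -/

section

open Set Filter Topology
open scoped ComplexConjugate
namespace MilnorFib

/-- The closed unit disc. -/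
abbrev Disc : Type := Metric.closedBall (0 : ℂ) 1

/-- Radial retraction of the plane onto the closed unit disc. -/
noncomputable def clamp (z : ℂ) : Disc :=
  ⟨z / (max 1 ‖z‖ : ℝ), by
    have h : (0:ℝ) < max 1 ‖z‖ := lt_of_lt_of_le one_pos (le_max_left _ _)
    simp only [Metric.mem_closedBall, dist_zero_right, norm_div, Complex.norm_real,
      Real.norm_eq_abs, abs_of_pos h]
    exact (div_le_one h).2 (le_max_right _ _)⟩

theorem clamp_of_norm_le {z : ℂ} (hz : ‖z‖ ≤ 1) : (clamp z : ℂ) = z := by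
  simp [clamp, max_eq_left hz]

theorem clamp_coe (z : Disc) : clamp z = z :=
  Subtype.ext (clamp_of_norm_le (mem_closedBall_zero_iff.1 z.2))

theorem continuous_clamp : Continuous clamp := by
  refine Continuous.subtype_mk ?_ _
  refine continuous_id.div (by fun_prop) fun z => ?_
  have h : (0:ℝ) < max 1 ‖z‖ := lt_of_lt_of_le one_pos (le_max_left _ _)
  exact_mod_cast h.ne'

theorem clamp_conj (z : ℂ) : (clamp (conj z) : ℂ) = conj (clamp z : ℂ) := by
  simp [clamp]

/-- The extension to the plane, by radial retraction, of a function on the disc. -/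
noncomputable def ext (f : C(Disc, ℂ)) : ℂ → ℂ := fun z => f (clamp z)

theorem continuous_ext (f : C(Disc, ℂ)) : Continuous (ext f) := f.continuous.comp continuous_clamp

theorem ext_injective {f g : C(Disc, ℂ)} (h : ext f = ext g) : f = g := by
  ext z
  have := congrFun h z
  simpa [ext, clamp_coe] using this

/-- The real disc algebra: continuous functions on the closed unit disc, holomorphic inside and
commuting with complex conjugation. It is a real Banach algebra. -/
noncomputable def discAlg : Subalgebra ℝ C(Disc, ℂ) where
  carrier := {f | DifferentiableOn ℂ (ext f) (Metric.ball 0 1) ∧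
    ∀ z, ext f (conj z) = conj (ext f z)}
  mul_mem' {f g} hf hg := ⟨hf.1.mul hg.1, fun z => by
    change ext f _ * ext g _ = conj (ext f z * ext g z)
    rw [hf.2, hg.2, map_mul]⟩
  add_mem' {f g} hf hg := ⟨hf.1.add hg.1, fun z => by
    change ext f _ + ext g _ = conj (ext f z + ext g z)
    rw [hf.2, hg.2, map_add]⟩
  algebraMap_mem' r := ⟨differentiableOn_const (c := (r : ℂ)), fun z => by
    change (r : ℂ) = conj (r : ℂ)
    simp⟩

theorem isClosed_discAlg : IsClosed (discAlg : Set C(Disc, ℂ)) := by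
  refine IsSeqClosed.isClosed fun u f hu huf => ?_
  have hunif : TendstoUniformly (fun n => ext (u n)) (ext f) atTop :=
    (ContinuousMap.tendsto_iff_tendstoUniformly.1 huf).comp clamp
  have hpt : ∀ z, Tendsto (fun n => ext (u n) z) atTop (𝓝 (ext f z)) := fun z =>
    hunif.tendsto_at z
  refine ⟨?_, fun z => ?_⟩
  · exact (hunif.tendstoUniformlyOn.tendstoLocallyUniformlyOn).differentiableOn
      (Eventually.of_forall fun n => (hu n).1) Metric.isOpen_ball
  · refine tendsto_nhds_unique (hpt (conj z)) ?_
    have := (Complex.continuous_conj.tendsto _).comp (hpt z)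
    refine this.congr fun n => ?_
    exact ((hu n).2 z).symm

instance : CompleteSpace discAlg := isClosed_discAlg.completeSpace_coe

instance : NormOneClass discAlg := ⟨by
  change ‖(1 : C(Disc, ℂ))‖ = 1
  have : Nonempty Disc := ⟨clamp 0⟩
  exact norm_one⟩

theorem ext_im (f : discAlg) (z : ℝ) : (ext f z).im = 0 := by
  have := f.2.2 z
  rw [Complex.conj_ofReal] at this
  exact Complex.conj_eq_iff_im.1 this.symm

/-- Evaluation of an element of the disc algebra at a real point (clamped to the disc). -/
noncomputable def ev (z : ℝ) : discAlg →ₐ[ℝ] ℝ where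
  toFun f := (ext f z).re
  map_one' := by change (1 : ℂ).re = 1; simp
  map_mul' f g := by
    change (ext f z * ext g z).re = _
    simp [ext_im]
  map_zero' := rfl
  map_add' f g := rfl
  commutes' r := rfl

theorem norm_ev_le (z : ℝ) (f : discAlg) : ‖ev z f‖ ≤ ‖f‖ := by
  refine (Complex.abs_re_le_norm _).trans ?_
  exact ContinuousMap.norm_coe_le_norm (f : C(Disc, ℂ)) (clamp z)

theorem ext_eq_ev (f : discAlg) (z : ℝ) : ext f z = (ev z f : ℂ) :=
  Complex.ext rfl (by simp [ext_im])

/-- The coordinate function. -/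
noncomputable def coordX : discAlg := ⟨⟨fun z => (z : ℂ), continuous_subtype_val⟩, by
  constructor
  · refine DifferentiableOn.congr differentiableOn_id fun z hz => ?_
    simp only [Metric.mem_ball, dist_zero_right] at hz
    simp [ext, clamp_of_norm_le hz.le]
  · intro z
    simp [ext, clamp_conj]⟩

theorem ext_coordX {z : ℂ} (hz : ‖z‖ ≤ 1) : ext coordX z = z := clamp_of_norm_le hz

theorem ev_coordX {z : ℝ} (hz : |z| ≤ 1) : ev z coordX = z := by
  change (ext coordX z).re = z
  rw [ext_coordX (by simpa using hz)]; simp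

theorem exists_eq_coordX_mul {f : discAlg} (hf : ev 0 f = 0) : ∃ q, f = coordX * q := by
  have hf0 : ext f 0 = 0 := by
    have := ext_eq_ev f 0
    rw [hf] at this; simpa using this
  have hd : DifferentiableOn ℂ (dslope (ext f) 0) (Metric.ball 0 1) :=
    (Complex.differentiableOn_dslope (Metric.ball_mem_nhds 0 one_pos)).2 f.2.1
  have hc : Continuous (dslope (ext f) 0) := by
    rw [← continuousOn_univ, continuousOn_dslope univ_mem]
    exact ⟨(continuous_ext f).continuousOn,
      f.2.1.differentiableAt (Metric.ball_mem_nhds 0 one_pos)⟩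
  have hmul : ∀ z, ext f z = z * dslope (ext f) 0 z := fun z => by
    have := sub_smul_dslope (ext f) 0 z
    rw [hf0, sub_zero, sub_zero, smul_eq_mul] at this
    exact this.symm
  let q₀ : C(Disc, ℂ) := ⟨fun z => dslope (ext f) 0 z, hc.comp continuous_subtype_val⟩
  have hq₀ : ∀ z : ℂ, ext q₀ z = dslope (ext f) 0 (clamp z) := fun z => rfl
  have hq₁ : ∀ z : Disc, f.1 z = z * q₀ z := fun z => by
    have := hmul z
    rwa [ext, clamp_coe] at this
  have hq : q₀ ∈ discAlg := by
    refine ⟨hd.congr fun z hz => ?_, ?_⟩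
    · simp only [Metric.mem_ball, dist_zero_right] at hz
      rw [hq₀, clamp_of_norm_le hz.le]
    · refine congrFun (Continuous.ext_on (dense_compl_singleton (0:ℂ))
        ((continuous_ext q₀).comp Complex.continuous_conj)
        (Complex.continuous_conj.comp (continuous_ext q₀)) fun z hz => ?_)
      have hz0 : (clamp z : ℂ) ≠ 0 := by
        have h : (0:ℝ) < max 1 ‖z‖ := lt_of_lt_of_le one_pos (le_max_left _ _)
        simp only [clamp]
        exact div_ne_zero hz (by exact_mod_cast h.ne')
      have h1 := hq₁ (clamp (conj z))
      have h2 := hq₁ (clamp z)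
      have h3 : f.1 (clamp (conj z)) = conj (f.1 (clamp z)) := f.2.2 z
      rw [h1, h2, clamp_conj, map_mul] at h3
      exact mul_left_cancel₀ ((map_ne_zero _).2 hz0) h3
  exact ⟨⟨q₀, hq⟩, Subtype.ext (ContinuousMap.ext hq₁)⟩

theorem eq_zero_of_coordX_mul {q : discAlg} (h : coordX * q = 0) : q = 0 := by
  refine Subtype.ext (ext_injective (Continuous.ext_on (dense_compl_singleton (0:ℂ))
    (continuous_ext _) (continuous_ext _) fun z hz => ?_))
  have hz0 : (clamp z : ℂ) ≠ 0 := by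
    have h : (0:ℝ) < max 1 ‖z‖ := lt_of_lt_of_le one_pos (le_max_left _ _)
    simp only [clamp]
    exact div_ne_zero hz (by exact_mod_cast h.ne')
  have h1 : (clamp z : ℂ) * ext q z = 0 := congrArg (fun f : discAlg => f.1 (clamp z)) h
  exact (mul_eq_zero.1 h1).resolve_left hz0

/-- An element that does not vanish near `0` is a power of the coordinate times an element nonzero
at `0`. -/
theorem exists_pow_mul_of_not_eventually {f : discAlg} (hf : ¬ ∀ᶠ z : ℝ in 𝓝 0, ev z f = 0) :
    ∃ d : ℕ, ∃ u : discAlg, f = coordX ^ d * u ∧ ev 0 u ≠ 0 := by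
  by_contra hcon
  push Not at hcon
  have hall : ∀ n : ℕ, ∃ u : discAlg, f = coordX ^ n * u := by
    intro n
    induction n with
    | zero => exact ⟨f, by simp⟩
    | succ n ih =>
      obtain ⟨u, hu⟩ := ih
      obtain ⟨q, hq⟩ := exists_eq_coordX_mul (hcon n u hu)
      exact ⟨q, by rw [hu, hq, pow_succ, mul_assoc]⟩
  have han : ∀ u : discAlg, AnalyticAt ℂ (ext u) 0 := fun u =>
    u.2.1.analyticAt (Metric.ball_mem_nhds 0 one_pos)
  have htop : analyticOrderAt (ext f) 0 = ⊤ := by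
    refine ENat.eq_top_iff_forall_ge.2 fun n => ?_
    obtain ⟨u, hu⟩ := hall n
    rw [natCast_le_analyticOrderAt (han f)]
    refine ⟨ext u, han u, ?_⟩
    filter_upwards [Metric.ball_mem_nhds (0:ℂ) one_pos] with z hz
    simp only [Metric.mem_ball, dist_zero_right] at hz
    have : ext f z = (ext coordX z) ^ n * ext u z := by rw [hu]; rfl
    rw [this, ext_coordX hz.le, sub_zero, smul_eq_mul]
  rw [analyticOrderAt_eq_top] at htop
  apply hf
  have : Tendsto (fun z : ℝ => (z : ℂ)) (𝓝 0) (𝓝 0) := by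
    simpa using (Complex.continuous_ofReal.tendsto 0)
  filter_upwards [this.eventually htop] with z hz
  change (ext f z).re = 0
  rw [hz]; simp

/-- A commutative real Banach algebra of functions on `[-1, 1]` with a coordinate function `X`, in
which functions vanishing at `0` are divisible by `X`. -/
structure TaylorAlgebra (𝔸 : Type*) [NormedCommRing 𝔸] [NormedAlgebra ℝ 𝔸] where
  /-- the coordinate function -/
  X : 𝔸
  /-- evaluation at a point -/
  ev : ℝ → 𝔸 →ₐ[ℝ] ℝ
  norm_ev_le : ∀ z f, ‖ev z f‖ ≤ ‖f‖
  ev_X : ∀ z, |z| ≤ 1 → ev z X = z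
  exists_eq_mul : ∀ f, ev 0 f = 0 → ∃ q, f = X * q
  eq_zero_of_mul : ∀ q, X * q = 0 → q = 0
  exists_pow_mul : ∀ f, (¬ ∀ᶠ z : ℝ in 𝓝 0, ev z f = 0) → ∃ d : ℕ, ∃ u, f = X ^ d * u ∧ ev 0 u ≠ 0
  continuous_ev : Continuous fun p : 𝔸 × ℝ => ev p.2 p.1

theorem exists_taylorAlgebra : ∃ (𝔸 : Type) (_ : NormedCommRing 𝔸) (_ : NormedAlgebra ℝ 𝔸)
    (_ : CompleteSpace 𝔸) (_ : NormOneClass 𝔸), Nonempty (TaylorAlgebra 𝔸) := by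
  refine ⟨discAlg, inferInstance, inferInstance, inferInstance, inferInstance, ⟨?_⟩⟩
  exact
    { X := coordX
      ev := ev
      norm_ev_le := norm_ev_le
      ev_X := fun z hz => ev_coordX hz
      exists_eq_mul := fun f hf => exists_eq_coordX_mul hf
      eq_zero_of_mul := fun q hq => eq_zero_of_coordX_mul hq
      exists_pow_mul := fun f hf => exists_pow_mul_of_not_eventually hf
      continuous_ev := by
        have h3 : Continuous fun p : C(Disc, ℂ) × Disc => p.1 p.2 := continuous_eval
        have h2 : Continuous fun z : ℝ => clamp z := continuous_clamp.comp Complex.continuous_ofReal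
        have h1 : Continuous fun p : discAlg × ℝ => ((p.1 : C(Disc, ℂ)), clamp (p.2 : ℂ)) :=
          (continuous_subtype_val.comp continuous_fst).prodMk (h2.comp continuous_snd)
        exact Complex.continuous_re.comp (h3.comp h1) }

variable {𝔸 : Type*} [NormedCommRing 𝔸] [NormedAlgebra ℝ 𝔸]

theorem TaylorAlgebra.surj (T : TaylorAlgebra 𝔸) {u : 𝔸} (hu : T.ev 0 u ≠ 0) (d : ℕ) (h : 𝔸) :
    ∃ a : ℕ → ℝ, ∃ q : 𝔸, h = T.X ^ d * q + u * ∑ i ∈ Finset.range d, a i • T.X ^ i := by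
  induction d with
  | zero => exact ⟨0, h, by simp⟩
  | succ k ih =>
    obtain ⟨a, q, hq⟩ := ih
    obtain ⟨q', hq'⟩ := T.exists_eq_mul (q - (T.ev 0 q / T.ev 0 u) • u) (by
      simp [hu])
    refine ⟨Function.update a k (T.ev 0 q / T.ev 0 u), q', ?_⟩
    rw [Finset.sum_range_succ, Function.update_self, Finset.sum_congr rfl (g := fun i => a i • T.X ^ i)
      (fun i hi => by rw [Function.update_of_ne (Finset.mem_range.1 hi).ne])]
    have : q = T.X * q' + (T.ev 0 q / T.ev 0 u) • u := by rw [← hq']; simp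
    conv_lhs => rw [hq, this]
    simp only [Algebra.smul_def]
    ring

theorem TaylorAlgebra.inj (T : TaylorAlgebra 𝔸) {u : 𝔸} (hu : T.ev 0 u ≠ 0) (d : ℕ) (a : ℕ → ℝ) (q : 𝔸)
    (h : T.X ^ d * q + u * ∑ i ∈ Finset.range d, a i • T.X ^ i = 0) :
    q = 0 ∧ ∀ i < d, a i = 0 := by
  induction d generalizing a with
  | zero => simpa using h
  | succ k ih =>
    have hx : T.ev 0 T.X = 0 := T.ev_X 0 (by simp)
    rw [Finset.sum_range_succ'] at h
    have h0 : a 0 = 0 := by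
      have := congrArg (T.ev 0) h
      simpa [hx, hu] using this
    have h1 := ih (fun i => a (i + 1)) (T.eq_zero_of_mul _ (by
      rw [← h, h0, zero_smul, add_zero]
      simp only [Finset.mul_sum, mul_add, pow_succ, Algebra.smul_def]
      congr 1
      · ring
      · exact Finset.sum_congr rfl fun i _ => by ring))
    refine ⟨h1.1, fun i hi => ?_⟩
    rcases i with _ | i
    · exact h0
    · exact h1.2 i (by omega)

end MilnorFib

end

/-! ### Real analytic Weierstrass preparation -/

section

open Set Filter Topology
namespace MilnorFib

variable {𝔸 : Type*} [NormedCommRing 𝔸] [NormedAlgebra ℝ 𝔸] [CompleteSpace 𝔸]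

/-- Weierstrass preparation in a `TaylorAlgebra`: a family `G` of elements which
at the base point is `X ^ d * u` with `u` invertible at `0` factors analytically as a distinguished
polynomial of degree `d` times an element close to `u`. -/
theorem weierstrass_aux (T : TaylorAlgebra 𝔸) {Y : Type*} [NormedAddCommGroup Y] [NormedSpace ℝ Y] {G : Y → 𝔸}
    {y₀ : Y} (hG : AnalyticAt ℝ G y₀) {d : ℕ} {u : 𝔸} (hu : T.ev 0 u ≠ 0)
    (h0 : G y₀ = T.X ^ d * u) :
    ∃ (a : Y → Fin d → ℝ) (q : Y → 𝔸), AnalyticAt ℝ a y₀ ∧ AnalyticAt ℝ q y₀ ∧ a y₀ = 0 ∧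
      q y₀ = u ∧ ∀ᶠ y in 𝓝 y₀, G y = (T.X ^ d + ∑ i, a y i • T.X ^ (i : ℕ)) * q y := by
  let A : (Fin d → ℝ) →L[ℝ] 𝔸 :=
    ∑ i : Fin d, (ContinuousLinearMap.proj i : (Fin d → ℝ) →L[ℝ] ℝ).smulRight (T.X ^ (i : ℕ))
  have hA : ∀ a, A a = ∑ i, a i • T.X ^ (i : ℕ) := fun a => by
    simp [A]
  let Φ : (Fin d → ℝ) × 𝔸 → 𝔸 := fun p => (T.X ^ d + A p.1) * p.2
  have h1 : HasFDerivAt (fun p : (Fin d → ℝ) × 𝔸 => T.X ^ d + A p.1)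
      (A.comp (ContinuousLinearMap.fst ℝ _ _)) (0, u) :=
    ((A.comp (ContinuousLinearMap.fst ℝ (Fin d → ℝ) 𝔸)).hasFDerivAt).const_add _
  have h2 := h1.mul (hasFDerivAt_snd (𝕜 := ℝ) (p := ((0 : Fin d → ℝ), u)))
  have hΦ : AnalyticAt ℝ Φ (0, u) := by
    have := (A.comp (ContinuousLinearMap.fst ℝ (Fin d → ℝ) 𝔸)).analyticAt (0, u)
    exact (analyticAt_const.add this).mul analyticAt_snd
  have hinj : Function.Injective ((T.X ^ d + A ((0 : Fin d → ℝ), u).1) •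
      ContinuousLinearMap.snd ℝ (Fin d → ℝ) 𝔸 +
        ((0 : Fin d → ℝ), u).2 • A.comp (ContinuousLinearMap.fst ℝ (Fin d → ℝ) 𝔸)) := by
    rw [injective_iff_map_eq_zero]
    rintro ⟨a, q⟩ h
    have hpr : T.X ^ d * q + u * A a = 0 := by simpa using h
    rw [hA, Finset.sum_congr rfl (g := fun i : Fin d => (fun j : ℕ => (if h : j < d then a ⟨j, h⟩ else 0) •
      T.X ^ j) i) (fun i _ => by simp), Fin.sum_univ_eq_sum_range
      (fun j : ℕ => (if h : j < d then a ⟨j, h⟩ else 0) • T.X ^ j)] at hpr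
    obtain ⟨e1, e2⟩ := T.inj hu d _ q hpr
    refine Prod.ext (funext fun i => ?_) e1
    have := e2 i i.2
    simpa using this
  have hsurj : Function.Surjective ((T.X ^ d + A ((0 : Fin d → ℝ), u).1) •
      ContinuousLinearMap.snd ℝ (Fin d → ℝ) 𝔸 +
        ((0 : Fin d → ℝ), u).2 • A.comp (ContinuousLinearMap.fst ℝ (Fin d → ℝ) 𝔸)) := by
    intro h
    obtain ⟨a, q, haq⟩ := T.surj hu d h
    refine ⟨(fun i => a i, q), ?_⟩
    have : T.X ^ d * q + u * A (fun i : Fin d => a i) = h := by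
      rw [hA, haq, Fin.sum_univ_eq_sum_range (fun j : ℕ => a j • T.X ^ j)]
    simpa using this
  obtain ⟨s, hs1, hs2, hs3⟩ := exists_analytic_solution hΦ h2 hinj hsurj hG (by simp [Φ, h0])
  refine ⟨fun y => (s y).1, fun y => (s y).2, analyticAt_fst.comp hs1, analyticAt_snd.comp hs1,
    by simp [hs2], by simp [hs2], ?_⟩
  filter_upwards [hs3] with y hy
  rw [← hy, ← hA]

/-- Real analytic Weierstrass preparation, for signs: near `0`, an analytic function not vanishing
identically on the first coordinate axis has, up to a constant sign, the sign of a monic polynomial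
in the first coordinate, whose lower coefficients are analytic and vanish at `0`. -/
theorem weierstrass {m : ℕ} {g : (Fin (m + 1) → ℝ) → ℝ} (hg : AnalyticAt ℝ g 0)
    (hreg : ¬ ∀ᶠ t : ℝ in 𝓝 0, g (Fin.cons t 0) = 0) :
    ∃ (d : ℕ) (a : Fin d → (Fin m → ℝ) → ℝ) (s : SignType), s ≠ 0 ∧
      (∀ i, AnalyticAt ℝ (a i) 0 ∧ a i 0 = 0) ∧
      ∀ᶠ p : (Fin m → ℝ) × ℝ in 𝓝 0, SignType.sign (g (Fin.cons p.2 p.1)) =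
        s * SignType.sign (p.2 ^ d + ∑ i, a i p.1 * p.2 ^ (i : ℕ)) := by
  obtain ⟨𝔸, _, _, _, _, ⟨T⟩⟩ := exists_taylorAlgebra
  obtain ⟨G, hG, r, hr, hGr⟩ := exists_baseChange (𝔸 := 𝔸) hg
  -- the line `t ↦ (ρ t, 0)` over the Taylor algebra, with `ρ` small enough
  let ℓ : ℝ → (Fin m → ℝ) → (Fin (m + 1) → 𝔸) := fun ρ x =>
    Fin.cons (ρ • T.X) (fun i => algebraMap ℝ 𝔸 (x i))
  have hℓ0 : ℓ 0 0 = 0 := by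
    funext i; refine Fin.cases ?_ (fun i => ?_) i <;> simp [ℓ]
  have hℓc : Continuous fun p : ℝ × (Fin m → ℝ) => ℓ p.1 p.2 := by
    refine continuous_pi fun i => ?_
    refine Fin.cases ?_ (fun i => ?_) i
    · simp only [ℓ, Fin.cons_zero]; fun_prop
    · simp only [ℓ, Fin.cons_succ]
      exact (algebraMapCLM ℝ 𝔸).continuous.comp (by fun_prop)
  have hev : ∀ᶠ y in 𝓝 (0 : Fin (m + 1) → 𝔸), AnalyticAt ℝ G y ∧ ‖y‖ < r :=
    hG.eventually_analyticAt.and (by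
      filter_upwards [Metric.ball_mem_nhds (0 : Fin (m + 1) → 𝔸) hr] with y hy
      simpa using hy)
  have hev2 : ∀ᶠ p : ℝ × (Fin m → ℝ) in 𝓝 0, AnalyticAt ℝ G (ℓ p.1 p.2) ∧ ‖ℓ p.1 p.2‖ < r := by
    have := hℓc.tendsto 0
    simp only [Prod.fst_zero, Prod.snd_zero, hℓ0] at this
    exact this.eventually hev
  rw [Prod.zero_eq_mk, nhds_prod_eq] at hev2
  obtain ⟨ρ, hρ, hρ0⟩ := ((hev2.curry.filter_mono nhdsWithin_le_nhds).and
    (self_mem_nhdsWithin (a := (0:ℝ)) (s := Ioi 0))).exists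
  replace hρ0 : 0 < ρ := hρ0
  have hGev : ∀ᶠ x : Fin m → ℝ in 𝓝 0, ∀ z : ℝ, |z| ≤ 1 →
      T.ev z (G (ℓ ρ x)) = g (Fin.cons (ρ * z) x) := by
    filter_upwards [hρ] with x hx z hz
    rw [hGr (T.ev z) (T.norm_ev_le z) _ hx.2]
    congr 1
    funext i; refine Fin.cases ?_ (fun i => ?_) i <;> simp [ℓ, T.ev_X _ hz]
  have hG0 : ¬ ∀ᶠ z : ℝ in 𝓝 0, T.ev z (G (ℓ ρ 0)) = 0 := by
    intro hcon
    apply hreg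
    have ht : Tendsto (fun t : ℝ => t / ρ) (𝓝 0) (𝓝 0) := by
      have : Continuous fun t : ℝ => t / ρ := by fun_prop
      simpa using this.tendsto 0
    filter_upwards [ht.eventually hcon, ht.eventually (Metric.ball_mem_nhds 0 one_pos)]
      with t h1 h2
    rw [hGev.self_of_nhds _ (by simpa [abs_div] using le_of_lt h2)] at h1
    rwa [mul_div_cancel₀ _ hρ0.ne'] at h1
  obtain ⟨d, u, hu1, hu2⟩ := T.exists_pow_mul _ hG0
  have hℓa : AnalyticAt ℝ (ℓ ρ) 0 := by
    rw [show ℓ ρ = fun x i => ℓ ρ x i from rfl, analyticAt_pi_iff]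
    intro i
    refine Fin.cases ?_ (fun i => ?_) i
    · simp only [ℓ, Fin.cons_zero]; exact analyticAt_const
    · simp only [ℓ, Fin.cons_succ]
      exact ((algebraMapCLM ℝ 𝔸).comp
        (ContinuousLinearMap.proj i : (Fin m → ℝ) →L[ℝ] ℝ)).analyticAt 0
  obtain ⟨a, q, ha, hq, ha0, hq0, haq⟩ := weierstrass_aux T
    (hρ.self_of_nhds.1.comp hℓa) hu2 hu1
  refine ⟨d, fun i x => a x i * ρ ^ (d - i : ℕ), SignType.sign (T.ev 0 u),
    sign_ne_zero.2 hu2, fun i => ⟨?_, ?_⟩, ?_⟩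
  · exact ((analyticAt_pi_iff (f := fun i x => a x i)).1 ha i).mul analyticAt_const
  · simp [ha0]
  · have hqc : ContinuousAt (fun p : (Fin m → ℝ) × ℝ => T.ev (p.2 / ρ) (q p.1)) (0, 0) := by
      have h1 : ContinuousAt (fun p : (Fin m → ℝ) × ℝ => q p.1) (0, 0) :=
        ContinuousAt.comp (f := Prod.fst) (g := q) hq.continuousAt continuousAt_fst
      have h2 : Continuous (fun p : (Fin m → ℝ) × ℝ => p.2 / ρ) := by fun_prop
      exact T.continuous_ev.continuousAt.comp (h1.prodMk h2.continuousAt)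
    have hsgn : ∀ᶠ p : (Fin m → ℝ) × ℝ in 𝓝 (0, 0),
        SignType.sign (T.ev (p.2 / ρ) (q p.1)) = SignType.sign (T.ev 0 u) := by
      have hval : T.ev ((0:ℝ) / ρ) (q 0) = T.ev 0 u := by rw [hq0, zero_div]
      rcases lt_or_gt_of_ne hu2 with h | h
      · filter_upwards [hqc.eventually_lt_const (by simpa [hq0] using h)] with p hp
        rw [sign_neg h, sign_neg hp]
      · filter_upwards [hqc.eventually_const_lt (by simpa [hq0] using h)] with p hp
        rw [sign_pos h, sign_pos hp]
    have hfst : Tendsto (Prod.fst : (Fin m → ℝ) × ℝ → _) (𝓝 (0, 0)) (𝓝 0) := continuous_fst.tendsto _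
    have hsnd : ∀ᶠ p : (Fin m → ℝ) × ℝ in 𝓝 (0, 0), |p.2 / ρ| ≤ 1 := by
      have : Continuous fun p : (Fin m → ℝ) × ℝ => |p.2 / ρ| := by fun_prop
      exact (this.tendsto' (0, 0) 0 (by simp)).eventually_le_const one_pos
    rw [Prod.zero_eq_mk]
    filter_upwards [hsgn, hsnd, hfst.eventually hGev, hfst.eventually haq] with p h1 h2 h3 h4
    have h5 := h3 _ h2
    rw [mul_div_cancel₀ _ hρ0.ne'] at h5
    have h6 : G (ℓ ρ p.1) = _ := h4
    rw [← h5, h6, map_mul, sign_mul, h1, mul_comm]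
    congr 1
    have h7 : p.2 ^ d + ∑ i : Fin d, a p.1 i * ρ ^ (d - i : ℕ) * p.2 ^ (i : ℕ) =
        ρ ^ d * ((p.2 / ρ) ^ d + ∑ i : Fin d, a p.1 i * (p.2 / ρ) ^ (i : ℕ)) := by
      rw [mul_add, Finset.mul_sum, ← mul_pow, mul_div_cancel₀ _ hρ0.ne']
      congr 1
      refine Finset.sum_congr rfl fun i _ => ?_
      have : ρ ^ d = ρ ^ (d - i : ℕ) * ρ ^ (i : ℕ) := by rw [← pow_add]; congr 1; omega
      rw [this, div_pow]
      field_simp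
    rw [h7, sign_mul, sign_pos (show 0 < ρ ^ d by positivity), one_mul]
    simp [T.ev_X _ h2]

end MilnorFib

end

/-! ### Hensel's lemma for analytic families of polynomials -/

section

open Set Filter Topology
namespace MilnorFib
open Polynomial in
/-- The polynomial of degree `< m` with given coefficients, as a real-linear map. -/
noncomputable def lam (m : ℕ) : (Fin m → ℂ) →ₗ[ℝ] ℂ[X] :=
  ((degreeLT ℂ m).subtype ∘ₗ (degreeLTEquiv ℂ m).symm.toLinearMap).restrictScalars ℝ

open Polynomial in
/-- A family of polynomials has coefficients analytic at `0`. -/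
def AnP (P : ℝ → ℂ[X]) : Prop := ∀ i, AnalyticAt ℝ (fun t => (P t).coeff i) 0

section
open Polynomial

theorem lam_degree {m : ℕ} (α : Fin m → ℂ) : (lam m α).degree < m :=
  mem_degreeLT.1 ((degreeLTEquiv ℂ m).symm α).2

theorem lam_injective {m : ℕ} {α : Fin m → ℂ} (h : lam m α = 0) : α = 0 := by
  have : (degreeLTEquiv ℂ m).symm α = 0 := Subtype.ext h
  simpa using this

/-- Coefficients of polynomials below a given degree. -/
noncomputable def cf (d : ℕ) : ℂ[X] →ₗ[ℝ] (Fin d → ℂ) :=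
  LinearMap.pi fun k => (lcoeff ℂ k).restrictScalars ℝ

@[simp] theorem cf_apply (d : ℕ) (p : ℂ[X]) (k : Fin d) : cf d p k = p.coeff k := rfl

theorem AnP.mul {P Q : ℝ → ℂ[X]} (hP : AnP P) (hQ : AnP Q) : AnP fun t => P t * Q t := by
  intro i
  simp only [coeff_mul]
  exact Finset.analyticAt_fun_sum _ fun x _ => (hP _).mul (hQ _)

theorem AnP.add {P Q : ℝ → ℂ[X]} (hP : AnP P) (hQ : AnP Q) : AnP fun t => P t + Q t := by
  intro i
  simp only [coeff_add]
  exact (hP _).add (hQ _)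

theorem AnP.const (p : ℂ[X]) : AnP fun _ => p := fun _ => analyticAt_const

theorem analyticAt_lam_coeff {Y : Type*} [NormedAddCommGroup Y] [NormedSpace ℝ Y] {m : ℕ}
    {α : Y → Fin m → ℂ} {y : Y} (h : AnalyticAt ℝ α y) (i : ℕ) :
    AnalyticAt ℝ (fun t => (lam m (α t)).coeff i) y := by
  let l : (Fin m → ℂ) →L[ℝ] ℂ :=
    LinearMap.toContinuousLinearMap (((lcoeff ℂ i).restrictScalars ℝ) ∘ₗ lam m)
  exact (l.analyticAt _).comp h

theorem monic_add_lam {m : ℕ} {A : ℂ[X]} (hA : A.Monic) (hm : A.natDegree = m) (α : Fin m → ℂ) :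
    (A + lam m α).Monic ∧ (A + lam m α).natDegree = m := by
  have h : (lam m α).degree < A.degree := by
    rw [degree_eq_natDegree hA.ne_zero, hm]; exact lam_degree α
  refine ⟨hA.add_of_left h, ?_⟩
  rw [natDegree_add_eq_left_of_degree_lt h, hm]

/-- Hensel's lemma for analytic families of monic polynomials: a coprime factorization at `0`
extends analytically. -/
theorem hensel {P : ℝ → ℂ[X]} {A B : ℂ[X]} (hP : AnP P) (hPm : ∀ t, (P t).Monic)
    (hPd : ∀ t, (P t).natDegree = A.natDegree + B.natDegree) (hA : A.Monic) (hB : B.Monic)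
    (hAB : IsCoprime A B) (h0 : P 0 = A * B) :
    ∃ PA PB : ℝ → ℂ[X], AnP PA ∧ AnP PB ∧
      (∀ t, (PA t).Monic ∧ (PA t).natDegree = A.natDegree) ∧
      (∀ t, (PB t).Monic ∧ (PB t).natDegree = B.natDegree) ∧
      ∀ᶠ t in 𝓝 0, P t = PA t * PB t := by
  obtain ⟨m, hm⟩ : ∃ m, A.natDegree = m := ⟨_, rfl⟩
  obtain ⟨n, hn⟩ : ∃ n, B.natDegree = n := ⟨_, rfl⟩
  rw [hm, hn] at hPd ⊢
  let Φ : (Fin m → ℂ) × (Fin n → ℂ) → (Fin (m + n) → ℂ) := fun p =>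
    cf (m + n) ((A + lam m p.1) * (B + lam n p.2) - A * B)
  let L₀ : (Fin m → ℂ) × (Fin n → ℂ) →ₗ[ℝ] (Fin (m + n) → ℂ) :=
    cf (m + n) ∘ₗ ((LinearMap.mulRight ℝ B) ∘ₗ lam m ∘ₗ LinearMap.fst ℝ _ _ +
      (LinearMap.mulLeft ℝ A) ∘ₗ lam n ∘ₗ LinearMap.snd ℝ _ _)
  have hL₀ : ∀ p, L₀ p = cf (m + n) (lam m p.1 * B + A * lam n p.2) := fun p => rfl
  have hinj : Function.Injective L₀ := by
    rw [injective_iff_map_eq_zero]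
    rintro ⟨α, β⟩ h
    rw [hL₀] at h
    have hz : lam m α * B + A * lam n β = 0 := by
      have hdeg : (lam m α * B + A * lam n β).degree < (m + n : ℕ) := by
        refine (degree_add_le _ _).trans_lt (max_lt ?_ ?_)
        · by_cases h1 : lam m α = 0
          · rw [h1]; simp
          rw [degree_mul, degree_eq_natDegree hB.ne_zero, hn, Nat.cast_add]
          rw [degree_eq_natDegree h1]
          have := lam_degree α
          rw [degree_eq_natDegree h1] at this
          norm_cast at this ⊢
          omega
        · by_cases h1 : lam n β = 0
          · rw [h1]; simp
          rw [degree_mul, degree_eq_natDegree hA.ne_zero, hm, Nat.cast_add]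
          rw [degree_eq_natDegree h1]
          have := lam_degree β
          rw [degree_eq_natDegree h1] at this
          norm_cast at this ⊢
          omega
      ext k
      by_cases hk : k < m + n
      · simpa using congrFun h ⟨k, hk⟩
      · rw [coeff_eq_zero_of_degree_lt (hdeg.trans_le (by exact_mod_cast not_lt.1 hk))]
        simp
    have hdvd : A ∣ lam m α := by
      refine hAB.dvd_of_dvd_mul_right (?_ : A ∣ lam m α * B)
      exact ⟨-lam n β, by linear_combination hz⟩
    have h1 : lam m α = 0 := eq_zero_of_dvd_of_degree_lt hdvd (by
      rw [degree_eq_natDegree hA.ne_zero, hm]; exact lam_degree α)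
    rw [h1, zero_mul, zero_add] at hz
    have h2 : lam n β = 0 := (mul_eq_zero.1 hz).resolve_left hA.ne_zero
    rw [lam_injective h1, lam_injective h2]; rfl
  have hsurj : Function.Surjective L₀ := by
    refine (LinearMap.injective_iff_surjective_of_finrank_eq_finrank ?_).1 hinj
    simp [Module.finrank_pi_fintype, Complex.finrank_real_complex]
    ring
  have hΦ : AnalyticAt ℝ Φ 0 := by
    rw [analyticAt_pi_iff]
    intro k
    simp only [cf_apply, coeff_sub, coeff_mul]
    refine AnalyticAt.sub ?_ analyticAt_const
    refine Finset.analyticAt_fun_sum _ fun x _ => ?_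
    simp only [coeff_add]
    exact (analyticAt_const.add (analyticAt_lam_coeff analyticAt_fst _)).mul
      (analyticAt_const.add (analyticAt_lam_coeff analyticAt_snd _))
  let L := LinearMap.toContinuousLinearMap L₀
  have hΦL : fderiv ℝ Φ 0 = L := by
    refine ContinuousLinearMap.ext fun v => ?_
    have h1 : HasDerivAt (fun s : ℝ => Φ (s • v)) (fderiv ℝ Φ 0 v) 0 := by
      have h2 : HasDerivAt (fun s : ℝ => s • v) v 0 := by
        simpa using (hasDerivAt_id (0 : ℝ)).smul_const v
      have h3 : HasFDerivAt Φ (fderiv ℝ Φ 0) ((0 : ℝ) • v) := by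
        rw [zero_smul]; exact hΦ.differentiableAt.hasFDerivAt
      exact h3.comp_hasDerivAt (0 : ℝ) h2
    have h4 : (fun s : ℝ => Φ (s • v)) =
        fun s => s • L₀ v + (s ^ 2) • cf (m + n) (lam m v.1 * lam n v.2) := by
      funext s
      rw [hL₀, ← map_smul, ← map_smul, ← map_add]
      simp only [Φ, Prod.smul_fst, Prod.smul_snd, map_smul]
      congr 1
      simp only [Algebra.smul_def]
      rw [map_pow]; ring
    have h5 : HasDerivAt (fun s : ℝ => Φ (s • v)) (L₀ v) 0 := by
      rw [h4]
      have := ((hasDerivAt_id (0 : ℝ)).smul_const (L₀ v)).add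
        ((hasDerivAt_pow 2 (0 : ℝ)).smul_const (cf (m + n) (lam m v.1 * lam n v.2)))
      simp at this
      exact this
    exact h1.unique h5
  have hL : HasFDerivAt Φ L 0 := hΦL ▸ hΦ.differentiableAt.hasFDerivAt
  have hG : AnalyticAt ℝ (fun t => cf (m + n) (P t - A * B)) 0 := by
    rw [analyticAt_pi_iff]
    intro k
    simp only [cf_apply, coeff_sub]
    exact (hP _).sub analyticAt_const
  obtain ⟨s, hs, -, hsol⟩ := exists_analytic_solution hΦ hL hinj hsurj hG
    (by simp [Φ, h0])
  have hs1 : AnalyticAt ℝ (fun t => (s t).1) 0 := analyticAt_fst.comp hs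
  have hs2 : AnalyticAt ℝ (fun t => (s t).2) 0 := analyticAt_snd.comp hs
  refine ⟨fun t => A + lam m (s t).1, fun t => B + lam n (s t).2,
    (AnP.const A).add (fun i => analyticAt_lam_coeff hs1 i),
    (AnP.const B).add (fun i => analyticAt_lam_coeff hs2 i),
    fun t => monic_add_lam hA hm _, fun t => monic_add_lam hB hn _, ?_⟩
  filter_upwards [hsol] with t ht
  obtain ⟨h1, h1'⟩ := monic_add_lam hA hm (s t).1
  obtain ⟨h2, h2'⟩ := monic_add_lam hB hn (s t).2
  have h3 := h1.mul h2
  have h3' := h1.natDegree_mul h2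
  rw [h1', h2'] at h3'
  ext k
  rcases lt_trichotomy k (m + n) with hk | hk | hk
  · have := congrFun ht ⟨k, hk⟩
    simp only [Φ, cf_apply, coeff_sub] at this
    linear_combination -this
  · have e1 := (hPm t).coeff_natDegree
    have e2 := h3.coeff_natDegree
    rw [hPd t, ← hk] at e1
    rw [h3', ← hk] at e2
    rw [e1, e2]
  · rw [coeff_eq_zero_of_natDegree_lt (by rw [hPd t]; exact hk),
      coeff_eq_zero_of_natDegree_lt (by rw [h3']; exact hk)]
end
end MilnorFib

end

/-! ### Splitting after ramification -/

section

open Set Filter Topology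
namespace MilnorFib
section
open Polynomial

/-- After a ramification `t = s ^ k` the family `P` splits into linear factors with analytic
roots. -/
def Spl (P : ℝ → ℂ[X]) : Prop :=
  ∃ k : ℕ, 0 < k ∧ ∃ R : List (ℝ → ℂ), (∀ ρ ∈ R, AnalyticAt ℝ ρ 0) ∧
    ∀ᶠ s : ℝ in 𝓝 0, P (s ^ k) = (R.map fun ρ => X - C (ρ s)).prod

theorem tendsto_pow_zero {k : ℕ} (hk : 0 < k) : Tendsto (fun s : ℝ => s ^ k) (𝓝 0) (𝓝 0) := by
  have := (continuous_pow k).tendsto (0 : ℝ)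
  rwa [zero_pow hk.ne'] at this

theorem analyticAt_comp_pow {E : Type*} [NormedAddCommGroup E] [NormedSpace ℝ E] {ρ : ℝ → E}
    (h : AnalyticAt ℝ ρ 0) {k : ℕ} (hk : 0 < k) : AnalyticAt ℝ (fun s => ρ (s ^ k)) 0 := by
  refine AnalyticAt.fun_comp (g := ρ) ?_ (analyticAt_id.pow k)
  simpa [hk.ne'] using h

theorem Spl.mul {P A B : ℝ → ℂ[X]} (hA : Spl A) (hB : Spl B)
    (h : ∀ᶠ t in 𝓝 0, P t = A t * B t) : Spl P := by
  obtain ⟨k, hk, R, hR, hk2⟩ := hA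
  obtain ⟨l, hl, S, hS, hl2⟩ := hB
  refine ⟨k * l, Nat.mul_pos hk hl, R.map (fun ρ s => ρ (s ^ l)) ++ S.map (fun ρ s => ρ (s ^ k)),
    ?_, ?_⟩
  · intro ρ hρ
    rw [List.mem_append, List.mem_map, List.mem_map] at hρ
    obtain ⟨σ, hσ, rfl⟩ | ⟨σ, hσ, rfl⟩ := hρ
    · exact analyticAt_comp_pow (hR _ hσ) hl
    · exact analyticAt_comp_pow (hS _ hσ) hk
  · filter_upwards [(tendsto_pow_zero (Nat.mul_pos hk hl)).eventually h,
      (tendsto_pow_zero hl).eventually hk2, (tendsto_pow_zero hk).eventually hl2] with s h1 h2 h3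
    rw [h1, List.map_append, List.prod_append, List.map_map, List.map_map]
    rw [← pow_mul, mul_comm] at h2
    rw [← pow_mul] at h3
    rw [h2, h3]; rfl

theorem list_prod_scaleRoots (L : List ℂ) (r : ℂ) :
    ((L.map fun ρ => X - C ρ).prod).scaleRoots r = (L.map fun ρ => X - C (ρ * r)).prod := by
  induction L with
  | nil => simp
  | cons a L ih =>
    simp only [List.map_cons, List.prod_cons]
    rw [mul_scaleRoots_of_noZeroDivisors, ih, X_sub_C_scaleRoots]

theorem list_prod_taylor (L : List ℂ) (r : ℂ) :
    taylor (-r) ((L.map fun ρ => X - C ρ).prod) = (L.map fun ρ => X - C (ρ + r)).prod := by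
  induction L with
  | nil => simp
  | cons a L ih =>
    simp only [List.map_cons, List.prod_cons]
    rw [taylor_mul, ih, map_sub, taylor_X, taylor_C]
    congr 1
    simp only [C_neg, C_add]; ring

theorem Spl.scale {P Q : ℝ → ℂ[X]} {p q : ℕ} (hq : 0 < q) (hQ : Spl Q)
    (h : ∀ᶠ s : ℝ in 𝓝 0, P (s ^ q) = (Q s).scaleRoots ((s : ℂ) ^ p)) : Spl P := by
  obtain ⟨k, hk, R, hR, hk2⟩ := hQ
  refine ⟨k * q, Nat.mul_pos hk hq, R.map (fun ρ s => ρ s * ((s ^ k : ℝ) : ℂ) ^ p), ?_, ?_⟩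
  · intro ρ hρ
    rw [List.mem_map] at hρ
    obtain ⟨σ, hσ, rfl⟩ := hρ
    refine (hR _ hσ).mul (AnalyticAt.pow ?_ _)
    exact (Complex.ofRealCLM.analyticAt _).fun_comp (analyticAt_id.pow k)
  · filter_upwards [(tendsto_pow_zero hk).eventually h, hk2] with s h1 h2
    rw [pow_mul, h1, h2]
    have := list_prod_scaleRoots (R.map fun ρ => ρ s) (((s ^ k : ℝ) : ℂ) ^ p)
    rw [List.map_map, List.map_map] at this
    rw [List.map_map]
    exact this

theorem Spl.shift {P : ℝ → ℂ[X]} {c : ℝ → ℂ} (hc : AnalyticAt ℝ c 0)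
    (hQ : Spl fun t => taylor (c t) (P t)) : Spl P := by
  obtain ⟨k, hk, R, hR, hk2⟩ := hQ
  refine ⟨k, hk, R.map (fun ρ s => ρ s + c (s ^ k)), ?_, ?_⟩
  · intro ρ hρ
    rw [List.mem_map] at hρ
    obtain ⟨σ, hσ, rfl⟩ := hρ
    exact (hR _ hσ).add (analyticAt_comp_pow hc hk)
  · filter_upwards [hk2] with s h2
    have := list_prod_taylor (R.map fun ρ => ρ s) (c (s ^ k))
    rw [List.map_map, List.map_map] at this
    rw [List.map_map]
    refine Eq.trans ?_ this
    have e : ((R.map ((fun ρ => X - C ρ) ∘ fun ρ => ρ s))).prod =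
      (R.map fun ρ => X - C (ρ s)).prod := rfl
    rw [e, ← h2, taylor_taylor]; simp

theorem lam_coeff {m : ℕ} (α : Fin m → ℂ) (i : Fin m) : (lam m α).coeff i = α i := by
  have : degreeLTEquiv ℂ m ((degreeLTEquiv ℂ m).symm α) i = α i := by simp
  exact this

theorem exists_coprime_factor {Q : ℂ[X]} {d : ℕ} (hQ : Q.Monic) (hd : Q.natDegree = d)
    (h1 : Q.coeff (d - 1) = 0) (h2 : ∃ i < d, Q.coeff i ≠ 0) :
    ∃ A B : ℂ[X], A.Monic ∧ B.Monic ∧ IsCoprime A B ∧ Q = A * B ∧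
      A.natDegree < d ∧ B.natDegree < d := by
  have hd0 : 0 < d := by obtain ⟨i, hi, -⟩ := h2; omega
  obtain ⟨c, hc⟩ := IsAlgClosed.exists_root Q (by
    rw [degree_eq_natDegree hQ.ne_zero, hd]; exact_mod_cast hd0.ne')
  obtain ⟨B, hB, hB'⟩ := exists_eq_pow_rootMultiplicity_mul_and_not_dvd Q hQ.ne_zero c
  have hk : 0 < rootMultiplicity c Q := (rootMultiplicity_pos hQ.ne_zero).2 hc
  generalize rootMultiplicity c Q = k at *
  have hA : ((X - C c) ^ k).Monic := (monic_X_sub_C c).pow k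
  have hBm : B.Monic := by
    rw [hB] at hQ; exact hA.of_mul_monic_left hQ
  have hAd : ((X - C c) ^ k).natDegree = k := by simp
  have hdeg : d = k + B.natDegree := by
    rw [← hd, hB, hA.natDegree_mul hBm, hAd]
  refine ⟨_, B, hA, hBm, ?_, hB, ?_, by omega⟩
  · exact ((irreducible_X_sub_C c).coprime_iff_not_dvd.2 hB').pow_left
  · rw [hAd]
    by_contra hlt
    have hB0 : B.natDegree = 0 := by omega
    have : B = 1 := hBm.natDegree_eq_zero.1 hB0
    rw [this, mul_one] at hB
    obtain rfl : d = k := by omega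
    have h3 : c = 0 := by
      rw [hB, sub_eq_add_neg, ← C_neg, coeff_X_add_C_pow, Nat.choose_symm (show 1 ≤ d from hd0)] at h1
      have e : d - (d - 1) = 1 := by omega
      rw [e, pow_one, Nat.choose_one_right] at h1
      simpa [hd0.ne'] using h1
    obtain ⟨i, hi, hi'⟩ := h2
    apply hi'
    rw [hB, h3]; simp [coeff_X_pow, hi.ne]

theorem AnP.pow {P : ℝ → ℂ[X]} (hP : AnP P) (n : ℕ) : AnP fun t => P t ^ n := by
  induction n with
  | zero => simpa using AnP.const 1
  | succ n ih => simp only [pow_succ]; exact ih.mul hP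

theorem AnP.C {c : ℝ → ℂ} (hc : AnalyticAt ℝ c 0) : AnP fun t => C (c t) := by
  intro i
  by_cases h : i = 0
  · subst h; simpa using hc
  · simp only [coeff_C_of_ne_zero h]; exact analyticAt_const

theorem AnP.sum {ι : Type*} (s : Finset ι) {P : ι → ℝ → ℂ[X]} (hP : ∀ i ∈ s, AnP (P i)) :
    AnP fun t => ∑ i ∈ s, P i t := by
  intro i
  simp only [finsetSum_coeff]
  exact Finset.analyticAt_fun_sum _ fun x hx => hP x hx _

theorem AnP.taylor {P : ℝ → ℂ[X]} {d : ℕ} (hd : ∀ t, (P t).natDegree = d) (hP : AnP P)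
    {c : ℝ → ℂ} (hc : AnalyticAt ℝ c 0) : AnP fun t => taylor (c t) (P t) := by
  have : (fun t => Polynomial.taylor (c t) (P t)) =
      fun t => ∑ i ∈ Finset.range (d + 1), Polynomial.C ((P t).coeff i) * (X + Polynomial.C (c t)) ^ i := by
    funext t
    rw [taylor_apply, Polynomial.comp, eval₂_eq_sum_range, hd]
  rw [this]
  exact AnP.sum _ fun i _ => (AnP.C (hP i)).mul (((AnP.const X).add (AnP.C hc)).pow i)

theorem taylor_coeff_pred {P : ℂ[X]} {d : ℕ} (hP : P.Monic) (hd : P.natDegree = d) (hd0 : 0 < d) :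
    (taylor (-(P.coeff (d - 1)) / d) P).coeff (d - 1) = 0 := by
  have h1 : (hasseDeriv (d - 1) P).natDegree ≤ 1 := by
    refine (natDegree_hasseDeriv_le _ _).trans ?_
    omega
  rw [taylor_coeff, eq_X_add_C_of_natDegree_le_one h1]
  have e1 : 1 + (d - 1) = d := by omega
  have e2 : P.coeff d = 1 := by rw [← hd]; exact hP
  have e3 : d.choose (d - 1) = d := by
    rw [Nat.choose_symm (show 1 ≤ d from hd0), Nat.choose_one_right]
  have hd1 : (d : ℂ) ≠ 0 := by exact_mod_cast hd0.ne'
  simp only [hasseDeriv_coeff, e1, zero_add, Nat.choose_self, e2, e3]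
  simp
  field_simp
  ring
end
end MilnorFib

end

/-! ### Puiseux's theorem -/

section

open Set Filter Topology
namespace MilnorFib
section
open Polynomial

/-- The Newton polygon step: a monic family with vanishing subleading coefficient and not
identically `X ^ d` becomes, after ramification and scaling of the roots, a monic family whose
value at `0` still has vanishing subleading coefficient and differs from `X ^ d`. -/
theorem newton_step {P : ℝ → ℂ[X]} {d : ℕ} (hP : AnP P) (hPm : ∀ t, (P t).Monic)
    (hPd : ∀ t, (P t).natDegree = d) (h1 : ∀ t, (P t).coeff (d - 1) = 0)
    (h2 : ∃ i < d, ¬ ∀ᶠ t in 𝓝 0, (P t).coeff i = 0) :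
    ∃ (Q : ℝ → ℂ[X]) (p q : ℕ), 0 < q ∧ AnP Q ∧ (∀ t, (Q t).Monic ∧ (Q t).natDegree = d) ∧
      (Q 0).coeff (d - 1) = 0 ∧ (∃ i < d, (Q 0).coeff i ≠ 0) ∧
      ∀ᶠ s : ℝ in 𝓝 0, P (s ^ q) = (Q s).scaleRoots ((s : ℂ) ^ p) := by
  classical
  have hnu : ∀ i : Fin d, ∃ (n : ℕ) (u : ℝ → ℂ), (¬ ∀ᶠ t in 𝓝 0, (P t).coeff i = 0) →
      AnalyticAt ℝ u 0 ∧ u 0 ≠ 0 ∧ ∀ᶠ t : ℝ in 𝓝 0, (P t).coeff i = (t : ℂ) ^ n * u t := by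
    intro i
    by_cases h : ∀ᶠ t in 𝓝 0, (P t).coeff i = 0
    · exact ⟨0, 0, fun hpr => (hpr h).elim⟩
    obtain ⟨n, u, hu, hu0, hn⟩ := (hP i).exists_eventuallyEq_pow_smul_nonzero_iff.2 h
    refine ⟨n, u, fun _ => ⟨hu, hu0, ?_⟩⟩
    filter_upwards [hn] with t ht
    rw [ht, sub_zero, Complex.real_smul]; push_cast; rfl
  choose n u hnu using hnu
  let S : Finset (Fin d) := Finset.univ.filter fun i => ¬ ∀ᶠ t in 𝓝 0, (P t).coeff i = 0
  have hS : S.Nonempty := by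
    obtain ⟨i, hi, hi'⟩ := h2
    exact ⟨⟨i, hi⟩, by simpa [S] using hi'⟩
  obtain ⟨j, hj, hmin⟩ := S.exists_min_image (fun i => (n i : ℚ) / ((d - (i : ℕ) : ℕ) : ℚ)) hS
  have hmin' : ∀ i ∈ S, n j * (d - i) ≤ (d - j) * n i := by
    intro i hi
    have := hmin i hi
    have hi1 : 0 < d - (i : ℕ) := by omega
    have hj1 : 0 < d - (j : ℕ) := by omega
    rw [div_le_div_iff₀ (by exact_mod_cast hj1) (by exact_mod_cast hi1)] at this
    rw [mul_comm (d - _)]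
    exact_mod_cast this
  have hS' : ∀ i ∈ S, ¬ ∀ᶠ t in 𝓝 0, (P t).coeff i = 0 := fun i hi => by simpa [S] using hi
  have hS'' : ∀ i, i ∉ S → ∀ᶠ t in 𝓝 0, (P t).coeff i = 0 := fun i hi => by simpa [S] using hi
  obtain ⟨p, hp⟩ : ∃ p, p = n j := ⟨_, rfl⟩
  obtain ⟨q, hq⟩ : ∃ q, q = d - (j : ℕ) := ⟨_, rfl⟩
  have hq0 : 0 < q := by omega
  rw [← hp, ← hq] at hmin'
  let b : ℝ → Fin d → ℂ := fun s i =>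
    if i ∈ S then (s : ℂ) ^ (q * n i - p * (d - i)) * u i (s ^ q) else 0
  have hb : AnalyticAt ℝ b 0 := by
    rw [analyticAt_pi_iff]
    intro i
    by_cases hi : i ∈ S
    · simp only [hi, if_true]
      exact ((Complex.ofRealCLM.analyticAt _).pow _).mul
        (analyticAt_comp_pow (hnu i (hS' i hi)).1 hq0)
    · simp only [hi, if_false]; exact analyticAt_const
  have hcoeff : ∀ t (i : Fin d), (X ^ d + lam d (b t)).coeff i = b t i := by
    intro t i
    rw [coeff_add, lam_coeff, coeff_X_pow, if_neg i.2.ne, zero_add]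
  refine ⟨fun t => X ^ d + lam d (b t), p, q, hq0,
    (AnP.const _).add fun i => analyticAt_lam_coeff hb i,
    fun t => monic_add_lam (monic_X_pow d) (natDegree_X_pow d) _, ?_, ?_, ?_⟩
  · have hd : d - 1 < d := by have := j.2; omega
    have := hcoeff 0 ⟨d - 1, hd⟩
    rw [this]
    have : (⟨d - 1, hd⟩ : Fin d) ∉ S := fun hm => hS' _ hm (Eventually.of_forall h1)
    simp only [b, this, if_false]
  · refine ⟨j, j.2, ?_⟩
    rw [hcoeff]
    have : q * n j - p * (d - j) = 0 := by rw [hp, hq, mul_comm]; simp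
    simp only [b, hj, if_true, this, pow_zero, one_mul, zero_pow hq0.ne']
    exact (hnu j (hS' j hj)).2.1
  · have h3 : ∀ i : Fin d, ∀ᶠ t : ℝ in 𝓝 0, (P t).coeff i =
        if i ∈ S then (t : ℂ) ^ n i * u i t else 0 := by
      intro i
      by_cases hi : i ∈ S
      · simp only [hi, if_true]; exact (hnu i (hS' i hi)).2.2
      · simp only [hi, if_false]; exact hS'' i hi
    filter_upwards [(tendsto_pow_zero hq0).eventually (eventually_all.2 h3)] with s hs
    obtain ⟨hm, hd⟩ := monic_add_lam (monic_X_pow d) (natDegree_X_pow d) (b s)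
    ext k
    rw [coeff_scaleRoots, hd]
    rcases lt_trichotomy k d with hk | hk | hk
    · have e1 := hs ⟨k, hk⟩
      have e2 := hcoeff s ⟨k, hk⟩
      dsimp only at e1 e2
      rw [e1, e2]
      simp only [b]
      split_ifs with hi
      · have e3 := hmin' _ hi
        dsimp only at e3
        push_cast
        rw [← pow_mul, ← pow_mul, mul_right_comm, ← pow_add, Nat.sub_add_cancel e3]
      · simp
    · subst hk
      have e1 := (hPm (s ^ q)).coeff_natDegree
      have e2 := hm.coeff_natDegree
      rw [hPd] at e1
      rw [hd] at e2
      rw [e1, e2]; simp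
    · rw [coeff_eq_zero_of_natDegree_lt (by rw [hPd]; exact hk),
        coeff_eq_zero_of_natDegree_lt (by rw [hd]; exact hk), zero_mul]

/-- Puiseux's theorem for monic polynomials with coefficients analytic at `0`. -/
theorem puiseux (d : ℕ) : ∀ {P : ℝ → ℂ[X]}, AnP P → (∀ t, (P t).Monic) →
    (∀ t, (P t).natDegree = d) → Spl P := by
  induction d using Nat.strong_induction_on with
  | _ d ih =>
  intro P hP hPm hPd
  rcases Nat.eq_zero_or_pos d with hd | hd
  · refine ⟨1, one_pos, [], by simp, Eventually.of_forall fun s => ?_⟩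
    simpa using (hPm _).natDegree_eq_zero.1 ((hPd _).trans hd)
  have hc : AnalyticAt ℝ (fun t => -((P t).coeff (d - 1)) / (d : ℂ)) 0 := by
    simp only [div_eq_mul_inv]
    exact (hP _).neg.mul analyticAt_const
  suffices H : ∀ T : ℝ → ℂ[X], AnP T → (∀ t, (T t).Monic) → (∀ t, (T t).natDegree = d) →
      (∀ t, (T t).coeff (d - 1) = 0) → Spl T from
    Spl.shift hc (H _ (AnP.taylor hPd hP hc)
      (fun t => by rw [Monic, leadingCoeff_taylor]; exact hPm t)
      (fun t => by rw [natDegree_taylor, hPd])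
      (fun t => taylor_coeff_pred (hPm t) (hPd t) hd))
  intro T hT hTm hTd hT1
  by_cases h2 : ∃ i < d, ¬ ∀ᶠ t in 𝓝 0, (T t).coeff i = 0
  · obtain ⟨Q, p, q, hq, hQ, hQm, hQ1, hQ2, hTQ⟩ := newton_step hT hTm hTd hT1 h2
    refine Spl.scale hq ?_ hTQ
    obtain ⟨A, B, hA, hB, hAB, h0, hAd, hBd⟩ :=
      exists_coprime_factor (hQm 0).1 (hQm 0).2 hQ1 hQ2
    have hsum : d = A.natDegree + B.natDegree := by
      rw [← (hQm 0).2, h0, hA.natDegree_mul hB]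
    obtain ⟨QA, QB, hQA, hQB, hA', hB', hQAB⟩ := hensel hQ (fun t => (hQm t).1)
      (fun t => (hQm t).2.trans hsum) hA hB hAB h0
    exact Spl.mul (ih _ hAd hQA (fun t => (hA' t).1) fun t => (hA' t).2)
      (ih _ hBd hQB (fun t => (hB' t).1) fun t => (hB' t).2) hQAB
  · push Not at h2
    refine ⟨1, one_pos, List.replicate d 0, ?_, ?_⟩
    · intro ρ hρ
      rw [List.eq_of_mem_replicate hρ]; exact analyticAt_const
    · have h3 : ∀ᶠ t in 𝓝 0, ∀ i : Fin d, (T t).coeff i = 0 :=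
        eventually_all.2 fun i => h2 i i.2
      filter_upwards [h3] with s hs
      rw [pow_one, List.map_replicate, List.prod_replicate]
      simp only [Pi.zero_apply, C_0, sub_zero]
      ext k
      rw [coeff_X_pow]
      rcases lt_trichotomy k d with hk | hk | hk
      · rw [if_neg hk.ne]; exact hs ⟨k, hk⟩
      · rw [if_pos hk, hk, ← hTd s]; exact hTm s
      · rw [if_neg hk.ne', coeff_eq_zero_of_natDegree_lt (by rw [hTd]; exact hk)]
end
end MilnorFib

end

/-! ### Signs of germs and sample points -/

section

open Set Filter Topology
namespace MilnorFib

theorem eventually_sign_const {u : ℝ → ℝ} (hu : AnalyticAt ℝ u 0) :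
    ∃ ν : SignType, ∀ᶠ s in 𝓝[>] (0 : ℝ), SignType.sign (u s) = ν := by
  by_cases h : ∀ᶠ s in 𝓝 0, u s = 0
  · exact ⟨0, (h.filter_mono nhdsWithin_le_nhds).mono fun s hs => by rw [hs, sign_zero]⟩
  obtain ⟨n, w, hw, hw0, hn⟩ := hu.exists_eventuallyEq_pow_smul_nonzero_iff.2 h
  refine ⟨SignType.sign (w 0), ?_⟩
  have h1 : ∀ᶠ s in 𝓝 0, SignType.sign (w s) = SignType.sign (w 0) := by
    rcases lt_or_gt_of_ne hw0 with h0 | h0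
    · filter_upwards [hw.continuousAt.eventually (gt_mem_nhds h0)] with s hs
      rw [sign_neg hs, sign_neg h0]
    · filter_upwards [hw.continuousAt.eventually (lt_mem_nhds h0)] with s hs
      rw [sign_pos hs, sign_pos h0]
  filter_upwards [h1.filter_mono nhdsWithin_le_nhds, hn.filter_mono nhdsWithin_le_nhds,
    self_mem_nhdsWithin] with s h1 h2 h3
  rw [h2, smul_eq_mul, sign_mul, h1, sub_zero, sign_pos (pow_pos h3 n), one_mul]

theorem eventually_sign_of_frequently {u : ℝ → ℝ} (hu : AnalyticAt ℝ u 0) {ν : SignType}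
    (h : ∃ᶠ s in 𝓝[>] (0 : ℝ), SignType.sign (u s) = ν) :
    ∀ᶠ s in 𝓝[>] (0 : ℝ), SignType.sign (u s) = ν := by
  obtain ⟨ν', hpr⟩ := eventually_sign_const hu
  obtain ⟨s, hs, hs'⟩ := (h.and_eventually hpr).exists
  rw [← hs, hs']; exact hpr

/-- Sample points for the cells cut out on the line by a finite set `Z`: every point lies in a
cell containing one of the numbers `(a + b) / 2 + ε s` with `a b ∈ Z`, `ε ∈ {-1, 0, 1}`. -/
theorem exists_sample {Z : Set ℝ} (hZ : Z.Finite) (hne : Z.Nonempty) (X : ℝ) {s : ℝ} (hs : 0 < s) :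
    ∃ a ∈ Z, ∃ b ∈ Z, ∃ ε : SignType, (a + b) / 2 + ε * s = X ∨
      ∀ z ∈ Z, z ∉ uIcc X ((a + b) / 2 + ε * s) := by
  by_cases hX : X ∈ Z
  · exact ⟨X, hX, X, hX, 0, Or.inl (by simp)⟩
  have hlo : (Z ∩ Iio X).Nonempty → ∃ a ∈ Z, a < X ∧ ∀ z ∈ Z, z < X → z ≤ a := by
    intro h
    obtain ⟨a, ha, hmax⟩ := (hZ.inter_of_left (Iio X)).exists_maximal h
    refine ⟨a, ha.1, ha.2, fun z hz hzX => ?_⟩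
    rcases le_total z a with h | h
    · exact h
    · exact hmax ⟨hz, hzX⟩ h
  have hhi : (Z ∩ Ioi X).Nonempty → ∃ a ∈ Z, X < a ∧ ∀ z ∈ Z, X < z → a ≤ z := by
    intro h
    obtain ⟨a, ha, hmax⟩ := (hZ.inter_of_left (Ioi X)).exists_minimal h
    refine ⟨a, ha.1, ha.2, fun z hz hzX => ?_⟩
    rcases le_total a z with h | h
    · exact h
    · exact hmax ⟨hz, hzX⟩ h
  have hne' : ∀ z ∈ Z, z < X ∨ X < z := fun z hz => lt_or_gt_of_ne fun h => hX (h ▸ hz)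
  by_cases h1 : (Z ∩ Iio X).Nonempty
  · obtain ⟨a, ha, haX, hmax⟩ := hlo h1
    by_cases h2 : (Z ∩ Ioi X).Nonempty
    · obtain ⟨b, hb, hbX, hmin⟩ := hhi h2
      refine ⟨a, ha, b, hb, 0, Or.inr fun z hz hzu => ?_⟩
      rw [mem_uIcc] at hzu
      simp only [SignType.coe_zero, zero_mul, add_zero] at hzu
      rcases hne' z hz with h | h
      · have := hmax z hz h
        rcases hzu with hpr | hpr <;> linarith [hpr.1, hpr.2]
      · have := hmin z hz h
        rcases hzu with hpr | hpr <;> linarith [hpr.1, hpr.2]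
    · refine ⟨a, ha, a, ha, 1, Or.inr fun z hz hzu => ?_⟩
      have hzX : z < X := (hne' z hz).resolve_right fun h => h2 ⟨z, hz, h⟩
      have := hmax z hz hzX
      rw [mem_uIcc] at hzu
      simp only [SignType.coe_one] at hzu
      rcases hzu with hpr | hpr <;> linarith [hpr.1, hpr.2]
  · have h2 : (Z ∩ Ioi X).Nonempty := by
      obtain ⟨z, hz⟩ := hne
      exact ⟨z, hz, (hne' z hz).resolve_left fun h => h1 ⟨z, hz, h⟩⟩
    obtain ⟨b, hb, hbX, hmin⟩ := hhi h2
    refine ⟨b, hb, b, hb, -1, Or.inr fun z hz hzu => ?_⟩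
    have hzX : X < z := (hne' z hz).resolve_left fun h => h1 ⟨z, hz, h⟩
    have := hmin z hz hzX
    rw [mem_uIcc] at hzu
    simp only [SignType.coe_neg_one] at hzu
    rcases hzu with hpr | hpr <;> linarith [hpr.1, hpr.2]

/-- The ring of functions on `ℝ^m` that are analytic at the origin. -/
def anRing (m : ℕ) : Subring ((Fin m → ℝ) → ℝ) where
  carrier := {g | AnalyticAt ℝ g 0}
  mul_mem' := fun ha hb => AnalyticAt.mul ha hb
  add_mem' := fun ha hb => AnalyticAt.add ha hb
  one_mem' := analyticAt_const
  zero_mem' := analyticAt_const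
  neg_mem' := fun ha => AnalyticAt.neg ha

/-- Evaluation at a point. -/
def evAt {m : ℕ} (x : Fin m → ℝ) : anRing m →+* ℝ :=
  (Pi.evalRingHom (fun _ => ℝ) x).comp (anRing m).subtype

@[simp] theorem evAt_apply {m : ℕ} (x : Fin m → ℝ) (g : anRing m) : evAt x g = g.1 x := rfl

/-- If finitely many analytic germs are nonzero, some line through the origin is contained in the
zero set of none of them. -/
theorem exists_direction {m : ℕ} {ι : Type} [Finite ι] {g : ι → (Fin (m + 1) → ℝ) → ℝ}
    (hg : ∀ i, AnalyticAt ℝ (g i) 0) (hnz : ∀ i, ¬ ∀ᶠ x in 𝓝 0, g i x = 0) :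
    ∃ v : Fin (m + 1) → ℝ, v ≠ 0 ∧ ∀ i, ¬ ∀ᶠ t : ℝ in 𝓝 0, g i (t • v) = 0 := by
  classical
  have := Fintype.ofFinite ι
  obtain ⟨r, hr, hball⟩ := Metric.eventually_nhds_iff_ball.1
    (eventually_all.2 fun i => (hg i).eventually_analyticAt)
  have han : ∀ i, AnalyticOnNhd ℝ (g i) (Metric.ball 0 r) := fun i x hx => hball x hx i
  have hpre : IsPreconnected (Metric.ball (0 : Fin (m + 1) → ℝ) r) :=
    (convex_ball 0 r).isPreconnected
  have h0 : (0 : Fin (m + 1) → ℝ) ∈ Metric.ball 0 r := Metric.mem_ball_self hr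
  have key : ∀ s : Finset ι, ∃ v ∈ Metric.ball (0 : Fin (m + 1) → ℝ) r, v ≠ 0 ∧
      ∀ i ∈ s, g i v ≠ 0 := by
    intro s
    induction s using Finset.induction_on with
    | empty =>
      obtain ⟨v, hv⟩ := (NormedSpace.exists_lt_norm ℝ (Fin (m + 1) → ℝ) 0)
      refine ⟨(r / (2 * ‖v‖)) • v, ?_, ?_, by simp⟩
      · rw [mem_ball_zero_iff, norm_smul, Real.norm_of_nonneg (by positivity)]
        field_simp; linarith
      · exact smul_ne_zero (by positivity) (norm_pos_iff.1 hv)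
    | insert j s hj ih =>
      obtain ⟨v, hv, hv0, hvs⟩ := ih
      have h1 : ∃ᶠ x in 𝓝 v, g j x ≠ 0 := by
        intro h
        have hpr : ∀ᶠ x in 𝓝 v, g j x = 0 := h.mono fun x hx => not_not.1 hx
        have := (han j).eqOn_zero_of_preconnected_of_eventuallyEq_zero hpre hv hpr
        exact hnz j (mem_of_superset (Metric.isOpen_ball.mem_nhds h0) this)
      have h2 : ∀ᶠ x in 𝓝 v, x ∈ Metric.ball (0 : Fin (m + 1) → ℝ) r ∧ x ≠ 0 ∧
          ∀ i ∈ s, g i x ≠ 0 := by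
        refine Filter.Eventually.and (Metric.isOpen_ball.mem_nhds hv)
          ((eventually_ne_nhds hv0).and ?_)
        refine (Finset.eventually_all s).2 fun i hi => ?_
        exact (han i v hv).continuousAt.eventually_ne (hvs i hi)
      obtain ⟨x, hx, hx1, hx2, hx3⟩ := (h1.and_eventually h2).exists
      refine ⟨x, hx1, hx2, fun i hi => ?_⟩
      rcases Finset.mem_insert.1 hi with rfl | hi
      · exact hx
      · exact hx3 i hi
  obtain ⟨v, hv, hv0, hvs⟩ := key Finset.univ
  refine ⟨v, hv0, fun i hi => hvs i (Finset.mem_univ _) ?_⟩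
  have hA : AnalyticOnNhd ℝ (fun t : ℝ => g i (t • v)) (Icc 0 1) := by
    intro t ht
    have hin : t • v ∈ Metric.ball (0 : Fin (m + 1) → ℝ) r := by
      rw [mem_ball_zero_iff] at hv ⊢
      rw [norm_smul, Real.norm_of_nonneg ht.1]
      exact (mul_le_of_le_one_left (norm_nonneg _) ht.2).trans_lt hv
    exact (han i _ hin).comp_of_eq (analyticAt_id.smul analyticAt_const) rfl
  have := hA.eqOn_zero_of_preconnected_of_eventuallyEq_zero isPreconnected_Icc
    (left_mem_Icc.2 zero_le_one) hi (right_mem_Icc.2 zero_le_one)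
  simpa using this
end MilnorFib

end

/-! ### Curve selection over a base curve -/

section

open Set Filter Topology
namespace MilnorFib
section
open Polynomial

/-- The curve selection property in dimension `m`. -/
def CurveSel (m : ℕ) : Prop :=
  ∀ {ι : Type} [Finite ι] (g : ι → (Fin m → ℝ) → ℝ) (_ : ∀ i, AnalyticAt ℝ (g i) 0)
    (σ : ι → SignType) (_ : ∃ᶠ x in 𝓝 0, ∀ i, SignType.sign (g i x) = σ i),
    ∃ γ : ℝ → Fin m → ℝ, AnalyticAt ℝ γ 0 ∧ γ 0 = 0 ∧
      ∀ᶠ t in 𝓝[>] (0 : ℝ), ∀ i, SignType.sign (g i (γ t)) = σ i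

theorem analyticAt_map_coeff {m : ℕ} (p : (anRing m)[X]) {γ : ℝ → Fin m → ℝ}
    (hγ : AnalyticAt ℝ γ 0) (hγ0 : γ 0 = 0) (i : ℕ) :
    AnalyticAt ℝ (fun t => (p.map (evAt (γ t))).coeff i) 0 := by
  simp only [coeff_map, evAt_apply]
  exact AnalyticAt.comp_of_eq (p.coeff i).2 hγ hγ0

/-- Curve selection for polynomials with analytic coefficients, over a given base curve along
which the sign conditions can be realized. -/
theorem select_over_curve {m : ℕ} {ι : Type} [Finite ι] (p : ι → (anRing m)[X])
    (hp : ∀ i, (p i).Monic) (hp0 : ∀ i, ∃ d : ℕ, (p i).map (evAt 0) = X ^ d) (τ : ι → SignType)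
    {γ : ℝ → Fin m → ℝ} (hγ : AnalyticAt ℝ γ 0) (hγ0 : γ 0 = 0)
    (h : ∀ᶠ t in 𝓝[>] (0 : ℝ), ∃ x : ℝ, ∀ i, SignType.sign (((p i).map (evAt (γ t))).eval x) = τ i) :
    ∃ k : ℕ, 0 < k ∧ ∃ c : ℝ → ℝ, AnalyticAt ℝ c 0 ∧ c 0 = 0 ∧
      ∀ᶠ s in 𝓝[>] (0 : ℝ), ∀ i,
        SignType.sign (((p i).map (evAt (γ (s ^ k)))).eval (c s)) = τ i := by
  classical
  have := Fintype.ofFinite ι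
  let q : (anRing m)[X] := ∏ i, p i
  have hq : q.Monic := monic_prod_of_monic _ _ fun i _ => hp i
  let e : ℝ →+* ℂ := Complex.ofRealHom
  obtain ⟨k, hk, R, hR, hPR⟩ := puiseux q.natDegree (P := fun t => (q.map (evAt (γ t))).map e)
    (fun i => by
      simp only [coeff_map e]
      exact (Complex.ofRealCLM.analyticAt _).comp (analyticAt_map_coeff q hγ hγ0 i))
    (fun t => (hq.map _).map _)
    (fun t => by rw [(hq.map _).natDegree_map, hq.natDegree_map])
  have hroot0 : ∀ ρ ∈ R, ρ 0 = 0 := by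
    intro ρ hρ
    have h1 := hPR.self_of_nhds
    simp only [zero_pow hk.ne', hγ0, q, Polynomial.map_prod] at h1
    have h2 : eval (ρ 0) (R.map fun ρ => X - C (ρ 0)).prod = 0 := by
      rw [eval_list_prod, List.prod_eq_zero_iff, List.map_map]
      exact List.mem_map.2 ⟨ρ, hρ, by simp⟩
    rw [← h1, eval_prod, Finset.prod_eq_zero_iff] at h2
    obtain ⟨i, -, hi⟩ := h2
    obtain ⟨d, hd⟩ := hp0 i
    rw [hd] at hi
    simp only [Polynomial.map_pow, map_X, eval_pow, eval_X] at hi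
    exact eq_zero_of_pow_eq_zero hi
  -- the sample functions; the zero function is added to the real parts of the roots
  let R' : List (ℝ → ℂ) := (fun _ => 0) :: R
  have hR' : ∀ ρ ∈ R', AnalyticAt ℝ ρ 0 ∧ ρ 0 = 0 := by
    intro ρ hρ
    rcases List.mem_cons.1 hρ with rfl | hρ
    · exact ⟨analyticAt_const, rfl⟩
    · exact ⟨hR ρ hρ, hroot0 ρ hρ⟩
  let cand : {ρ // ρ ∈ R'} × {ρ // ρ ∈ R'} × SignType → ℝ → ℝ := fun j s =>
    ((j.1.1 s).re + (j.2.1.1 s).re) / 2 + (j.2.2 : ℝ) * s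
  have hre : ∀ ρ : {ρ // ρ ∈ R'}, AnalyticAt ℝ (fun s => (ρ.1 s).re) 0 := fun ρ =>
    (Complex.reCLM.analyticAt _).comp (hR' ρ.1 ρ.2).1
  have hcand : ∀ j, AnalyticAt ℝ (cand j) 0 := fun j => by
    simp only [cand, div_eq_mul_inv]
    exact ((((hre _).add (hre _)).mul analyticAt_const)).add (analyticAt_const.mul analyticAt_id)
  have hcand0 : ∀ j, cand j 0 = 0 := fun j => by
    simp [cand, (hR' j.1.1 j.1.2).2, (hR' j.2.1.1 j.2.1.2).2]
  have hpow : Tendsto (fun s : ℝ => s ^ k) (𝓝[>] 0) (𝓝[>] 0) := by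
    refine tendsto_nhdsWithin_iff.2 ⟨(tendsto_pow_zero hk).mono_left nhdsWithin_le_nhds, ?_⟩
    filter_upwards [self_mem_nhdsWithin] with s hs using (pow_pos (mem_Ioi.1 hs) k : 0 < s ^ k)
  have hfin : Finite {ρ // ρ ∈ R'} := (List.finite_toSet R').to_subtype
  have hev : ∀ᶠ s in 𝓝[>] (0 : ℝ), ∃ j, ∀ i,
      SignType.sign (((p i).map (evAt (γ (s ^ k)))).eval (cand j s)) = τ i := by
    filter_upwards [hpow.eventually h, hPR.filter_mono nhdsWithin_le_nhds, self_mem_nhdsWithin]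
      with s hs hPs hs0
    obtain ⟨x, hx⟩ := hs
    let Z : Set ℝ := range fun ρ : {ρ // ρ ∈ R'} => (ρ.1 s).re
    have hZroot : ∀ i z, ((p i).map (evAt (γ (s ^ k)))).eval z = 0 → z ∈ Z := by
      intro i z hz
      have h1 : (((q.map (evAt (γ (s ^ k)))).map e)).eval (e z) = 0 := by
        rw [eval_map_apply]
        simp only [q, Polynomial.map_prod, eval_prod]
        rw [Finset.prod_eq_zero (Finset.mem_univ i) hz, map_zero]
      rw [hPs, eval_list_prod, List.prod_eq_zero_iff, List.map_map] at h1
      obtain ⟨ρ, hρ, hρ'⟩ := List.mem_map.1 h1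
      refine ⟨⟨ρ, List.mem_cons_of_mem _ hρ⟩, ?_⟩
      simp only [Function.comp, eval_sub, eval_X, eval_C, sub_eq_zero] at hρ'
      simp only [← hρ']
      rfl
    obtain ⟨a, ⟨ρa, rfl⟩, b, ⟨ρb, rfl⟩, ε, hε⟩ := exists_sample (Z := Z) (finite_range _)
      ⟨_, mem_range_self ⟨fun _ => 0, List.mem_cons_self⟩⟩ x hs0
    refine ⟨(ρa, ρb, ε), fun i => ?_⟩
    rw [← hx i]
    rcases hε with hε | hε
    · simp only [cand]; rw [← hε]
    · refine (sign_eq_of_forall_ne_zero (s := uIcc x (cand (ρa, ρb, ε) s)) ordConnected_uIcc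
        (Polynomial.continuous _) (fun z hz hz0 => hε z (hZroot i z hz0) hz)
        left_mem_uIcc right_mem_uIcc).symm
  obtain ⟨j, hj⟩ := frequently_exists.1 hev.frequently
  refine ⟨k, hk, cand j, hcand j, hcand0 j, eventually_all.2 fun i => ?_⟩
  refine eventually_sign_of_frequently ?_ (hj.mono fun s hs => hs i)
  have hev : (fun s => ((p i).map (evAt (γ (s ^ k)))).eval (cand j s)) = fun s =>
      ∑ l ∈ Finset.range ((p i).natDegree + 1),
        ((p i).map (evAt (γ (s ^ k)))).coeff l * cand j s ^ l := by
    funext s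
    rw [eval_eq_sum_range, (hp i).natDegree_map]
  rw [hev]
  refine Finset.analyticAt_fun_sum _ fun l _ => AnalyticAt.mul ?_ ((hcand j).pow l)
  exact analyticAt_comp_pow (analyticAt_map_coeff (p i) hγ hγ0 l) hk
end
end MilnorFib

end

/-! ### The curve selection lemma -/

section

open Set Filter Topology
namespace MilnorFib
section
open Polynomial

/-- Curve selection when no germ vanishes identically on the first coordinate axis. -/
theorem curveSel_regular {m : ℕ} (ih : CurveSel m) {ι : Type} [Finite ι]
    (g : ι → (Fin (m + 1) → ℝ) → ℝ) (hg : ∀ i, AnalyticAt ℝ (g i) 0)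
    (hreg : ∀ i, ¬ ∀ᶠ t : ℝ in 𝓝 0, g i (Fin.cons t 0) = 0)
    (σ : ι → SignType) (hfreq : ∃ᶠ x in 𝓝 0, ∀ i, SignType.sign (g i x) = σ i) :
    ∃ γ : ℝ → Fin (m + 1) → ℝ, AnalyticAt ℝ γ 0 ∧ γ 0 = 0 ∧
      ∀ᶠ t in 𝓝[>] (0 : ℝ), ∀ i, SignType.sign (g i (γ t)) = σ i := by
  classical
  have := Fintype.ofFinite ι
  choose d a s hs ha hW using fun i => weierstrass (hg i) (hreg i)
  let p : ι → (anRing m)[X] := fun i =>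
    X ^ d i + ∑ j, C (⟨a i j, (ha i j).1⟩ : anRing m) * X ^ (j : ℕ)
  have hpm : ∀ i, (p i).Monic := fun i => monic_X_pow_add (degree_sum_fin_lt _)
  have hp0 : ∀ i, ∃ d : ℕ, (p i).map (evAt 0) = X ^ d := fun i => by
    refine ⟨d i, ?_⟩
    simp [p, Polynomial.map_sum, (ha i _).2]
  have hpe : ∀ i x y, ((p i).map (evAt x)).eval y = y ^ d i + ∑ j, a i j x * y ^ (j : ℕ) := by
    intro i x y
    simp [p, Polynomial.map_sum, eval_finsetSum]
  simp only [← hpe] at hW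
  have hW' : ∀ᶠ q : (Fin m → ℝ) × ℝ in 𝓝 0, ∀ i, SignType.sign (((p i).map (evAt q.1)).eval q.2) =
      s i * SignType.sign (g i (Fin.cons q.2 q.1)) := by
    filter_upwards [eventually_all.2 hW] with q hq i
    have h1 := hq i
    have h2 := hs i
    generalize SignType.sign (g i (Fin.cons q.2 q.1)) = A at *
    generalize SignType.sign (((p i).map (evAt q.1)).eval q.2) = B at *
    generalize s i = S at *
    clear * - h1 h2
    decide +revert
  let τ : ι → SignType := fun i => s i * σ i
  have htail : Tendsto (fun x : Fin (m + 1) → ℝ => (Fin.tail x, x 0)) (𝓝 0) (𝓝 0) := by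
    have : Continuous fun x : Fin (m + 1) → ℝ => (Fin.tail x, x 0) := by
      refine Continuous.prodMk ?_ (continuous_apply 0)
      exact continuous_pi fun i => continuous_apply i.succ
    exact this.tendsto 0
  obtain ⟨G', hG'⟩ := signDet (Finset.univ.image p)
  have hfreq' : ∃ᶠ x' : Fin m → ℝ in 𝓝 0, ∃ ν : G' → SignType,
      (∃ y : ℝ, ∀ i, SignType.sign (((p i).map (evAt x')).eval y) = τ i) ∧
        ∀ c : G', SignType.sign (c.1.1 x') = ν c := by
    have h1 := (hfreq.and_eventually (htail.eventually hW'))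
    have h2 : ∃ᶠ q : (Fin m → ℝ) × ℝ in 𝓝 0,
        ∀ i, SignType.sign (((p i).map (evAt q.1)).eval q.2) = τ i := by
      refine htail.frequently (h1.mono fun x hx i => ?_)
      rw [hx.2 i]
      dsimp only
      rw [Fin.cons_self_tail, hx.1 i]
    have h3 : Tendsto (Prod.fst : (Fin m → ℝ) × ℝ → _) (𝓝 0) (𝓝 0) := continuous_fst.tendsto 0
    exact h3.frequently (h2.mono fun q hq => ⟨_, ⟨q.2, hq⟩, fun c => rfl⟩)
  obtain ⟨ν, hν⟩ := frequently_exists.1 hfreq'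
  obtain ⟨γ', hγ', hγ'0, hγ's⟩ := ih (fun c : G' => c.1.1) (fun c => c.1.2) ν
    (hν.mono fun x hx => hx.2)
  obtain ⟨x₀, ⟨y₀, hy₀⟩, hx₀⟩ := hν.exists
  have hreal : ∀ᶠ t in 𝓝[>] (0 : ℝ), ∃ x : ℝ,
      ∀ i, SignType.sign (((p i).map (evAt (γ' t))).eval x) = τ i := by
    filter_upwards [hγ's] with t ht
    obtain ⟨h, hh⟩ := hG' (evAt x₀) (evAt (γ' t)) fun c hc => by
      rw [evAt_apply, evAt_apply, hx₀ ⟨c, hc⟩, ht ⟨c, hc⟩]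
    exact ⟨h y₀, fun i => by
      rw [← hh (p i) (Finset.mem_image_of_mem p (Finset.mem_univ i)) y₀, hy₀ i]⟩
  obtain ⟨k, hk, c, hc, hc0, hcs⟩ := select_over_curve p hpm hp0 τ hγ' hγ'0 hreal
  have hA : AnalyticAt ℝ (fun s => γ' (s ^ k)) 0 := analyticAt_comp_pow hγ' hk
  refine ⟨fun s => Fin.cons (c s) (γ' (s ^ k)), ?_, ?_, ?_⟩
  · rw [analyticAt_pi_iff]
    intro i
    refine Fin.cases ?_ (fun j => ?_) i
    · simpa using hc
    · simpa using (analyticAt_pi_iff.1 hA) j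
  · simp only [hc0, zero_pow hk.ne', hγ'0]
    ext i
    refine Fin.cases ?_ (fun j => ?_) i <;> simp
  · have hlim : Tendsto (fun s => (γ' (s ^ k), c s)) (𝓝[>] 0) (𝓝 0) := by
      have := (hA.continuousAt.prodMk hc.continuousAt).tendsto
      simp only [zero_pow hk.ne', hγ'0, hc0] at this
      exact this.mono_left nhdsWithin_le_nhds
    filter_upwards [hcs, hlim.eventually (eventually_all.2 hW)] with t h1 h2 i
    rw [h2 i, h1 i]
    simp only [τ]
    have h2 := hs i
    generalize s i = S at *
    generalize σ i = B at *
    clear * - h2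
    decide +revert

/-- **Curve selection lemma**: if a sign condition on finitely many germs of real analytic
functions is realized arbitrarily close to the origin, it is realized along an analytic curve
starting at the origin. -/
theorem curveSel (m : ℕ) : CurveSel m := by
  induction m with
  | zero =>
    intro ι _ g hg σ h
    obtain ⟨x, hx⟩ := h.exists
    refine ⟨fun _ => 0, analyticAt_const, rfl, Eventually.of_forall fun t i => ?_⟩
    rw [← hx i, Subsingleton.elim x 0]
  | succ m ih =>
    intro ι _ g hg σ h
    let I := {i // ¬ ∀ᶠ x in 𝓝 0, g i x = 0}
    obtain ⟨v, hv, hvg⟩ := exists_direction (ι := I) (g := fun i => g i.1) (fun i => hg i.1)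
      fun i => i.2
    let e₁ : Fin (m + 1) → ℝ := Fin.cons 1 0
    have he₁ : e₁ ≠ 0 := fun h => by simpa [e₁] using congrFun h 0
    obtain ⟨T, hT⟩ := SeparatingDual.exists_continuousLinearEquiv_apply_eq (R := ℝ) he₁ hv
    have hgT : ∀ i, AnalyticAt ℝ (fun x => g i (T x)) 0 := fun i =>
      (hg i).comp_of_eq (T.toContinuousLinearMap.analyticAt 0) (map_zero T)
    have hTs : Tendsto T.symm (𝓝 0) (𝓝 0) := by
      simpa using T.symm.continuous.tendsto 0
    obtain ⟨γ, hγ, hγ0, hγs⟩ := curveSel_regular ih (fun (i : I) x => g i.1 (T x))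
      (fun i => hgT i.1) (fun i => by
        have : ∀ t : ℝ, T (Fin.cons t 0) = t • v := fun t => by
          rw [← hT, ← map_smul]
          congr 1
          ext j
          refine Fin.cases ?_ (fun j => ?_) j <;> simp [e₁]
        simpa only [this] using hvg i)
      (fun i => σ i.1) (hTs.frequently (h.mono fun x hx i => by simpa using hx i.1))
    have hlim : Tendsto (fun t => T (γ t)) (𝓝[>] 0) (𝓝 0) := by
      have := (T.continuous.continuousAt.comp hγ.continuousAt).tendsto
      simp only [Function.comp, hγ0, map_zero] at this
      exact this.mono_left nhdsWithin_le_nhds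
    refine ⟨fun t => T (γ t), (T.toContinuousLinearMap.analyticAt _).comp hγ,
      by simp [hγ0], ?_⟩
    refine eventually_all.2 fun i => ?_
    by_cases hi : ∀ᶠ x in 𝓝 0, g i x = 0
    · obtain ⟨x, hx, hx'⟩ := (h.and_eventually hi).exists
      have hσ : σ i = 0 := by rw [← hx i, hx', sign_zero]
      filter_upwards [hlim.eventually hi] with t ht
      rw [ht, hσ, sign_zero]
    · exact hγs.mono fun t ht => ht ⟨i, hi⟩
end
end MilnorFib

end

/-! ### Osgood's lemma -/

section

open Set Filter Topology
namespace MilnorFib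
section
open MeasureTheory Complex

theorem norm_torusMap {n : ℕ} {r : ℝ} (hr : 0 < r) (θ : Fin n → ℝ) (i : Fin n) :
    ‖torusMap 0 (fun _ => r) θ i‖ = r := by
  simp [torusMap, abs_of_pos hr]

theorem continuous_torusMap {n : ℕ} (r : ℝ) : Continuous (torusMap (0 : Fin n → ℂ) fun _ => r) := by
  unfold torusMap; fun_prop

theorem torusMap_sub_ne {n : ℕ} {r : ℝ} (hr : 0 < r) (θ : Fin n → ℝ) {z : Fin n → ℂ}
    (hz : ∀ i, ‖z i‖ < r) (i : Fin n) : torusMap 0 (fun _ => r) θ i - z i ≠ 0 := by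
  intro h
  have := norm_torusMap hr θ i
  rw [sub_eq_zero.1 h] at this
  exact (hz i).ne this

theorem continuous_f_torusMap {n : ℕ} {r : ℝ} (hr : 0 < r) {f : (Fin n → ℂ) → ℂ}
    (hf : ∀ w : Fin n → ℂ, (∀ i, ‖w i‖ ≤ r) → DifferentiableAt ℂ f w) :
    Continuous fun θ => f (torusMap 0 (fun _ => r) θ) :=
  continuous_iff_continuousAt.2 fun θ =>
    ContinuousAt.comp (hf _ fun i => (norm_torusMap hr θ i).le).continuousAt
      (continuous_torusMap r).continuousAt

/-- Cauchy's integral formula on a polydisc. -/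
theorem cauchy_torus {r : ℝ} (hr : 0 < r) (n : ℕ) : ∀ {f : (Fin n → ℂ) → ℂ}
    (_ : ∀ w : Fin n → ℂ, (∀ i, ‖w i‖ ≤ r) → DifferentiableAt ℂ f w) {z : Fin n → ℂ}
    (_ : ∀ i, ‖z i‖ < r),
    torusIntegral (fun w => (∏ i, (w i - z i)⁻¹) * f w) 0 (fun _ => r) =
      (2 * Real.pi * I) ^ n * f z := by
  induction n with
  | zero =>
    intro f hf z hz
    rw [torusIntegral_dim0]
    simp [Subsingleton.elim z 0]
  | succ n ih =>
    intro f hf z hz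
    have hintg : TorusIntegrable (fun w => (∏ i, (w i - z i)⁻¹) * f w) 0 (fun _ => r) := by
      refine Continuous.integrableOn_Icc ?_
      refine Continuous.mul ?_ (continuous_f_torusMap hr hf)
      refine continuous_finsetProd _ fun i _ => Continuous.inv₀ ?_ fun θ => torusMap_sub_ne hr θ hz i
      exact ((continuous_apply i).comp (continuous_torusMap r)).sub continuous_const
    rw [torusIntegral_succ hintg]
    have hcons : ∀ x : ℂ, ‖x‖ ≤ r → ∀ y : Fin n → ℂ, (∀ i, ‖y i‖ ≤ r) →
        ∀ i, ‖(Fin.cons x y : Fin (n + 1) → ℂ) i‖ ≤ r := by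
      intro x hx y hy i
      refine Fin.cases ?_ (fun j => ?_) i
      · simpa using hx
      · simpa using hy j
    have hc1 : ∀ (x : ℂ) (y : Fin n → ℂ),
        DifferentiableAt ℂ (fun y : Fin n → ℂ => (Fin.cons x y : Fin (n + 1) → ℂ)) y := by
      intro x y
      rw [differentiableAt_pi]
      intro i
      refine Fin.cases ?_ (fun j => ?_) i
      · simp
      · simpa using differentiableAt_apply j y
    have hc2 : ∀ (x : ℂ) (y : Fin n → ℂ),
        DifferentiableAt ℂ (fun x : ℂ => (Fin.cons x y : Fin (n + 1) → ℂ)) x := by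
      intro x y
      rw [differentiableAt_pi]
      intro i
      refine Fin.cases ?_ (fun j => ?_) i
      · simp
      · simp
    have hinner : ∀ x ∈ Metric.sphere (0 : ℂ) r,
        torusIntegral (fun y => (∏ i, ((Fin.cons x y : Fin (n + 1) → ℂ) i - z i)⁻¹) *
          f (Fin.cons x y)) ((0 : Fin (n + 1) → ℂ) ∘ Fin.succ)
            ((fun _ : Fin (n + 1) => r) ∘ Fin.succ) =
          (2 * Real.pi * I) ^ n * ((x - z 0)⁻¹ * f (Fin.cons x (Fin.tail z))) := by
      intro x hx
      have hx' : ‖x‖ ≤ r := by simpa using hx.le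
      have h1 := ih (f := fun y => f (Fin.cons x y)) (fun w hw =>
        DifferentiableAt.comp (g := f) w (hf _ (hcons x hx' w hw)) (hc1 x w))
        (z := Fin.tail z) (fun i => hz i.succ)
      have h2 : (fun y => (∏ i, ((Fin.cons x y : Fin (n + 1) → ℂ) i - z i)⁻¹) *
          f (Fin.cons x y)) = fun y => (x - z 0)⁻¹ *
            ((∏ i, (y i - Fin.tail z i)⁻¹) * f (Fin.cons x y)) := by
        funext y
        rw [Fin.prod_univ_succ]
        simp [Fin.tail, mul_assoc]
      rw [h2, torusIntegral_const_mul]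
      have h3 : ((0 : Fin (n + 1) → ℂ) ∘ Fin.succ) = (0 : Fin n → ℂ) := rfl
      have h4 : ((fun _ : Fin (n + 1) => r) ∘ Fin.succ) = fun _ : Fin n => r := rfl
      rw [h3, h4, h1]; ring
    rw [Pi.zero_apply, circleIntegral.integral_congr hr.le hinner]
    have hz' : z 0 ∈ Metric.ball (0 : ℂ) r := by simpa using hz 0
    have hd : ∀ x ∈ Metric.closedBall (0 : ℂ) r,
        DifferentiableAt ℂ (fun x => f (Fin.cons x (Fin.tail z))) x := fun x hx =>
      DifferentiableAt.comp (g := f) x (hf _ (hcons x (by simpa using hx) _ fun i => (hz i.succ).le))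
        (hc2 x _)
    have hC := circleIntegral_sub_inv_smul_of_differentiable_on_off_countable countable_empty hz'
      (f := fun x => f (Fin.cons x (Fin.tail z)))
      (fun x hx => (hd x hx).continuousAt.continuousWithinAt)
      (fun x hx => hd x (Metric.ball_subset_closedBall hx.1))
    simp only [smul_eq_mul] at hC
    rw [circleIntegral.integral_const_mul, hC, Fin.cons_self_tail, pow_succ]
    ring

/-- Osgood's lemma at the origin of `ℂ^n` with the sup norm. -/
theorem osgood_pi {n : ℕ} {f : (Fin n → ℂ) → ℂ} (hf : ∀ᶠ w in 𝓝 0, DifferentiableAt ℂ f w) :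
    AnalyticAt ℂ f 0 := by
  obtain ⟨r₀, hr₀, hball⟩ := Metric.eventually_nhds_iff_ball.1 hf
  let r := r₀ / 2
  have hr : 0 < r := half_pos hr₀
  have hf' : ∀ w : Fin n → ℂ, (∀ i, ‖w i‖ ≤ r) → DifferentiableAt ℂ f w := fun w hw => by
    refine hball w ?_
    rw [mem_ball_zero_iff]
    exact ((pi_norm_le_iff_of_nonneg hr.le).2 hw).trans_lt (half_lt_self hr₀)
  let K : Set (Fin n → ℝ) := Icc (0 : Fin n → ℝ) fun _ => 2 * Real.pi
  have hK : CompactSpace K := isCompact_iff_compactSpace.1 isCompact_Icc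
  let A : Fin n → C(K, ℂ) := fun i =>
    ⟨fun θ => torusMap 0 (fun _ => r) θ.1 i,
      (continuous_apply i).comp ((continuous_torusMap r).comp continuous_subtype_val)⟩
  let J : (Fin n → ℝ) → ℂ := fun θ => (∏ i, ((r : ℝ) : ℂ) * exp (θ i * I) * I) *
    f (torusMap 0 (fun _ => r) θ)
  have hJ : Continuous J := by
    refine Continuous.mul ?_ (continuous_f_torusMap hr hf')
    fun_prop
  obtain ⟨B, hB⟩ : ∃ B, ∀ θ : K, ‖J θ‖ ≤ B := by
    obtain ⟨B, hB⟩ := (isCompact_Icc (a := (0 : Fin n → ℝ)) (b := fun _ => 2 * Real.pi)).exists_bound_of_continuousOn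
      hJ.continuousOn
    exact ⟨B, fun θ => hB θ.1 θ.2⟩
  let μ : Measure K := Measure.comap Subtype.val volume
  have hμ : IsFiniteMeasure μ := by
    refine ⟨?_⟩
    rw [(MeasurableEmbedding.subtype_coe measurableSet_Icc).comap_apply]
    refine (measure_mono ?_).trans_lt (measure_Icc_lt_top (a := (0 : Fin n → ℝ)) (b := fun _ => 2 * Real.pi))
    rintro _ ⟨θ, -, rfl⟩
    exact θ.2
  have hintg : ∀ φ : C(K, ℂ), Integrable (fun θ : K => J θ * φ θ) μ := fun φ => by
    have hc : Continuous fun θ : K => J θ * φ θ :=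
      (hJ.comp continuous_subtype_val).mul φ.continuous
    exact hc.integrable_of_hasCompactSupport (HasCompactSupport.of_compactSpace _)
  let Λ₀ : C(K, ℂ) →ₗ[ℂ] ℂ :=
    { toFun := fun φ => ∫ θ : K, J θ * φ θ ∂μ
      map_add' := fun φ ψ => by
        rw [← integral_add (hintg φ) (hintg ψ)]
        simp [mul_add]
      map_smul' := fun c φ => by
        simp only [ContinuousMap.smul_apply, smul_eq_mul, RingHom.id_apply]
        rw [← integral_const_mul]
        congr 1; funext θ; ring }
  let Λ : C(K, ℂ) →L[ℂ] ℂ := Λ₀.mkContinuous (B * μ.real univ) fun φ => by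
    have : ‖Λ₀ φ‖ ≤ (B * ‖φ‖) * μ.real univ := by
      refine norm_integral_le_of_norm_le_const (Eventually.of_forall fun θ => ?_)
      rw [norm_mul]
      have h1 := hB θ
      exact mul_le_mul h1 (φ.norm_coe_le_norm θ) (norm_nonneg _) ((norm_nonneg _).trans h1)
    linarith
  have hΛ : ∀ φ, Λ φ = ∫ θ : K, J θ * φ θ ∂μ := fun φ => rfl
  have hunit : ∀ z : Fin n → ℂ, (∀ i, ‖z i‖ < r) → ∀ i, IsUnit (A i - z i • (1 : C(K, ℂ))) := by
    intro z hz i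
    rw [ContinuousMap.isUnit_iff_forall_ne_zero]
    intro θ
    simpa [A] using torusMap_sub_ne hr θ.1 hz i
  have hformula : ∀ z : Fin n → ℂ, (∀ i, ‖z i‖ < r) →
      Λ (∏ i, Ring.inverse (A i - z i • (1 : C(K, ℂ)))) = (2 * Real.pi * I) ^ n * f z := by
    intro z hz
    rw [← cauchy_torus hr n hf' hz, hΛ, torusIntegral]
    have h1 : ∀ θ : K, (∏ i, Ring.inverse (A i - z i • (1 : C(K, ℂ)))) θ =
        ∏ i, (torusMap 0 (fun _ => r) θ.1 i - z i)⁻¹ := by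
      intro θ
      rw [ContinuousMap.prod_apply]
      refine Finset.prod_congr rfl fun i _ => ?_
      have h2 := Ring.mul_inverse_cancel _ (hunit z hz i)
      have h3 := congrArg (fun φ : C(K, ℂ) => φ θ) h2
      simp only [ContinuousMap.mul_apply, ContinuousMap.one_apply] at h3
      rw [eq_comm, inv_eq_of_mul_eq_one_right]
      simpa [A] using h3
    simp only [h1]
    rw [← integral_subtype_comap measurableSet_Icc]
    congr 1; funext θ
    simp only [J, smul_eq_mul]; ring
  have han : AnalyticAt ℂ (fun z : Fin n → ℂ =>
      Λ (∏ i, Ring.inverse (A i - z i • (1 : C(K, ℂ))))) 0 := by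
    refine (Λ.analyticAt _).comp ?_
    refine Finset.analyticAt_fun_prod _ fun i _ => ?_
    obtain ⟨u, hu⟩ := hunit 0 (fun _ => by simpa using hr) i
    have h1 := analyticAt_inverse (𝕜 := ℂ) u
    rw [hu] at h1
    refine h1.comp (g := Ring.inverse) (f := fun z : Fin n → ℂ => A i - z i • (1 : C(K, ℂ))) ?_
    refine analyticAt_const.fun_sub (AnalyticAt.fun_smul ?_ analyticAt_const)
    exact (ContinuousLinearMap.proj (R := ℂ) (φ := fun _ : Fin n => ℂ) i).analyticAt 0
  have h2pi : ((2 : ℂ) * Real.pi * I) ^ n ≠ 0 := pow_ne_zero _ two_pi_I_ne_zero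
  have hfin : AnalyticAt ℂ (fun z : Fin n → ℂ => ((2 * Real.pi * I) ^ n)⁻¹ *
      Λ (∏ i, Ring.inverse (A i - z i • (1 : C(K, ℂ))))) 0 := analyticAt_const.mul han
  refine hfin.congr ?_
  have hnear : ∀ᶠ z : Fin n → ℂ in 𝓝 0, ∀ i, ‖z i‖ < r := by
    filter_upwards [Metric.ball_mem_nhds (0 : Fin n → ℂ) hr] with z hz i
    exact (norm_le_pi_norm z i).trans_lt (by simpa using hz)
  filter_upwards [hnear] with z hz
  rw [hformula z hz, inv_mul_cancel_left₀ h2pi]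

/-- Osgood's lemma: a function on `ℂ^n` holomorphic near the origin is analytic there. -/
theorem osgood {n : ℕ} {f : EuclideanSpace ℂ (Fin n) → ℂ}
    (hf : ∀ᶠ w in 𝓝 0, DifferentiableAt ℂ f w) : AnalyticAt ℂ f 0 := by
  let e : EuclideanSpace ℂ (Fin n) ≃L[ℂ] (Fin n → ℂ) := EuclideanSpace.equiv (Fin n) ℂ
  have h1 : AnalyticAt ℂ (fun w => f (e.symm w)) 0 := by
    refine osgood_pi ?_
    have : Tendsto e.symm (𝓝 0) (𝓝 0) := by simpa using e.symm.continuous.tendsto 0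
    filter_upwards [this.eventually hf] with w hw
    exact hw.comp w e.symm.differentiableAt
  have h2 := AnalyticAt.comp_of_eq (x := (0 : EuclideanSpace ℂ (Fin n))) h1
    (e.toContinuousLinearMap.analyticAt 0) (map_zero e)
  have h3 : ((fun w => f (e.symm w)) ∘ e.toContinuousLinearMap) = f := by
    funext x
    exact congrArg f (e.symm_apply_apply x)
  rwa [h3] at h2
end
end MilnorFib

end

/-! ### Milnor's inequalities near the origin -/

section

open Set Filter Topology
namespace MilnorFib
section
open scoped ContDiff Gradient ComplexConjugate

theorem tendsto_const_mul_nhdsGT (C : ℝ) {c : ℝ} (hc : 0 < c) :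
    ∀ᶠ t in 𝓝[>] (0 : ℝ), C * t < c := by
  have : Tendsto (fun t : ℝ => C * t) (𝓝 0) (𝓝 0) := by
    simpa using (continuous_const_mul C).tendsto 0
  exact (this.eventually_lt_const hc).filter_mono nhdsWithin_le_nhds

/-- Curve selection in a finite-dimensional real normed space, for any condition `P` on the signs
of finitely many analytic functions. -/
theorem curveSel_of_finite {E : Type*} [NormedAddCommGroup E] [NormedSpace ℝ E]
    [FiniteDimensional ℝ E] {ι : Type} [Finite ι] (g : ι → E → ℝ)
    (hg : ∀ i, AnalyticAt ℝ (g i) 0) (P : (ι → SignType) → Prop)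
    (h : ∃ᶠ x in 𝓝 (0 : E), P fun i => SignType.sign (g i x)) :
    ∃ γ : ℝ → E, AnalyticAt ℝ γ 0 ∧ γ 0 = 0 ∧
      ∀ᶠ t in 𝓝[>] (0 : ℝ), P fun i => SignType.sign (g i (γ t)) := by
  have h1 : ∃ᶠ x in 𝓝 (0 : E), ∃ σ : ι → SignType, P σ ∧ ∀ i, SignType.sign (g i x) = σ i :=
    h.mono fun x hx => ⟨_, hx, fun _ => rfl⟩
  obtain ⟨σ, hσ⟩ := frequently_exists.1 h1
  have hP : P σ := by
    obtain ⟨x, hx⟩ := hσ.exists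
    exact hx.1
  let m := Module.finrank ℝ E
  let T : (Fin m → ℝ) ≃L[ℝ] E := ContinuousLinearEquiv.ofFinrankEq (by simp [m])
  have hT : ∀ x, AnalyticAt ℝ T x := fun x => (T : (Fin m → ℝ) →L[ℝ] E).analyticAt x
  have h2 : ∃ᶠ y in 𝓝 (0 : Fin m → ℝ), ∀ i, SignType.sign (g i (T y)) = σ i := by
    have h3 : Tendsto T.symm (𝓝 0) (𝓝 0) := by simpa using T.symm.continuous.tendsto 0
    refine h3.frequently (p := fun y => ∀ i, SignType.sign (g i (T y)) = σ i) (hσ.mono ?_)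
    intro x hx i
    simpa using hx.2 i
  obtain ⟨γ, hγ, hγ0, hγs⟩ := curveSel m (fun i y => g i (T y))
    (fun i => AnalyticAt.fun_comp (g := g i) (f := T) (by simpa using hg i) (hT 0)) σ h2
  refine ⟨fun t => T (γ t), (hT _).fun_comp hγ, by simp [hγ0], ?_⟩
  filter_upwards [hγs] with t ht
  rw [show (fun i => SignType.sign (g i (T (γ t)))) = σ from funext ht]
  exact hP

variable {E : Type*} [NormedAddCommGroup E] [InnerProductSpace ℂ E]

/-- The logarithmic radial derivative `Df(x)x / f(x)`. -/
noncomputable def mu (f : E → ℂ) (x : E) : ℂ := fderiv ℂ f x x / f x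

/-- The size `‖x‖ ‖Df(x)‖ / |f(x)|` of the logarithmic derivative. -/
noncomputable def bigM (f : E → ℂ) (x : E) : ℝ := ‖x‖ * ‖fderiv ℂ f x‖ / ‖f x‖

theorem norm_mu_le (f : E → ℂ) (x : E) : ‖mu f x‖ ≤ bigM f x := by
  rw [mu, bigM, norm_div]
  gcongr
  rw [mul_comm]
  exact (fderiv ℂ f x).le_opNorm x

variable [FiniteDimensional ℂ E]

/-- Along an analytic arc `γ(t) = t^α a(t)` on which `f(γ(t)) = t^β b(t)` does not vanish,
differentiating `f ∘ γ` shows that `α μ` is close to `β`, relative to `1 + M`. -/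
theorem curve_estimate {f : E → ℂ} (hf : AnalyticAt ℂ f 0) (hf0 : f 0 = 0) {γ : ℝ → E}
    (hγ : AnalyticAt ℝ γ 0) (hγ0 : γ 0 = 0) (hne : ∀ᶠ t in 𝓝[>] (0 : ℝ), f (γ t) ≠ 0) :
    ∃ α β C : ℝ, 0 < α ∧ 0 < β ∧ 0 < C ∧ ∀ᶠ t in 𝓝[>] (0 : ℝ),
      ‖(α : ℂ) * mu f (γ t) - β‖ ≤ C * t * (1 + bigM f (γ t)) := by
  have hφ : AnalyticAt ℝ (fun t => f (γ t)) 0 :=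
    AnalyticAt.fun_comp (g := f) (by simpa [hγ0] using hf.restrictScalars (𝕜 := ℝ)) hγ
  have hφn : ¬ ∀ᶠ t in 𝓝 (0 : ℝ), f (γ t) = 0 := fun h => by
    obtain ⟨t, h1, h2⟩ := (hne.and (h.filter_mono nhdsWithin_le_nhds)).exists
    exact h1 h2
  have hγn : ¬ ∀ᶠ t in 𝓝 (0 : ℝ), γ t = 0 := fun h => hφn <| h.mono fun t ht => by rw [ht, hf0]
  obtain ⟨α, a, ha, ha0, hγa⟩ := hγ.exists_eventuallyEq_pow_smul_nonzero_iff.2 hγn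
  obtain ⟨β, b, hb, hb0, hφb⟩ := hφ.exists_eventuallyEq_pow_smul_nonzero_iff.2 hφn
  simp only [sub_zero] at hγa hφb
  have hα : α ≠ 0 := by
    rintro rfl
    exact ha0 (by simpa [hγ0] using hγa.self_of_nhds.symm)
  have hβ : β ≠ 0 := by
    rintro rfl
    exact hb0 (by simpa [hγ0, hf0] using hφb.self_of_nhds.symm)
  -- `C` bounds both `‖a'‖ / ‖a‖` and `‖b'‖ / ‖b‖` near `0`.
  obtain ⟨C, hC0, hCa, hCb⟩ : ∃ C : ℝ, 0 < C ∧ (∀ᶠ t in 𝓝 (0 : ℝ), ‖deriv a t‖ / ‖a t‖ < C) ∧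
      ∀ᶠ t in 𝓝 (0 : ℝ), ‖deriv b t‖ / ‖b t‖ < C := by
    have h1 : ContinuousAt (fun t => ‖deriv a t‖ / ‖a t‖) 0 :=
      ha.deriv.continuousAt.norm.div ha.continuousAt.norm (norm_ne_zero_iff.2 ha0)
    have h2 : ContinuousAt (fun t => ‖deriv b t‖ / ‖b t‖) 0 :=
      hb.deriv.continuousAt.norm.div hb.continuousAt.norm (norm_ne_zero_iff.2 hb0)
    refine ⟨max (‖deriv a 0‖ / ‖a 0‖) (‖deriv b 0‖ / ‖b 0‖) + 1, by positivity, ?_, ?_⟩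
    · exact h1.eventually_lt_const (lt_of_le_of_lt (le_max_left _ _) (lt_add_one _))
    · exact h2.eventually_lt_const (lt_of_le_of_lt (le_max_right _ _) (lt_add_one _))
  refine ⟨α, β, C, by positivity, by positivity, hC0, ?_⟩
  have hfd : ∀ᶠ t in 𝓝 (0 : ℝ), DifferentiableAt ℂ f (γ t) := by
    have h1 : ∀ᶠ x in 𝓝 (γ 0), DifferentiableAt ℂ f x := by
      rw [hγ0]; exact hf.eventually_analyticAt.mono fun x hx => hx.differentiableAt
    exact hγ.continuousAt.eventually h1
  have hev := hfd.and (hγa.eventually_nhds.and (hφb.eventually_nhds.and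
    (ha.eventually_analyticAt.and (hb.eventually_analyticAt.and (hCa.and (hCb.and
    ((ha.continuousAt.eventually_ne ha0).and (hb.continuousAt.eventually_ne hb0))))))))
  filter_upwards [hev.filter_mono nhdsWithin_le_nhds, hne, self_mem_nhdsWithin] with
    t ⟨hd, hγt, hφt, hat, hbt, hCat, hCbt, hat0, hbt0⟩ hnet ht
  have ht0 : (0 : ℝ) < t := ht
  have hγd : HasDerivAt γ ((α * t ^ (α - 1)) • a t + t ^ α • deriv a t) t := by
    have h1 := (hasDerivAt_pow α t).smul hat.differentiableAt.hasDerivAt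
    rw [add_comm]
    exact h1.congr_of_eventuallyEq hγt
  have hφd : HasDerivAt (fun t => f (γ t)) ((β * t ^ (β - 1)) • b t + t ^ β • deriv b t) t := by
    have h1 := (hasDerivAt_pow β t).smul hbt.differentiableAt.hasDerivAt
    rw [add_comm]
    exact h1.congr_of_eventuallyEq hφt
  have hφd' : HasDerivAt (fun t => f (γ t))
      (fderiv ℂ f (γ t) ((α * t ^ (α - 1)) • a t + t ^ α • deriv a t)) t :=
    (hd.hasFDerivAt.restrictScalars ℝ).comp_hasDerivAt t hγd
  have hEq := hφd.unique hφd'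
  have hγt' := hγt.self_of_nhds
  have hφt' := hφt.self_of_nhds
  set L := fderiv ℂ f (γ t) with hL
  have htα : t ^ α = t ^ (α - 1) * t := by rw [← pow_succ, Nat.sub_add_cancel (Nat.pos_of_ne_zero hα)]
  have htβ : t ^ β = t ^ (β - 1) * t := by rw [← pow_succ, Nat.sub_add_cancel (Nat.pos_of_ne_zero hβ)]
  -- Multiply the identity of the two derivatives by `t`.
  have hkey : (α : ℂ) * L (γ t) - β * f (γ t) =
      (t : ℂ) * ((t ^ β : ℝ) * deriv b t) - (t : ℂ) * ((t ^ α : ℝ) * L (deriv a t)) := by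
    have h2 : ((t : ℂ)) * (((β * t ^ (β - 1)) • b t + t ^ β • deriv b t)) =
        (t : ℂ) * (L ((α * t ^ (α - 1)) • a t + t ^ α • deriv a t)) := by rw [hEq]
    have h3 : ∀ (c : ℝ) (y : E), L (c • y) = (c : ℂ) * L y := fun c y => by
      rw [← Complex.coe_smul, map_smul, smul_eq_mul]
    rw [map_add, h3, h3] at h2
    rw [hφt', hγt', h3]
    simp only [Complex.real_smul] at h2 ⊢
    rw [htα, htβ] at h2 ⊢
    push_cast at h2 ⊢
    linear_combination -h2
  have hmu : (α : ℂ) * mu f (γ t) - β = ((α : ℂ) * L (γ t) - β * f (γ t)) / f (γ t) := by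
    rw [mu, ← hL]; field_simp
  have hfn : ‖f (γ t)‖ = t ^ β * ‖b t‖ := by
    rw [hφt', norm_smul, Real.norm_of_nonneg (by positivity)]
  have hγn' : ‖γ t‖ = t ^ α * ‖a t‖ := by
    rw [hγt', norm_smul, Real.norm_of_nonneg (by positivity)]
  have hapos : 0 < ‖a t‖ := norm_pos_iff.2 hat0
  have hbpos : 0 < ‖b t‖ := norm_pos_iff.2 hbt0
  have hfpos : 0 < ‖f (γ t)‖ := norm_pos_iff.2 hnet
  rw [Complex.ofReal_natCast, Complex.ofReal_natCast, hmu, norm_div, hkey, div_le_iff₀ hfpos]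
  have e1 : ‖(t : ℂ) * ((t ^ β : ℝ) * deriv b t)‖ ≤ C * t * ‖f (γ t)‖ := by
    rw [norm_mul, norm_mul, Complex.norm_real, Complex.norm_real, Real.norm_of_nonneg ht0.le,
      Real.norm_of_nonneg (by positivity), hfn]
    have := (div_lt_iff₀ hbpos).1 hCbt
    calc t * (t ^ β * ‖deriv b t‖) ≤ t * (t ^ β * (C * ‖b t‖)) := by gcongr
      _ = _ := by ring
  have e2 : ‖(t : ℂ) * ((t ^ α : ℝ) * L (deriv a t))‖ ≤ C * t * (‖γ t‖ * ‖L‖) := by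
    rw [norm_mul, norm_mul, Complex.norm_real, Complex.norm_real, Real.norm_of_nonneg ht0.le,
      Real.norm_of_nonneg (by positivity), hγn']
    have := (div_lt_iff₀ hapos).1 hCat
    calc t * (t ^ α * ‖L (deriv a t)‖) ≤ t * (t ^ α * (‖L‖ * ‖deriv a t‖)) := by
          gcongr; exact L.le_opNorm _
      _ ≤ t * (t ^ α * (‖L‖ * (C * ‖a t‖))) := by gcongr
      _ = _ := by ring
  have e3 : bigM f (γ t) * ‖f (γ t)‖ = ‖γ t‖ * ‖L‖ := by
    rw [bigM, ← hL]; field_simp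
  calc _ ≤ C * t * ‖f (γ t)‖ + C * t * (‖γ t‖ * ‖L‖) := (norm_sub_le _ _).trans (add_le_add e1 e2)
    _ = _ := by rw [← e3]; ring

theorem inner_gradient (f : E → ℂ) (x y : E) : inner ℂ (∇ f x) y = fderiv ℂ f x y := by
  simp [gradient]

theorem norm_gradient (f : E → ℂ) (x : E) : ‖∇ f x‖ = ‖fderiv ℂ f x‖ := by
  simp [gradient]

/-- The complex gradient of a holomorphic function is real analytic. -/
theorem contDiffAt_gradient {f : E → ℂ} {x : E} (hf : AnalyticAt ℂ f x) :
    ContDiffAt ℝ ω (∇ f) x := by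
  have h1 : ContDiffAt ℝ ω (fderiv ℂ f) x := (hf.fderiv.restrictScalars (𝕜 := ℝ)).contDiffAt
  let D : StrongDual ℂ E →L[ℝ] E := AddMonoidHom.toRealLinearMap
    ((InnerProductSpace.toDual ℂ E).symm : StrongDual ℂ E →+ E)
    (InnerProductSpace.toDual ℂ E).symm.continuous
  exact D.contDiff.contDiffAt.comp x h1

/-- The functions entering the curve selection arguments below are real analytic. -/
theorem contDiffAt_data {f : E → ℂ} (hf : AnalyticAt ℂ f 0) :
    ContDiffAt ℝ ω f 0 ∧ ContDiffAt ℝ ω (fun x => fderiv ℂ f x x) 0 ∧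
      ContDiffAt ℝ ω (fun x => ‖x‖ ^ 2) (0 : E) ∧
      ContDiffAt ℝ ω (fun x => ‖fderiv ℂ f x‖ ^ 2) 0 := by
  refine ⟨(hf.restrictScalars (𝕜 := ℝ)).contDiffAt, ?_, (contDiff_norm_sq ℂ).contDiffAt, ?_⟩
  · exact ((hf.fderiv.contDiffAt (n := ω)).clm_apply
      contDiffAt_id).analyticAt.restrictScalars.contDiffAt
  · simp only [← norm_gradient]
    exact (contDiffAt_gradient hf).norm_sq ℂ

/-- Near the origin the imaginary part of `μ` is small compared with `M`. -/
theorem im_mu_lt {f : E → ℂ} (hf : AnalyticAt ℂ f 0) (hf0 : f 0 = 0) :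
    ∀ᶠ x in 𝓝 (0 : E), f x ≠ 0 → 4 * (mu f x).im ^ 2 < bigM f x ^ 2 := by
  by_contra hcon
  rw [not_eventually] at hcon
  obtain ⟨hfω, hq, hN, hG⟩ := contDiffAt_data hf
  let g : Fin 2 → E → ℝ := ![fun x => ‖f x‖ ^ 2,
    fun x => 4 * (fderiv ℂ f x x * conj (f x)).im ^ 2 - ‖x‖ ^ 2 * ‖fderiv ℂ f x‖ ^ 2 * ‖f x‖ ^ 2]
  have hg : ∀ i, AnalyticAt ℝ (g i) 0 := by
    intro i
    fin_cases i
    · exact (hfω.norm_sq ℂ).analyticAt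
    · have h1 : ContDiffAt ℝ ω (fun x => conj (f x)) 0 :=
        Complex.conjCLE.contDiff.contDiffAt.comp 0 hfω
      have h2 : ContDiffAt ℝ ω (fun x => (fderiv ℂ f x x * conj (f x)).im) 0 :=
        Complex.imCLM.contDiff.contDiffAt.comp 0 (hq.mul h1)
      exact ((contDiffAt_const.mul (h2.pow 2)).sub ((hN.mul hG).mul (hfω.norm_sq ℂ))).analyticAt
  have hiff : ∀ x, f x ≠ 0 →
      g 1 x = ‖f x‖ ^ 4 * (4 * (mu f x).im ^ 2 - bigM f x ^ 2) := by
    intro x hx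
    have hx' : ‖f x‖ ≠ 0 := norm_ne_zero_iff.2 hx
    have h1 : fderiv ℂ f x x * conj (f x) = ((‖f x‖ ^ 2 : ℝ) : ℂ) * mu f x := by
      rw [Complex.ofReal_pow, ← Complex.mul_conj', mu]; field_simp
    change 4 * (fderiv ℂ f x x * conj (f x)).im ^ 2 - _ = _
    rw [h1, Complex.im_ofReal_mul, bigM]
    field_simp
  have h0 : ∀ x, SignType.sign (g 0 x) = 1 ↔ f x ≠ 0 := fun x => by
    rw [sign_eq_one_iff]; exact ⟨fun h hx => by simp [g, hx] at h, fun h => by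
      change 0 < ‖f x‖ ^ 2; positivity⟩
  obtain ⟨γ, hγ, hγ0, hγs⟩ := curveSel_of_finite g hg (fun σ => σ 0 = 1 ∧ σ 1 ≠ -1) <|
    hcon.mono fun x hx => by
      push Not at hx
      refine ⟨(h0 x).2 hx.1, ?_⟩
      rw [Ne, sign_eq_neg_one_iff, hiff x hx.1, not_lt]
      exact mul_nonneg (by positivity) (by linarith [hx.2])
  have hne : ∀ᶠ t in 𝓝[>] (0 : ℝ), f (γ t) ≠ 0 := hγs.mono fun t ht => (h0 _).1 ht.1
  obtain ⟨α, β, C, hα, hβ, hC, hest⟩ := curve_estimate hf hf0 hγ hγ0 hne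
  obtain ⟨t, hs, hest, hnet, h1, h2, ht⟩ := (hγs.and (hest.and (hne.and
    ((tendsto_const_mul_nhdsGT C (c := α / 4) (by positivity)).and
    ((tendsto_const_mul_nhdsGT C (c := β / 6) (by positivity)).and
      self_mem_nhdsWithin))))).exists
  have ht0 : (0 : ℝ) < t := ht
  have hfpos : 0 < ‖f (γ t)‖ := norm_pos_iff.2 hnet
  have hM : bigM f (γ t) ^ 2 ≤ 4 * (mu f (γ t)).im ^ 2 := by
    have h3 := hs.2
    rw [Ne, sign_eq_neg_one_iff, hiff _ hnet, not_lt] at h3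
    nlinarith [pow_pos hfpos 4, (mul_nonneg_iff_of_pos_left (pow_pos hfpos 4)).1 h3]
  have hM0 : 0 ≤ bigM f (γ t) := (norm_nonneg _).trans (norm_mu_le f _)
  set M := bigM f (γ t)
  have hIm : M ≤ 2 * |(mu f (γ t)).im| := by
    refine abs_le_of_sq_le_sq' (a := M) ?_ (by positivity) |>.2
    rw [mul_pow, sq_abs]; linarith
  have hIm2 : α * |(mu f (γ t)).im| ≤ C * t * (1 + M) := by
    refine le_trans ?_ hest
    refine le_trans (le_of_eq ?_) (Complex.abs_im_le_norm _)
    simp [abs_mul, abs_of_pos hα]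
  have hCt : 0 < C * t := by positivity
  have hb : β ≤ α * M + C * t * (1 + M) := by
    have h4 : ‖(β : ℂ)‖ ≤ ‖(α : ℂ) * mu f (γ t)‖ + ‖(α : ℂ) * mu f (γ t) - β‖ := by
      simpa using norm_sub_le ((α : ℂ) * mu f (γ t)) ((α : ℂ) * mu f (γ t) - β)
    rw [norm_mul, Complex.norm_real, Complex.norm_real, Real.norm_of_nonneg hβ.le,
      Real.norm_of_nonneg hα.le] at h4
    nlinarith [norm_mu_le f (γ t), hest]
  have hM1 : α * M ≤ 4 * (C * t) := by nlinarith
  have hM2 : M ≤ 1 := by nlinarith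
  nlinarith

/-- Near the origin, where `μ` is comparable to `M`, the size `M` is at most `1 / ‖x‖`. -/
theorem bigM_mul_norm_le {f : E → ℂ} (hf : AnalyticAt ℂ f 0) (hf0 : f 0 = 0) :
    ∀ᶠ x in 𝓝 (0 : E), f x ≠ 0 → bigM f x ^ 2 ≤ 2 * ‖mu f x‖ ^ 2 → bigM f x * ‖x‖ ≤ 1 := by
  by_contra hcon
  rw [not_eventually] at hcon
  obtain ⟨hfω, hq, hN, hG⟩ := contDiffAt_data hf
  let g : Fin 3 → E → ℝ := ![fun x => ‖f x‖ ^ 2,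
    fun x => 2 * ‖fderiv ℂ f x x‖ ^ 2 - ‖x‖ ^ 2 * ‖fderiv ℂ f x‖ ^ 2,
    fun x => (‖x‖ ^ 2) ^ 2 * ‖fderiv ℂ f x‖ ^ 2 - ‖f x‖ ^ 2]
  have hg : ∀ i, AnalyticAt ℝ (g i) 0 := by
    intro i
    fin_cases i
    · exact (hfω.norm_sq ℂ).analyticAt
    · exact ((contDiffAt_const.mul (hq.norm_sq ℂ)).sub (hN.mul hG)).analyticAt
    · exact (((hN.pow 2).mul hG).sub (hfω.norm_sq ℂ)).analyticAt
  have hiff : ∀ x, f x ≠ 0 → g 1 x = ‖f x‖ ^ 2 * (2 * ‖mu f x‖ ^ 2 - bigM f x ^ 2) ∧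
      g 2 x = ‖f x‖ ^ 2 * ((bigM f x * ‖x‖) ^ 2 - 1) := by
    intro x hx
    have hx' : ‖f x‖ ≠ 0 := norm_ne_zero_iff.2 hx
    change 2 * ‖fderiv ℂ f x x‖ ^ 2 - ‖x‖ ^ 2 * ‖fderiv ℂ f x‖ ^ 2 = _ ∧
      (‖x‖ ^ 2) ^ 2 * ‖fderiv ℂ f x‖ ^ 2 - ‖f x‖ ^ 2 = _
    rw [mu, bigM, norm_div]
    constructor <;> field_simp
  have h0 : ∀ x, SignType.sign (g 0 x) = 1 ↔ f x ≠ 0 := fun x => by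
    rw [sign_eq_one_iff]; exact ⟨fun h hx => by simp [g, hx] at h, fun h => by
      change 0 < ‖f x‖ ^ 2; positivity⟩
  obtain ⟨γ, hγ, hγ0, hγs⟩ := curveSel_of_finite g hg
    (fun σ => σ 0 = 1 ∧ σ 1 ≠ -1 ∧ σ 2 = 1) <| hcon.mono fun x hx => by
      push Not at hx
      have hx' : 0 < ‖f x‖ := norm_pos_iff.2 hx.1
      refine ⟨(h0 x).2 hx.1, ?_, ?_⟩
      · rw [Ne, sign_eq_neg_one_iff, (hiff x hx.1).1, not_lt]
        exact mul_nonneg (by positivity) (by linarith [hx.2.1])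
      · rw [sign_eq_one_iff, (hiff x hx.1).2]
        exact mul_pos (by positivity) (by nlinarith [hx.2.2])
  have hne : ∀ᶠ t in 𝓝[>] (0 : ℝ), f (γ t) ≠ 0 := hγs.mono fun t ht => (h0 _).1 ht.1
  obtain ⟨α, β, C, hα, hβ, hC, hest⟩ := curve_estimate hf hf0 hγ hγ0 hne
  have hγt : ∀ᶠ t in 𝓝[>] (0 : ℝ), ‖γ t‖ < α / (4 * (β + 1)) := by
    have h1 : ContinuousAt (fun t => ‖γ t‖) 0 := hγ.continuousAt.norm
    refine (h1.eventually_lt_const ?_).filter_mono nhdsWithin_le_nhds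
    simp only [hγ0, norm_zero]; positivity
  obtain ⟨t, hs, hest, hnet, h1, h2, hγt, ht⟩ := (hγs.and (hest.and (hne.and
    ((tendsto_const_mul_nhdsGT C (c := α / 4) (by positivity)).and
    ((tendsto_const_mul_nhdsGT C (c := 1) (by positivity)).and (hγt.and
      self_mem_nhdsWithin)))))).exists
  have ht0 : (0 : ℝ) < t := ht
  have hfpos : 0 < ‖f (γ t)‖ := norm_pos_iff.2 hnet
  have hM : bigM f (γ t) ^ 2 ≤ 2 * ‖mu f (γ t)‖ ^ 2 := by
    have h3 := hs.2.1
    rw [Ne, sign_eq_neg_one_iff, (hiff _ hnet).1, not_lt] at h3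
    linarith [(mul_nonneg_iff_of_pos_left (pow_pos hfpos 2)).1 h3]
  have hM' : 1 < (bigM f (γ t) * ‖γ t‖) ^ 2 := by
    have h3 := hs.2.2
    rw [sign_eq_one_iff, (hiff _ hnet).2] at h3
    linarith [(mul_pos_iff_of_pos_left (pow_pos hfpos 2)).1 h3]
  have hM0 : 0 ≤ bigM f (γ t) := (norm_nonneg _).trans (norm_mu_le f _)
  set M := bigM f (γ t)
  have hM3 : 1 < M * ‖γ t‖ := by
    by_contra h
    have h5 : 0 ≤ M * ‖γ t‖ := by positivity
    nlinarith
  have hmu : M ≤ 2 * ‖mu f (γ t)‖ := by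
    refine abs_le_of_sq_le_sq' (a := M) ?_ (by positivity) |>.2
    nlinarith [sq_nonneg ‖mu f (γ t)‖]
  have hCt : 0 < C * t := by positivity
  have hb : α * ‖mu f (γ t)‖ ≤ β + C * t * (1 + M) := by
    have h4 : ‖(α : ℂ) * mu f (γ t)‖ ≤ ‖(α : ℂ) * mu f (γ t) - β‖ + ‖(β : ℂ)‖ := by
      simpa using norm_add_le ((α : ℂ) * mu f (γ t) - β) (β : ℂ)
    rw [norm_mul, Complex.norm_real, Complex.norm_real, Real.norm_of_nonneg hβ.le,
      Real.norm_of_nonneg hα.le] at h4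
    linarith
  have hMb : M * α ≤ 4 * (β + 1) := by nlinarith
  rw [lt_div_iff₀ (by positivity)] at hγt
  have h6 : 0 ≤ ‖γ t‖ := norm_nonneg _
  nlinarith

end
end MilnorFib

end

/-! ### The rotating and the radial vector field -/

section

open Set Filter Topology
namespace MilnorFib
section
open scoped ContDiff Gradient ComplexConjugate

variable {E : Type*} [NormedAddCommGroup E] [InnerProductSpace ℂ E]

/-- The rotating field: for a logarithmic gradient `g`, it is the multiple of the component of
`i g` real-orthogonal to `x` along which the argument of `f` grows at unit speed. -/
noncomputable def rotField (g x : E) : E :=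
  ((‖x‖ ^ 2 * ‖g‖ ^ 2 - (inner ℂ g x).im ^ 2)⁻¹ : ℝ) •
    ((‖x‖ ^ 2 : ℝ) • (Complex.I • g) - (inner ℂ g x).im • x)

/-- The denominator normalizing `radField`. -/
noncomputable def radDen (g x : E) : ℝ :=
  (1 + ‖x‖ ^ 2 * ‖g‖ ^ 2)⁻¹ * (inner ℂ g x).re ^ 2 + ‖x‖ ^ 2 * ‖g‖ ^ 2 - ‖inner ℂ g x‖ ^ 2

/-- The radial field: a combination of `g` and of the component of `x` complex-orthogonal to `g`,
normalized to have unit logarithmic radial speed. The weight `(1 + ‖x‖²‖g‖²)⁻¹` in front of `g`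
keeps the logarithmic growth of `|f|` under control. -/
noncomputable def radField (g x : E) : E :=
  (‖x‖ ^ 2 / radDen g x) • (((1 + ‖x‖ ^ 2 * ‖g‖ ^ 2)⁻¹ * (inner ℂ g x).re) • g +
    ((‖g‖ ^ 2 : ℝ) • x - inner ℂ g x • g))

theorem inner_real_smul (r : ℝ) (x y : E) : inner ℂ x (r • y) = (r : ℂ) * inner ℂ x y := by
  rw [← Complex.coe_smul, inner_smul_right]

theorem inner_self_ofReal (x : E) : inner ℂ x x = ((‖x‖ ^ 2 : ℝ) : ℂ) := by
  rw [inner_self_eq_norm_sq_to_K]; norm_cast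

theorem re_inner_rotField (g x : E) : (inner ℂ x (rotField g x)).re = 0 := by
  rw [rotField, inner_real_smul, inner_sub_right, inner_real_smul, inner_real_smul,
    inner_smul_right, ← inner_conj_symm x g, inner_self_ofReal, Complex.re_ofReal_mul]
  simp [-Complex.ofReal_pow, -inner_conj_symm]
  right; ring

theorem inner_rotField {g x : E} (h : 4 * (inner ℂ g x).im ^ 2 < ‖x‖ ^ 2 * ‖g‖ ^ 2) :
    ∃ p : ℝ, |p| ≤ 1 ∧ inner ℂ g (rotField g x) = Complex.I + p := by
  set D := ‖x‖ ^ 2 * ‖g‖ ^ 2 - (inner ℂ g x).im ^ 2 with hD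
  have hDpos : 0 < D := by nlinarith [sq_nonneg (inner ℂ g x).im]
  have hcs : (inner ℂ g x).re ^ 2 + (inner ℂ g x).im ^ 2 ≤ ‖x‖ ^ 2 * ‖g‖ ^ 2 := by
    have h1 := norm_inner_le_norm (𝕜 := ℂ) g x
    have h2 : ‖inner ℂ g x‖ ^ 2 ≤ (‖g‖ * ‖x‖) ^ 2 := by gcongr
    rw [← Complex.normSq_eq_norm_sq, Complex.normSq_apply] at h2
    nlinarith
  refine ⟨-((inner ℂ g x).im * (inner ℂ g x).re) / D, ?_, ?_⟩
  · rw [abs_div, abs_of_pos hDpos, div_le_one hDpos, abs_le]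
    constructor <;> nlinarith [sq_nonneg ((inner ℂ g x).im - (inner ℂ g x).re),
      sq_nonneg ((inner ℂ g x).im + (inner ℂ g x).re)]
  · rw [rotField, ← hD, inner_real_smul, inner_sub_right, inner_real_smul, inner_real_smul,
      inner_smul_right, inner_self_ofReal]
    apply Complex.ext
    · simp [-Complex.ofReal_pow]
      ring
    · simp [-Complex.ofReal_pow]
      rw [inv_mul_eq_div, div_eq_one_iff_eq hDpos.ne', hD]
      simp
      ring

theorem radDen_pos {g x : E} (h : 4 * (inner ℂ g x).im ^ 2 < ‖x‖ ^ 2 * ‖g‖ ^ 2) :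
    0 < radDen g x := by
  have hcs : ‖inner ℂ g x‖ ^ 2 ≤ ‖x‖ ^ 2 * ‖g‖ ^ 2 := by
    have h2 : ‖inner ℂ g x‖ ^ 2 ≤ (‖g‖ * ‖x‖) ^ 2 := by
      gcongr; exact norm_inner_le_norm (𝕜 := ℂ) g x
    linarith [mul_pow ‖g‖ ‖x‖ 2]
  have hσ : 0 < (1 + ‖x‖ ^ 2 * ‖g‖ ^ 2)⁻¹ := by positivity
  rw [radDen]
  rcases hcs.lt_or_eq with hlt | heq
  · have : 0 ≤ (1 + ‖x‖ ^ 2 * ‖g‖ ^ 2)⁻¹ * (inner ℂ g x).re ^ 2 := by positivity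
    linarith
  · have h1 : 0 < (inner ℂ g x).re ^ 2 := by
      rw [← Complex.normSq_eq_norm_sq, Complex.normSq_apply] at heq
      nlinarith [sq_nonneg (inner ℂ g x).im]
    have := mul_pos hσ h1
    linarith

theorem re_inner_radField {g x : E} (h : 4 * (inner ℂ g x).im ^ 2 < ‖x‖ ^ 2 * ‖g‖ ^ 2) :
    (inner ℂ x (radField g x)).re = ‖x‖ ^ 2 := by
  have hD := radDen_pos h
  have h1 : inner ℂ x (radField g x) = ((‖x‖ ^ 2 / radDen g x : ℝ) : ℂ) *
      ((((1 + ‖x‖ ^ 2 * ‖g‖ ^ 2)⁻¹ * (inner ℂ g x).re : ℝ) : ℂ) * conj (inner ℂ g x) +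
        (((‖g‖ ^ 2 * ‖x‖ ^ 2 : ℝ) : ℂ) - ((‖inner ℂ g x‖ ^ 2 : ℝ) : ℂ))) := by
    rw [radField, inner_real_smul, inner_add_right, inner_sub_right, inner_real_smul,
      inner_real_smul, inner_smul_right, ← inner_conj_symm x g, inner_self_ofReal,
      Complex.mul_conj']
    push_cast; ring
  rw [h1, ← Complex.ofReal_sub, Complex.re_ofReal_mul, Complex.add_re, Complex.re_ofReal_mul,
    Complex.ofReal_re, Complex.conj_re, div_mul_eq_mul_div, div_eq_iff hD.ne', radDen]
  ring

theorem inner_radField {g x : E} (h : 4 * (inner ℂ g x).im ^ 2 < ‖x‖ ^ 2 * ‖g‖ ^ 2)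
    (hpr : ‖x‖ ^ 2 * ‖g‖ ^ 2 ≤ 2 * ‖inner ℂ g x‖ ^ 2 → ‖x‖ * ‖g‖ * ‖x‖ ≤ 1) :
    ∃ q : ℝ, |q| ≤ 1 + 2 / ‖x‖ ∧ inner ℂ g (radField g x) = q := by
  have hD := radDen_pos h
  set s := (1 + ‖x‖ ^ 2 * ‖g‖ ^ 2)⁻¹ with hs
  have hs0 : 0 < s := by positivity
  have hs1 : s * (1 + ‖x‖ ^ 2 * ‖g‖ ^ 2) = 1 := inv_mul_cancel₀ (by positivity)
  have hx : 0 < ‖x‖ := by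
    rcases (norm_nonneg x).eq_or_lt with h0 | h0
    · rw [← h0] at h; nlinarith [sq_nonneg (inner ℂ g x).im]
    · exact h0
  set M := ‖x‖ * ‖g‖ with hM
  have hMM : ‖x‖ ^ 2 * ‖g‖ ^ 2 = M ^ 2 := by rw [hM]; ring
  have hM0 : 0 ≤ M := by positivity
  set ρ := (inner ℂ g x).re with hρ
  have hnorm : ‖inner ℂ g x‖ ^ 2 = ρ ^ 2 + (inner ℂ g x).im ^ 2 := by
    rw [← Complex.normSq_eq_norm_sq, Complex.normSq_apply]; ring
  have hcs : ‖inner ℂ g x‖ ≤ M := by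
    rw [hM, mul_comm]; exact norm_inner_le_norm (𝕜 := ℂ) g x
  have hρM : |ρ| ≤ M := (Complex.abs_re_le_norm _).trans hcs
  have hden : radDen g x = s * ρ ^ 2 + M ^ 2 - ‖inner ℂ g x‖ ^ 2 := by
    rw [radDen, ← hs, hMM]
  refine ⟨M ^ 2 * s * ρ / radDen g x, ?_, ?_⟩
  · rw [abs_div, abs_of_pos hD, div_le_iff₀ hD, abs_mul, abs_of_nonneg (by positivity)]
    rw [hMM] at h hpr hs1
    by_cases hc : M ^ 2 ≤ 2 * ‖inner ℂ g x‖ ^ 2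
    · -- Here `ρ² ≥ M² / 4` and `M ≤ 1 / ‖x‖`.
      have h1 := hpr hc
      have h2 : M ≤ 2 * |ρ| := by
        refine (abs_le_of_sq_le_sq' (b := 2 * |ρ|) ?_ (by positivity)).2
        rw [mul_pow 2 |ρ|, sq_abs]; nlinarith
      have h3 : M * (2 * |ρ|) ≤ 2 / ‖x‖ * (2 * |ρ|) / 2 := by
        have : M ≤ 1 / ‖x‖ := by rw [le_div_iff₀ hx]; exact h1
        calc M * (2 * |ρ|) ≤ 1 / ‖x‖ * (2 * |ρ|) := by gcongr
          _ = _ := by ring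
      have h4 : s * ρ ^ 2 ≤ radDen g x := by
        rw [hden]
        have : ‖inner ℂ g x‖ ^ 2 ≤ M ^ 2 := by gcongr
        linarith
      have h5 : M ^ 2 ≤ 2 / ‖x‖ * |ρ| := by
        calc M ^ 2 = M * M := by ring
          _ ≤ M * (2 * |ρ|) := by gcongr
          _ ≤ _ := by linarith
      calc M ^ 2 * s * |ρ| ≤ 2 / ‖x‖ * |ρ| * s * |ρ| := by gcongr
        _ = 2 / ‖x‖ * (s * ρ ^ 2) := by rw [← sq_abs ρ]; ring
        _ ≤ 2 / ‖x‖ * radDen g x := by gcongr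
        _ ≤ _ := by nlinarith
    · push Not at hc
      have h4 : M ^ 2 / 2 ≤ radDen g x := by
        rw [hden]
        have : 0 ≤ s * ρ ^ 2 := by positivity
        linarith
      have h5 : s * |ρ| ≤ 1 / 2 := by
        have : s * |ρ| ≤ s * M := by gcongr
        nlinarith [sq_nonneg (M - 1)]
      have h6 : 0 ≤ 2 / ‖x‖ * radDen g x := by positivity
      nlinarith [mul_le_mul_of_nonneg_left h5 (sq_nonneg M)]
  · rw [radField, inner_real_smul, inner_add_right, inner_sub_right, inner_real_smul,
      inner_real_smul, inner_smul_right, inner_self_ofReal, ← hs, ← hρ,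
      mul_comm (inner ℂ g x) _, sub_self, add_zero, ← hMM]
    push_cast; ring

/-- Vector fields `v`, `w` on the part of the ball of radius `R` where `f ≠ 0`, through which the
fibration is trivialized: `v` is tangent to the spheres and rotates the argument of `f` at unit
speed; `w` rescales the norm at unit logarithmic speed and fixes the argument of `f`. The
logarithmic derivative of `|f|` along both is bounded away from the origin. -/
structure Fields (f : E → ℂ) (R : ℝ) (v w : E → E) : Prop where
  differentiableAt : ∀ x, ‖x‖ < R → DifferentiableAt ℂ f x
  map_zero : f 0 = 0
  contDiffAt_v : ∀ x, ‖x‖ < R → f x ≠ 0 → ContDiffAt ℝ 1 v x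
  contDiffAt_w : ∀ x, ‖x‖ < R → f x ≠ 0 → ContDiffAt ℝ 1 w x
  re_inner_v : ∀ x, ‖x‖ < R → f x ≠ 0 → (inner ℂ x (v x)).re = 0
  re_inner_w : ∀ x, ‖x‖ < R → f x ≠ 0 → (inner ℂ x (w x)).re = ‖x‖ ^ 2
  fderiv_v : ∀ x, ‖x‖ < R → f x ≠ 0 →
    ∃ p : ℝ, |p| ≤ 1 ∧ fderiv ℂ f x (v x) = f x * (Complex.I + p)
  fderiv_w : ∀ x, ‖x‖ < R → f x ≠ 0 →
    ∃ q : ℝ, |q| ≤ 1 + 2 / ‖x‖ ∧ fderiv ℂ f x (w x) = f x * q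

theorem exists_fields [FiniteDimensional ℂ E] {f : E → ℂ} (hf : AnalyticAt ℂ f 0) (hf0 : f 0 = 0) :
    ∃ R > 0, ∃ v w, Fields f R v w := by
  obtain ⟨R, hR, hball⟩ := Metric.eventually_nhds_iff_ball.1
    (hf.eventually_analyticAt.and ((im_mu_lt hf hf0).and (bigM_mul_norm_le hf hf0)))
  simp only [mem_ball_zero_iff] at hball
  let g : E → E := fun x => (conj (f x))⁻¹ • ∇ f x
  have hg : ∀ x y, inner ℂ (g x) y = fderiv ℂ f x y / f x := fun x y => by
    simp only [g, inner_smul_left, inner_gradient, map_inv₀, Complex.conj_conj]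
    rw [div_eq_inv_mul]
  have hgn : ∀ x, ‖g x‖ = ‖fderiv ℂ f x‖ / ‖f x‖ := fun x => by
    simp only [g, norm_smul, norm_gradient, norm_inv, RCLike.norm_conj]
    rw [div_eq_inv_mul]
  have hM : ∀ x, ‖x‖ * ‖g x‖ = bigM f x := fun x => by rw [hgn, bigM, mul_div_assoc]
  have hM2 : ∀ x, ‖x‖ ^ 2 * ‖g x‖ ^ 2 = bigM f x ^ 2 := fun x => by rw [← hM]; ring
  have hmu : ∀ x, inner ℂ (g x) x = mu f x := fun x => hg x x
  have h1 : ∀ x, ‖x‖ < R → f x ≠ 0 →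
      4 * (inner ℂ (g x) x).im ^ 2 < ‖x‖ ^ 2 * ‖g x‖ ^ 2 := fun x hx hfx => by
    rw [hmu, hM2]; exact (hball x hx).2.1 hfx
  have h2 : ∀ x, ‖x‖ < R → f x ≠ 0 → ‖x‖ ^ 2 * ‖g x‖ ^ 2 ≤ 2 * ‖inner ℂ (g x) x‖ ^ 2 →
      ‖x‖ * ‖g x‖ * ‖x‖ ≤ 1 := fun x hx hfx => by
    rw [hmu, hM2, hM]; exact (hball x hx).2.2 hfx
  have hgs : ∀ x, ‖x‖ < R → f x ≠ 0 → ContDiffAt ℝ 1 g x := fun x hx hfx => by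
    have h3 := (hball x hx).1
    have h4 : ContDiffAt ℝ 1 f x := (h3.restrictScalars (𝕜 := ℝ)).contDiffAt
    have h5 : ContDiffAt ℝ 1 (fun x => conj (f x)) x :=
      Complex.conjCLE.contDiff.contDiffAt.comp x h4
    refine (h5.inv ?_).smul ((contDiffAt_gradient h3).of_le le_top)
    simpa using hfx
  have hN : ContDiff ℝ 1 (fun x : E => ‖x‖ ^ 2) := contDiff_norm_sq ℂ
  have hG : ∀ x, ‖x‖ < R → f x ≠ 0 → ContDiffAt ℝ 1 (fun x => ‖g x‖ ^ 2) x :=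
    fun x hx hfx => (hgs x hx hfx).norm_sq ℂ
  have hI : ∀ x, ‖x‖ < R → f x ≠ 0 → ContDiffAt ℝ 1 (fun x => inner ℂ (g x) x) x :=
    fun x hx hfx => (hgs x hx hfx).inner ℂ contDiffAt_id
  have hre : ∀ x, ‖x‖ < R → f x ≠ 0 → ContDiffAt ℝ 1 (fun x => (inner ℂ (g x) x).re) x :=
    fun x hx hfx => Complex.reCLM.contDiff.contDiffAt.comp x (hI x hx hfx)
  have him : ∀ x, ‖x‖ < R → f x ≠ 0 → ContDiffAt ℝ 1 (fun x => (inner ℂ (g x) x).im) x :=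
    fun x hx hfx => Complex.imCLM.contDiff.contDiffAt.comp x (hI x hx hfx)
  have hσ : ∀ x, ‖x‖ < R → f x ≠ 0 →
      ContDiffAt ℝ 1 (fun x => (1 + ‖x‖ ^ 2 * ‖g x‖ ^ 2)⁻¹) x := fun x hx hfx =>
    (contDiffAt_const.add (hN.contDiffAt.mul (hG x hx hfx))).inv (by positivity)
  refine ⟨R, hR, fun x => rotField (g x) x, fun x => radField (g x) x, ⟨?_, hf0, ?_, ?_, ?_, ?_, ?_, ?_⟩⟩
  · exact fun x hx => (hball x hx).1.differentiableAt
  · intro x hx hfx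
    unfold rotField
    have h3 : ContDiffAt ℝ 1 (fun x => ‖x‖ ^ 2 * ‖g x‖ ^ 2 - (inner ℂ (g x) x).im ^ 2) x :=
      (hN.contDiffAt.mul (hG x hx hfx)).sub ((him x hx hfx).pow 2)
    have h4 := h3.inv (by nlinarith [h1 x hx hfx, sq_nonneg (inner ℂ (g x) x).im])
    have h5 := (hN.contDiffAt (x := x)).smul ((hgs x hx hfx).const_smul Complex.I)
    have h6 := (him x hx hfx).smul contDiffAt_id
    have h7 := h4.smul (h5.sub h6)
    exact h7
  · intro x hx hfx
    unfold radField
    have h3 : ContDiffAt ℝ 1 (fun x => radDen (g x) x) x := by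
      unfold radDen
      exact (((hσ x hx hfx).mul ((hre x hx hfx).pow 2)).add
        (hN.contDiffAt.mul (hG x hx hfx))).sub ((hI x hx hfx).norm_sq ℂ)
    have h4 := (hN.contDiffAt (x := x)).div h3 (radDen_pos (h1 x hx hfx)).ne'
    have h5 := ((hσ x hx hfx).mul (hre x hx hfx)).smul (hgs x hx hfx)
    have h6 := (hG x hx hfx).smul contDiffAt_id
    have h7 := (hI x hx hfx).smul (hgs x hx hfx)
    have h8 := h4.smul (h5.add (h6.sub h7))
    exact h8
  · exact fun x _ _ => re_inner_rotField _ _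
  · exact fun x hx hfx => re_inner_radField (h1 x hx hfx)
  · intro x hx hfx
    obtain ⟨p, hp, hpe⟩ := inner_rotField (h1 x hx hfx)
    refine ⟨p, hp, ?_⟩
    rw [← hpe, hg]; field_simp
  · intro x hx hfx
    obtain ⟨p, hp, hpe⟩ := inner_radField (h1 x hx hfx) (h2 x hx hfx)
    refine ⟨p, hp, ?_⟩
    rw [← hpe, hg]; field_simp

end
end MilnorFib

end

/-! ### Integral curves of the fields -/

section

open Set Filter Topology
namespace MilnorFib
section
open scoped ComplexConjugate

theorem hasDerivWithinAt_Ici {F : Type*} [NormedAddCommGroup F] [NormedSpace ℝ F] {h : ℝ → F}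
    {hpr : F} {t : ℝ} (ht : t ∈ Ico (0 : ℝ) 1) (hd : HasDerivWithinAt h hpr (Icc 0 1) t) :
    HasDerivWithinAt h hpr (Ici t) t :=
  hd.mono_of_mem_nhdsWithin (mem_of_superset (Icc_mem_nhdsGE ht.2) (Icc_subset_Icc_left ht.1))

theorem le_of_deriv_le {h hpr : ℝ → ℝ} {C : ℝ}
    (hd : ∀ t ∈ Icc (0 : ℝ) 1, HasDerivWithinAt h (hpr t) (Icc 0 1) t)
    (hb : ∀ t ∈ Icc (0 : ℝ) 1, hpr t ≤ C) {t : ℝ} (ht : t ∈ Icc (0 : ℝ) 1) :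
    h t ≤ h 0 + C * t := by
  refine image_le_of_deriv_right_le_deriv_boundary (f' := hpr)
    (B := fun t => h 0 + C * t) (B' := fun _ => C)
    (fun t ht => (hd t ht).continuousWithinAt)
    (fun t ht => hasDerivWithinAt_Ici ht (hd t ⟨ht.1, ht.2.le⟩)) (by simp) (by fun_prop) ?_
    (fun t ht => hb t ⟨ht.1, ht.2.le⟩) ht
  intro t _
  simpa using (((hasDerivAt_id t).const_mul C).const_add (h 0)).hasDerivWithinAt

theorem le_of_le_deriv {h hpr : ℝ → ℝ} {C : ℝ}
    (hd : ∀ t ∈ Icc (0 : ℝ) 1, HasDerivWithinAt h (hpr t) (Icc 0 1) t)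
    (hb : ∀ t ∈ Icc (0 : ℝ) 1, C ≤ hpr t) {t : ℝ} (ht : t ∈ Icc (0 : ℝ) 1) :
    h 0 + C * t ≤ h t := by
  have := le_of_deriv_le (h := fun t => -h t) (hpr := fun t => -hpr t) (C := -C)
    (fun t ht => (hd t ht).neg) (fun t ht => neg_le_neg (hb t ht)) ht
  linarith

theorem hasDerivWithinAt_log_norm {F : Type*} [NormedAddCommGroup F] [InnerProductSpace ℝ F]
    {u : ℝ → F} {u' : F} {S : Set ℝ} {t r : ℝ} (hu : HasDerivWithinAt u u' S t) (h0 : u t ≠ 0)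
    (hr : inner ℝ (u t) u' = r * ‖u t‖ ^ 2) :
    HasDerivWithinAt (fun t => Real.log ‖u t‖) r S t := by
  have h1 : ‖u t‖ ^ 2 ≠ 0 := pow_ne_zero _ (norm_ne_zero_iff.2 h0)
  have h2 := (hu.norm_sq.log h1).const_mul (1 / 2 : ℝ)
  have h3 : (fun t => (1 / 2 : ℝ) * Real.log (‖u t‖ ^ 2)) = fun t => Real.log ‖u t‖ := by
    funext t; rw [Real.log_pow]; push_cast; ring
  rw [h3] at h2
  have h4 : 1 / 2 * (2 * inner ℝ (u t) u' / ‖u t‖ ^ 2) = r := by rw [hr]; field_simp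
  rwa [h4] at h2

variable {E : Type*} [NormedAddCommGroup E] [InnerProductSpace ℂ E]

/-- `y` solves `y' = s(t) (θ v(y) + τ w(y))` on `[0, 1]` within the domain of the fields. The factor
`s` accounts for cutoffs. -/
def IsSol (f : E → ℂ) (R : ℝ) (v w : E → E) (s : ℝ → ℝ) (θ τ : ℝ) (y : ℝ → E) : Prop :=
  ∀ t ∈ Icc (0 : ℝ) 1, ‖y t‖ < R ∧ f (y t) ≠ 0 ∧
    HasDerivWithinAt y (s t • (θ • v (y t) + τ • w (y t))) (Icc 0 1) t

variable {f : E → ℂ} {R : ℝ} {v w : E → E} {s : ℝ → ℝ} {θ τ : ℝ} {y : ℝ → E}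

theorem Fields.ne_zero (hF : Fields f R v w) {x : E} (hx : f x ≠ 0) : x ≠ 0 := fun h =>
  hx (by rw [h, hF.map_zero])

theorem IsSol.log_norm (hF : Fields f R v w) (hy : IsSol f R v w s θ τ y) {t : ℝ}
    (ht : t ∈ Icc (0 : ℝ) 1) :
    HasDerivWithinAt (fun t => Real.log ‖y t‖) (s t * τ) (Icc 0 1) t := by
  obtain ⟨h1, h2, h3⟩ := hy t ht
  let _ : InnerProductSpace ℝ E := InnerProductSpace.complexToReal
  refine hasDerivWithinAt_log_norm h3 (hF.ne_zero h2) ?_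
  rw [real_inner_smul_right, inner_add_right, real_inner_smul_right, real_inner_smul_right]
  have e1 : inner ℝ (y t) (v (y t)) = 0 := hF.re_inner_v _ h1 h2
  have e2 : inner ℝ (y t) (w (y t)) = ‖y t‖ ^ 2 := hF.re_inner_w _ h1 h2
  rw [e1, e2]; ring

theorem IsSol.norm_le (hF : Fields f R v w) (hy : IsSol f R v w s θ τ y)
    (hs : ∀ t, s t ∈ Icc (0 : ℝ) 1) {t : ℝ} (ht : t ∈ Icc (0 : ℝ) 1) :
    ‖y t‖ ≤ ‖y 0‖ * Real.exp (max τ 0) := by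
  have h1 := le_of_deriv_le (fun t ht => hy.log_norm hF ht) (C := max τ 0)
    (fun t _ => by
      obtain ⟨h1, h2⟩ := hs t
      nlinarith [le_max_left τ 0, le_max_right τ 0]) ht
  have hp : ∀ t ∈ Icc (0 : ℝ) 1, 0 < ‖y t‖ := fun t ht => norm_pos_iff.2 (hF.ne_zero (hy t ht).2.1)
  have h3 : max τ 0 * t ≤ max τ 0 := mul_le_of_le_one_right (le_max_right _ _) ht.2
  rw [← Real.exp_log (hp t ht), ← Real.exp_log (hp 0 (by simp)), ← Real.exp_add, Real.exp_le_exp]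
  linarith

theorem IsSol.le_norm (hF : Fields f R v w) (hy : IsSol f R v w s θ τ y)
    (hs : ∀ t, s t ∈ Icc (0 : ℝ) 1) {t : ℝ} (ht : t ∈ Icc (0 : ℝ) 1) :
    ‖y 0‖ * Real.exp (-|τ|) ≤ ‖y t‖ := by
  have h1 := le_of_le_deriv (fun t ht => hy.log_norm hF ht) (C := -|τ|)
    (fun t _ => by
      obtain ⟨h1, h2⟩ := hs t
      nlinarith [neg_abs_le τ, abs_nonneg τ]) ht
  have hp : ∀ t ∈ Icc (0 : ℝ) 1, 0 < ‖y t‖ := fun t ht => norm_pos_iff.2 (hF.ne_zero (hy t ht).2.1)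
  have h3 : |τ| * t ≤ |τ| := mul_le_of_le_one_right (abs_nonneg _) ht.2
  rw [← Real.exp_log (hp t ht), ← Real.exp_log (hp 0 (by simp)), ← Real.exp_add, Real.exp_le_exp]
  linarith

/-- Along a solution `f` satisfies a linear equation whose coefficient has imaginary part `s θ` and
controlled real part. -/
theorem IsSol.deriv_f (hF : Fields f R v w) (hy : IsSol f R v w s θ τ y)
    (hs : ∀ t, s t ∈ Icc (0 : ℝ) 1) {t : ℝ} (ht : t ∈ Icc (0 : ℝ) 1) :
    ∃ r : ℝ, |r| ≤ |θ| + |τ| * (1 + 2 / (‖y 0‖ * Real.exp (-|τ|))) ∧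
      HasDerivWithinAt (fun t => f (y t)) (f (y t) * (r + (s t * θ : ℝ) * Complex.I)) (Icc 0 1) t ∧
      HasDerivWithinAt (fun t => Real.log ‖f (y t)‖) r (Icc 0 1) t := by
  obtain ⟨h1, h2, h3⟩ := hy t ht
  obtain ⟨p, hp, hpe⟩ := hF.fderiv_v _ h1 h2
  obtain ⟨q, hq, hqe⟩ := hF.fderiv_w _ h1 h2
  have hd : HasDerivWithinAt (fun t => f (y t))
      (fderiv ℂ f (y t) (s t • (θ • v (y t) + τ • w (y t)))) (Icc 0 1) t :=
    ((hF.differentiableAt _ h1).hasFDerivAt.restrictScalars ℝ).comp_hasDerivWithinAt t h3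
  have hsm : ∀ (c : ℝ) (z : E), fderiv ℂ f (y t) (c • z) = (c : ℂ) * fderiv ℂ f (y t) z :=
    fun c z => by rw [← Complex.coe_smul, map_smul, smul_eq_mul]
  have hval : fderiv ℂ f (y t) (s t • (θ • v (y t) + τ • w (y t))) =
      f (y t) * ((s t * (θ * p + τ * q) : ℝ) + (s t * θ : ℝ) * Complex.I) := by
    rw [hsm, map_add, hsm, hsm, hpe, hqe]; push_cast; ring
  rw [hval] at hd
  have hpos : 0 < ‖y 0‖ * Real.exp (-|τ|) :=
    mul_pos (norm_pos_iff.2 (hF.ne_zero (hy 0 (by simp)).2.1)) (Real.exp_pos _)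
  refine ⟨s t * (θ * p + τ * q), ?_, hd, hasDerivWithinAt_log_norm hd h2 ?_⟩
  · obtain ⟨hs0, hs1⟩ := hs t
    have hq' : |q| ≤ 1 + 2 / (‖y 0‖ * Real.exp (-|τ|)) := by
      refine hq.trans ?_
      gcongr
      exact hy.le_norm hF hs ht
    calc |s t * (θ * p + τ * q)| = s t * |θ * p + τ * q| := by rw [abs_mul, abs_of_nonneg hs0]
      _ ≤ 1 * (|θ * p| + |τ * q|) := by gcongr; exact abs_add_le _ _
      _ = |θ| * |p| + |τ| * |q| := by rw [abs_mul, abs_mul, one_mul]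
      _ ≤ |θ| * 1 + |τ| * (1 + 2 / (‖y 0‖ * Real.exp (-|τ|))) := by gcongr
      _ = _ := by rw [mul_one]
  · rw [Complex.inner, mul_right_comm, Complex.mul_conj', ← Complex.ofReal_pow,
      Complex.re_ofReal_mul]
    simp; ring

theorem IsSol.le_norm_f (hF : Fields f R v w) (hy : IsSol f R v w s θ τ y)
    (hs : ∀ t, s t ∈ Icc (0 : ℝ) 1) {t : ℝ} (ht : t ∈ Icc (0 : ℝ) 1) :
    ‖f (y 0)‖ * Real.exp (-(|θ| + |τ| * (1 + 2 / (‖y 0‖ * Real.exp (-|τ|))))) ≤ ‖f (y t)‖ := by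
  choose! r hr h1 h2 using fun t (ht : t ∈ Icc (0 : ℝ) 1) => hy.deriv_f hF hs ht
  set K := |θ| + |τ| * (1 + 2 / (‖y 0‖ * Real.exp (-|τ|))) with hK
  have hK0 : 0 ≤ K := by positivity
  have h3 := le_of_le_deriv h2 (C := -K) (fun t ht => (abs_le.1 (hr t ht)).1) ht
  have hp : ∀ t ∈ Icc (0 : ℝ) 1, 0 < ‖f (y t)‖ := fun t ht => norm_pos_iff.2 (hy t ht).2.1
  have h4 : K * t ≤ K := mul_le_of_le_one_right hK0 ht.2
  rw [← Real.exp_log (hp t ht), ← Real.exp_log (hp 0 (by simp)), ← Real.exp_add, Real.exp_le_exp]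
  linarith

theorem IsSol.norm_eq (hF : Fields f R v w) (hy : IsSol f R v w (fun _ => 1) θ τ y) :
    ‖y 1‖ = ‖y 0‖ * Real.exp τ := by
  have h1 := le_of_deriv_le (fun t ht => hy.log_norm hF ht) (C := τ) (fun t _ => by simp)
    (right_mem_Icc.2 zero_le_one)
  have h2 := le_of_le_deriv (fun t ht => hy.log_norm hF ht) (C := τ) (fun t _ => by simp)
    (right_mem_Icc.2 zero_le_one)
  have hp : ∀ t ∈ Icc (0 : ℝ) 1, 0 < ‖y t‖ := fun t ht => norm_pos_iff.2 (hF.ne_zero (hy t ht).2.1)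
  rw [← Real.exp_log (hp 1 (by simp)), ← Real.exp_log (hp 0 (by simp)), ← Real.exp_add]
  congr 1; linarith

theorem IsSol.arg_eq (hF : Fields f R v w) (hy : IsSol f R v w (fun _ => 1) θ τ y) :
    f (y 1) / ‖f (y 1)‖ = Complex.exp (θ * Complex.I) * (f (y 0) / ‖f (y 0)‖) := by
  choose! r hr h1 h2 using fun t (ht : t ∈ Icc (0 : ℝ) 1) => hy.deriv_f hF (by simp) ht
  have hp : ∀ t ∈ Icc (0 : ℝ) 1, 0 < ‖f (y t)‖ := fun t ht => norm_pos_iff.2 (hy t ht).2.1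
  let P : ℝ → ℂ := fun t =>
    f (y t) * Complex.exp (-((Real.log ‖f (y t)‖ : ℝ) + (t : ℂ) * (θ * Complex.I)))
  have hP : ∀ t ∈ Icc (0 : ℝ) 1, HasDerivWithinAt P 0 (Icc 0 1) t := fun t ht => by
    have h3 := (h2 t ht).ofReal_comp
    have h4 : HasDerivWithinAt (fun t : ℝ => (t : ℂ) * (θ * Complex.I)) (θ * Complex.I)
        (Icc 0 1) t := by
      simpa using ((hasDerivAt_id t).ofReal_comp.mul_const ((θ : ℂ) * Complex.I)).hasDerivWithinAt
    have h5 := (h1 t ht).fun_mul (h3.fun_add h4).fun_neg.cexp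
    refine h5.congr_deriv ?_
    push_cast
    ring
  have hconst := constant_of_has_deriv_right_zero (fun t ht => (hP t ht).continuousWithinAt)
    (fun t ht => hasDerivWithinAt_Ici ht (hP t ⟨ht.1, ht.2.le⟩)) 1 (by simp)
  have hlog : ∀ t ∈ Icc (0 : ℝ) 1, Complex.exp (Real.log ‖f (y t)‖ : ℝ) = ‖f (y t)‖ := fun t ht => by
    rw [← Complex.ofReal_exp, Real.exp_log (hp t ht)]
  simp only [P, Complex.exp_neg, Complex.exp_add] at hconst
  rw [hlog 1 (by simp), hlog 0 (by simp)] at hconst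
  have hne : Complex.exp (θ * Complex.I) ≠ 0 := Complex.exp_ne_zero _
  have hn1 : (‖f (y 1)‖ : ℂ) ≠ 0 := by exact_mod_cast (hp 1 (by simp)).ne'
  have hn0 : (‖f (y 0)‖ : ℂ) ≠ 0 := by exact_mod_cast (hp 0 (by simp)).ne'
  simp only [Complex.ofReal_one, one_mul, Complex.ofReal_zero, zero_mul, Complex.exp_zero,
    mul_one] at hconst
  field_simp at hconst ⊢
  linear_combination hconst

end
end MilnorFib

end

/-! ### The flow -/

section

open Set Filter Topology
namespace MilnorFib
section
open scoped Manifold ContDiff NNReal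

/-- A smooth cutoff that makes every `C¹` vector field on the open set `Ω` globally Lipschitz and
bounded without changing it on the compact set `K`. -/
theorem exists_cutoff {E : Type*} [NormedAddCommGroup E] [NormedSpace ℝ E] [FiniteDimensional ℝ E]
    {K Ω : Set E} (hK : IsCompact K) (hΩ : IsOpen Ω) (hKΩ : K ⊆ Ω) :
    ∃ χ : E → ℝ, (∀ x, χ x ∈ Icc (0 : ℝ) 1) ∧ (∀ x ∈ K, χ x = 1) ∧ (∀ x ∉ Ω, χ x = 0) ∧
      ∀ u : E → E, (∀ x ∈ Ω, ContDiffAt ℝ 1 u x) →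
        (∃ L : ℝ≥0, LipschitzWith L fun x => χ x • u x) ∧ ∃ C, ∀ x, ‖χ x • u x‖ ≤ C := by
  obtain ⟨K', hK', hKK', hK'Ω⟩ := exists_compact_between hK hΩ hKΩ
  obtain ⟨χ, h1, h0, hχ⟩ := exists_contMDiffMap_one_nhds_of_subset_interior 𝓘(ℝ, E) (n := 1)
    hK.isClosed hKK'
  refine ⟨χ, hχ, fun x hx => h1.self_of_nhdsSet x hx, fun x hx => h0 x fun h => hx (hK'Ω h),
    fun u hu => ?_⟩
  have hs : HasCompactSupport fun x => χ x • u x :=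
    HasCompactSupport.intro hK' fun x hx => by simp [h0 x hx]
  have hd : ContDiff ℝ 1 fun x => χ x • u x := by
    refine contDiff_iff_contDiffAt.2 fun x => ?_
    by_cases hx : x ∈ K'
    · exact (χ.contMDiff.contDiff.contDiffAt).smul (hu x (hK'Ω hx))
    · refine (contDiffAt_const (c := (0 : E))).congr_of_eventuallyEq ?_
      filter_upwards [hK'.isClosed.isOpen_compl.mem_nhds hx] with z hz
      simp [h0 z hz]
  exact ⟨hd.lipschitzWith_of_hasCompactSupport hs one_ne_zero,
    hs.exists_bound_of_continuous hd.continuous⟩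

theorem exists_solution {E : Type*} [NormedAddCommGroup E] [NormedSpace ℝ E] [CompleteSpace E]
    {X : E → E} {L : ℝ≥0} (hX : LipschitzWith L X) {C : ℝ} (hC : ∀ x, ‖X x‖ ≤ C) (x : E) :
    ∃ y : ℝ → E, y 0 = x ∧ ∀ t ∈ Icc (0 : ℝ) 1, HasDerivWithinAt y (X (y t)) (Icc 0 1) t := by
  have hC0 : 0 ≤ C := (norm_nonneg _).trans (hC 0)
  have h : IsPicardLindelof (fun _ => X) (⟨0, by simp⟩ : Icc (0 : ℝ) 1) x ⟨C, hC0⟩ 0 ⟨C, hC0⟩ L :=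
    { lipschitzOnWith := fun _ _ => hX.lipschitzOnWith
      continuousOn := fun _ _ => continuousOn_const
      norm_le := fun _ _ z _ => hC z
      mul_max_le := by simp }
  exact h.exists_eq_forall_mem_Icc_hasDerivWithinAt₀

/-- A solution of an autonomous Lipschitz equation that reaches a zero of the field is constant up
to then. -/
theorem eq_of_reaches_zero {E : Type*} [NormedAddCommGroup E] [NormedSpace ℝ E]
    {X : E → E} {L : ℝ≥0} (hX : LipschitzWith L X) {y : ℝ → E}
    (hy : ∀ t ∈ Icc (0 : ℝ) 1, HasDerivWithinAt y (X (y t)) (Icc 0 1) t) {t : ℝ}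
    (ht : t ∈ Icc (0 : ℝ) 1) (h0 : X (y t) = 0) : y 0 = y t := by
  have := ODE_solution_unique_of_mem_Icc_left (v := fun _ => X) (s := fun _ => univ) (K := L)
    (f := y) (g := fun _ => y t) (a := 0) (b := t) (fun _ _ => hX.lipschitzOnWith)
    (fun s hs => ((hy s ⟨hs.1, hs.2.trans ht.2⟩).continuousWithinAt.mono
      (Icc_subset_Icc_right ht.2)))
    (fun s hs => (hy s ⟨hs.1.le, hs.2.trans ht.2⟩).mono_of_mem_nhdsWithin
      (mem_of_superset (Icc_mem_nhdsLE hs.1) (Icc_subset_Icc_right (hs.2.trans ht.2))))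
    (fun _ _ => trivial) continuousOn_const
    (fun s _ => by simpa [h0] using hasDerivWithinAt_const s (Iic s) (y t)) (fun _ _ => trivial) rfl
  exact this ⟨le_rfl, ht.1⟩

variable {E : Type*} [NormedAddCommGroup E] [InnerProductSpace ℂ E]
  {f : E → ℂ} {R : ℝ} {v w : E → E} {s : ℝ → ℝ} {θ τ : ℝ} {y : ℝ → E}

/-- Near given data, solutions exist, and all of them solve one and the same globally Lipschitz
and bounded equation. -/
theorem Fields.exists_local [FiniteDimensional ℂ E] (hF : Fields f R v w) {θ₀ τ₀ : ℝ} {x₀ : E}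
    (hx₀ : f x₀ ≠ 0) (hR : ‖x₀‖ * Real.exp (max τ₀ 0) < R) :
    ∃ (L : ℝ≥0) (C : ℝ) (V W : E → E), LipschitzWith L V ∧ LipschitzWith L W ∧
      (∀ x, ‖V x‖ ≤ C) ∧ (∀ x, ‖W x‖ ≤ C) ∧ ∀ᶠ p : ℝ × ℝ × E in 𝓝 (θ₀, τ₀, x₀),
        (∃ y, IsSol f R v w (fun _ => 1) p.1 p.2.1 y ∧ y 0 = p.2.2) ∧
        ∀ y, IsSol f R v w (fun _ => 1) p.1 p.2.1 y → y 0 = p.2.2 →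
          ∀ t ∈ Icc (0 : ℝ) 1, V (y t) = v (y t) ∧ W (y t) = w (y t) := by
  have hx0 := hF.ne_zero hx₀
  let B : ℝ × ℝ × E → ℝ := fun p =>
    ‖f p.2.2‖ * Real.exp (-(|p.1| + |p.2.1| * (1 + 2 / (‖p.2.2‖ * Real.exp (-|p.2.1|)))))
  obtain ⟨ρ, hρ1, hρ2⟩ := exists_between hR
  have hx₀R : ‖x₀‖ < R := lt_of_le_of_lt
    (le_mul_of_one_le_right (norm_nonneg _) (Real.one_le_exp (le_max_right _ _))) hR
  have hfc : ∀ x, ‖x‖ < R → ContinuousAt f x := fun x hx => (hF.differentiableAt x hx).continuousAt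
  have hB0 : 0 < B (θ₀, τ₀, x₀) := mul_pos (norm_pos_iff.2 hx₀) (Real.exp_pos _)
  obtain ⟨δ, hδ1, hδ2⟩ := exists_between hB0
  have hfc' : ContinuousAt (fun p : ℝ × ℝ × E => f p.2.2) (θ₀, τ₀, x₀) :=
    ContinuousAt.comp (f := fun p : ℝ × ℝ × E => p.2.2) (g := f) (hfc x₀ hx₀R) (by fun_prop)
  have hBc : ContinuousAt B (θ₀, τ₀, x₀) := by
    refine hfc'.norm.mul (Real.continuous_exp.continuousAt.comp ?_)
    refine ContinuousAt.neg (ContinuousAt.add (by fun_prop) (ContinuousAt.mul (by fun_prop)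
      (continuousAt_const.add (continuousAt_const.div (by fun_prop) ?_))))
    exact mul_ne_zero (norm_ne_zero_iff.2 hx0) (Real.exp_pos _).ne'
  let Ω : Set E := {x | ‖x‖ < R ∧ f x ≠ 0}
  have hΩ : IsOpen Ω := isOpen_iff_mem_nhds.2 fun x hx =>
    ((continuous_norm.tendsto x).eventually_lt_const hx.1).and
      ((hfc x hx.1).eventually_ne hx.2)
  let K : Set E := {x | x ∈ Metric.closedBall 0 ρ ∧ ‖f x‖ ∈ Ici δ}
  have hbR : ∀ x ∈ Metric.closedBall (0 : E) ρ, ‖x‖ < R := fun x hx =>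
    (mem_closedBall_zero_iff.1 hx).trans_lt hρ2
  have : ProperSpace E := FiniteDimensional.proper ℂ E
  have hK : IsCompact K := (isCompact_closedBall (0 : E) ρ).of_isClosed_subset
    (ContinuousOn.preimage_isClosed_of_isClosed
      (fun x hx => ((hfc x (hbR x hx)).norm).continuousWithinAt) Metric.isClosed_closedBall
      isClosed_Ici) (fun x hx => hx.1)
  have hKΩ : K ⊆ Ω := fun x hx => ⟨hbR x hx.1, norm_pos_iff.1 (hδ1.trans_le hx.2)⟩
  have : FiniteDimensional ℝ E := FiniteDimensional.complexToReal E
  obtain ⟨χ, hχ, hχ1, hχ0, hu⟩ := exists_cutoff hK hΩ hKΩ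
  obtain ⟨⟨L₁, hL₁⟩, C₁, hC₁⟩ := hu v fun x hx => hF.contDiffAt_v x hx.1 hx.2
  obtain ⟨⟨L₂, hL₂⟩, C₂, hC₂⟩ := hu w fun x hx => hF.contDiffAt_w x hx.1 hx.2
  refine ⟨max L₁ L₂, max C₁ C₂, _, _, hL₁.weaken (le_max_left _ _), hL₂.weaken (le_max_right _ _),
    fun x => (hC₁ x).trans (le_max_left _ _), fun x => (hC₂ x).trans (le_max_right _ _), ?_⟩
  have hρc : ContinuousAt (fun p : ℝ × ℝ × E => ‖p.2.2‖ * Real.exp (max p.2.1 0)) (θ₀, τ₀, x₀) := by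
    fun_prop
  filter_upwards [hρc.eventually_lt_const hρ1, hBc.eventually_const_lt hδ2,
    hfc'.eventually_ne hx₀] with p hp1 hp2 hp3
  -- every solution, of the original or of the cut off equation, remains in `K`
  have key : ∀ (s : ℝ → ℝ) (y : ℝ → E), (∀ t, s t ∈ Icc (0 : ℝ) 1) →
      IsSol f R v w s p.1 p.2.1 y → y 0 = p.2.2 → ∀ t ∈ Icc (0 : ℝ) 1, χ (y t) = 1 := by
    intro s y hs hy hy0 t ht
    refine hχ1 _ ⟨?_, ?_⟩
    · rw [mem_closedBall_zero_iff]
      exact (hy.norm_le hF hs ht).trans (by rw [hy0]; exact hp1.le)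
    · have := hy.le_norm_f hF hs ht
      rw [hy0] at this
      exact hp2.le.trans this
  refine ⟨?_, fun y hy hy0 t ht => by simp [key _ y (by simp) hy hy0 t ht]⟩
  have hXL : LipschitzWith (‖p.1‖₊ * L₁ + ‖p.2.1‖₊ * L₂)
      fun x => p.1 • (χ x • v x) + p.2.1 • (χ x • w x) :=
    ((lipschitzWith_smul p.1).comp hL₁).add ((lipschitzWith_smul p.2.1).comp hL₂)
  have : CompleteSpace E := FiniteDimensional.complete ℂ E
  obtain ⟨y, hy0, hy⟩ := exists_solution hXL (C := ‖p.1‖ * C₁ + ‖p.2.1‖ * C₂) (fun x => by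
    refine (norm_add_le _ _).trans ?_
    rw [norm_smul p.1, norm_smul p.2.1]
    gcongr
    exacts [hC₁ x, hC₂ x]) p.2.2
  have hyΩ : ∀ t ∈ Icc (0 : ℝ) 1, y t ∈ Ω := by
    intro t ht
    by_contra hn
    have h1 := eq_of_reaches_zero hXL hy ht (by simp [hχ0 _ hn])
    refine hn (h1 ▸ hy0 ▸ ⟨?_, hp3⟩)
    exact ((le_mul_of_one_le_right (norm_nonneg _)
      (Real.one_le_exp (le_max_right _ _))).trans_lt hp1).trans hρ2
  have hys : IsSol f R v w (fun t => χ (y t)) p.1 p.2.1 y := fun t ht =>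
    ⟨(hyΩ t ht).1, (hyΩ t ht).2, by
      convert hy t ht using 1
      rw [smul_add, smul_comm, smul_comm (χ (y t)) p.2.1]⟩
  refine ⟨y, fun t ht => ⟨(hyΩ t ht).1, (hyΩ t ht).2, ?_⟩, hy0⟩
  have := (hys t ht).2.2
  simpa only [key _ y (fun t => hχ _) hys hy0 t ht] using this

/-- Continuous dependence on the data. -/
theorem Fields.dist_tendsto [FiniteDimensional ℂ E] (hF : Fields f R v w) {θ₀ τ₀ : ℝ} {x₀ : E}
    (hx₀ : f x₀ ≠ 0) (hR : ‖x₀‖ * Real.exp (max τ₀ 0) < R) :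
    ∃ b : ℝ × ℝ × E → ℝ, Tendsto b (𝓝 (θ₀, τ₀, x₀)) (𝓝 0) ∧ b (θ₀, τ₀, x₀) = 0 ∧
      ∀ᶠ p : ℝ × ℝ × E in 𝓝 (θ₀, τ₀, x₀),
        ∀ y z, IsSol f R v w (fun _ => 1) p.1 p.2.1 y → y 0 = p.2.2 →
          IsSol f R v w (fun _ => 1) θ₀ τ₀ z → z 0 = x₀ → dist (y 1) (z 1) ≤ b p := by
  obtain ⟨L, C, V, W, hV, hW, hVC, hWC, hev⟩ := hF.exists_local (θ₀ := θ₀) hx₀ hR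
  let K : ℝ≥0 := ‖θ₀‖₊ * L + ‖τ₀‖₊ * L
  have hXL : LipschitzWith K fun x => θ₀ • V x + τ₀ • W x :=
    ((lipschitzWith_smul θ₀).comp hV).add ((lipschitzWith_smul τ₀).comp hW)
  let b : ℝ × ℝ × E → ℝ := fun p =>
    gronwallBound (dist p.2.2 x₀) K ((dist p.1 θ₀ * C + dist p.2.1 τ₀ * C) + 0) (1 - 0)
  have hb0 : b (θ₀, τ₀, x₀) = 0 := by simp [b, gronwallBound_ε0_δ0]
  have hb : Continuous b := by
    by_cases hK : (K : ℝ) = 0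
    · simp only [b, gronwallBound_K0, hK]
      fun_prop
    · simp only [b, gronwallBound_of_K_ne_0 hK]
      fun_prop
  refine ⟨b, by simpa [hb0] using hb.tendsto (θ₀, τ₀, x₀), hb0, ?_⟩
  filter_upwards [hev] with p hp y z hy hy0 hz hz0
  have hyd : ∀ t ∈ Icc (0 : ℝ) 1, HasDerivWithinAt y (p.1 • V (y t) + p.2.1 • W (y t))
      (Icc 0 1) t := fun t ht => by
    obtain ⟨h1, h2⟩ := hp.2 y hy hy0 t ht
    simpa [h1, h2] using (hy t ht).2.2
  have hzd : ∀ t ∈ Icc (0 : ℝ) 1, HasDerivWithinAt z (θ₀ • V (z t) + τ₀ • W (z t))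
      (Icc 0 1) t := fun t ht => by
    obtain ⟨h1, h2⟩ := hev.self_of_nhds.2 z hz hz0 t ht
    simpa [h1, h2] using (hz t ht).2.2
  refine dist_le_of_approx_trajectories_ODE (v := fun _ x => θ₀ • V x + τ₀ • W x) (fun _ => hXL)
    (fun t ht => (hyd t ht).continuousWithinAt)
    (fun t ht => hasDerivWithinAt_Ici ht (hyd t ⟨ht.1, ht.2.le⟩)) (fun t ht => ?_)
    (fun t ht => (hzd t ht).continuousWithinAt)
    (fun t ht => hasDerivWithinAt_Ici ht (hzd t ⟨ht.1, ht.2.le⟩)) (fun t ht => by simp)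
    (by rw [hy0, hz0]) 1 (right_mem_Icc.2 zero_le_one)
  have h1 : (p.1 • V (y t) + p.2.1 • W (y t)) - (θ₀ • V (y t) + τ₀ • W (y t)) =
      (p.1 - θ₀) • V (y t) + (p.2.1 - τ₀) • W (y t) := by module
  rw [dist_eq_norm, h1]
  refine (norm_add_le _ _).trans ?_
  rw [norm_smul, norm_smul, dist_eq_norm, dist_eq_norm]
  gcongr
  exacts [hVC _, hWC _]

/-- Reversing time. -/
theorem IsSol.reverse (hy : IsSol f R v w (fun _ => 1) θ τ y) :
    IsSol f R v w (fun _ => 1) (-θ) (-τ) fun t => y (1 - t) := by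
  intro t ht
  have ht' : 1 - t ∈ Icc (0 : ℝ) 1 := ⟨by linarith [ht.2], by linarith [ht.1]⟩
  obtain ⟨h1, h2, h3⟩ := hy _ ht'
  refine ⟨h1, h2, ?_⟩
  have h4 : HasDerivWithinAt (fun t : ℝ => 1 - t) (-1) (Icc 0 1) t := by
    simpa using ((hasDerivAt_id t).const_sub 1).hasDerivWithinAt
  have h5 := h3.scomp t h4 fun s hs => ⟨by linarith [hs.2], by linarith [hs.1]⟩
  have h6 : (1 : ℝ) • (-θ • v (y (1 - t)) + -τ • w (y (1 - t))) =
      (-1 : ℝ) • (1 : ℝ) • (θ • v (y (1 - t)) + τ • w (y (1 - t))) := by module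
  exact h6 ▸ h5

/-- The time-one map of the flow of `θ v + τ w`, where defined. -/
noncomputable def flow (f : E → ℂ) (R : ℝ) (v w : E → E) (p : ℝ × ℝ × E) : E :=
  open Classical in
  if h : ∃ y, IsSol f R v w (fun _ => 1) p.1 p.2.1 y ∧ y 0 = p.2.2 then h.choose 1 else 0

/-- The data for which the flow is defined. -/
def flowDom (f : E → ℂ) (R : ℝ) : Set (ℝ × ℝ × E) :=
  {p | f p.2.2 ≠ 0 ∧ ‖p.2.2‖ * Real.exp (max p.2.1 0) < R}

theorem Fields.exists_flow [FiniteDimensional ℂ E] (hF : Fields f R v w) {p : ℝ × ℝ × E}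
    (hp : p ∈ flowDom f R) :
    ∃ y, IsSol f R v w (fun _ => 1) p.1 p.2.1 y ∧ y 0 = p.2.2 ∧ y 1 = flow f R v w p := by
  obtain ⟨L, C, V, W, -, -, -, -, hev⟩ := hF.exists_local (θ₀ := p.1) hp.1 hp.2
  have h := hev.self_of_nhds.1
  refine ⟨h.choose, h.choose_spec.1, h.choose_spec.2, ?_⟩
  rw [flow, dif_pos h]

theorem Fields.flow_eq [FiniteDimensional ℂ E] (hF : Fields f R v w) {p : ℝ × ℝ × E}
    (hp : p ∈ flowDom f R) (hy : IsSol f R v w (fun _ => 1) p.1 p.2.1 y) (hy0 : y 0 = p.2.2) :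
    y 1 = flow f R v w p := by
  obtain ⟨b, -, hb0, hev⟩ := hF.dist_tendsto (θ₀ := p.1) hp.1 hp.2
  obtain ⟨z, hz, hz0, hz1⟩ := hF.exists_flow hp
  rw [← hz1]
  exact dist_le_zero.1 ((hev.self_of_nhds y z hy hy0 hz hz0).trans_eq hb0)

theorem Fields.continuousOn_flow [FiniteDimensional ℂ E] (hF : Fields f R v w) :
    ContinuousOn (flow f R v w) (flowDom f R) := by
  intro p hp
  obtain ⟨b, hb, -, hev⟩ := hF.dist_tendsto (θ₀ := p.1) hp.1 hp.2
  refine tendsto_iff_dist_tendsto_zero.2 (squeeze_zero' (Eventually.of_forall fun _ => dist_nonneg)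
    ?_ (hb.mono_left nhdsWithin_le_nhds))
  filter_upwards [hev.filter_mono nhdsWithin_le_nhds, self_mem_nhdsWithin] with q hq hqd
  obtain ⟨y, hy, hy0, hy1⟩ := hF.exists_flow hqd
  obtain ⟨z, hz, hz0, hz1⟩ := hF.exists_flow hp
  rw [← hy1, ← hz1]
  exact hq y z hy hy0 hz hz0

theorem Fields.norm_flow [FiniteDimensional ℂ E] (hF : Fields f R v w) {p : ℝ × ℝ × E}
    (hp : p ∈ flowDom f R) : ‖flow f R v w p‖ = ‖p.2.2‖ * Real.exp p.2.1 := by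
  obtain ⟨y, hy, hy0, hy1⟩ := hF.exists_flow hp
  rw [← hy1, ← hy0, hy.norm_eq hF]

theorem Fields.f_flow_ne_zero [FiniteDimensional ℂ E] (hF : Fields f R v w) {p : ℝ × ℝ × E}
    (hp : p ∈ flowDom f R) : f (flow f R v w p) ≠ 0 := by
  obtain ⟨y, hy, hy0, hy1⟩ := hF.exists_flow hp
  rw [← hy1]
  exact (hy 1 (right_mem_Icc.2 zero_le_one)).2.1

theorem Fields.arg_flow [FiniteDimensional ℂ E] (hF : Fields f R v w) {p : ℝ × ℝ × E}
    (hp : p ∈ flowDom f R) : f (flow f R v w p) / ‖f (flow f R v w p)‖ =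
      Complex.exp (p.1 * Complex.I) * (f p.2.2 / ‖f p.2.2‖) := by
  obtain ⟨y, hy, hy0, hy1⟩ := hF.exists_flow hp
  rw [← hy1, ← hy0, hy.arg_eq hF]

theorem mem_flowDom {E : Type*} [NormedAddCommGroup E] {f : E → ℂ} {R θ τ : ℝ} {x : E}
    (hx : f x ≠ 0) (h1 : ‖x‖ < R) (h2 : ‖x‖ * Real.exp τ < R) :
    (θ, τ, x) ∈ flowDom f R := by
  refine ⟨hx, ?_⟩
  rcases max_cases τ 0 with ⟨h, -⟩ | ⟨h, -⟩ <;> simp only [h]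
  · exact h2
  · simpa using h1

theorem Fields.neg_mem_flowDom [FiniteDimensional ℂ E] (hF : Fields f R v w) {x : E}
    (hp : (θ, τ, x) ∈ flowDom f R) : (-θ, -τ, flow f R v w (θ, τ, x)) ∈ flowDom f R := by
  have h1 := hF.norm_flow hp
  have h2 := hp.2
  simp only at h1 h2
  refine mem_flowDom (hF.f_flow_ne_zero hp) ?_ ?_
  · rw [h1]
    refine lt_of_le_of_lt ?_ h2
    gcongr
    exact le_max_left _ _
  · rw [h1, mul_assoc, ← Real.exp_add, add_neg_cancel]
    refine lt_of_le_of_lt ?_ h2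
    gcongr
    exact le_max_right _ _

theorem Fields.flow_neg [FiniteDimensional ℂ E] (hF : Fields f R v w) {x : E}
    (hp : (θ, τ, x) ∈ flowDom f R) :
    flow f R v w (-θ, -τ, flow f R v w (θ, τ, x)) = x := by
  obtain ⟨y, hy, hy0, hy1⟩ := hF.exists_flow hp
  rw [← hF.flow_eq (hF.neg_mem_flowDom hp) hy.reverse (by simpa using hy1)]
  simpa using hy0
end
end MilnorFib

end

/-! ### Local trivializations -/

section

open Set Filter Topology
namespace MilnorFib
section

/-- The branch of the argument near `b`, continuous on `{z | z / b ∈ slitPlane}`. -/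
noncomputable def argNear (b z : ℂ) : ℝ := b.arg + (z / b).arg

theorem exp_argNear {b z : ℂ} (hb : b ≠ 0) (hz : z ≠ 0) :
    Complex.exp (argNear b z * Complex.I) = z / ‖z‖ := by
  have h : ∀ c : ℂ, c ≠ 0 → Complex.exp (c.arg * Complex.I) = c / ‖c‖ := fun c hc => by
    rw [eq_div_iff (by simpa using hc), mul_comm, Complex.norm_mul_exp_arg_mul_I]
  rw [argNear, Complex.ofReal_add, add_mul, Complex.exp_add, h b hb, h _ (div_ne_zero hz hb),
    norm_div, Complex.ofReal_div]
  have h1 : (‖b‖ : ℂ) ≠ 0 := by simpa using hb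
  have h2 : (‖z‖ : ℂ) ≠ 0 := by simpa using hz
  field_simp

theorem continuousOn_argNear (b : ℂ) :
    ContinuousOn (argNear b) {z | z / b ∈ Complex.slitPlane} := fun z hz =>
  (continuousAt_const.add ((Complex.continuousAt_arg hz).comp
    (f := fun z => z / b) (by fun_prop))).continuousWithinAt

variable {E : Type} [NormedAddCommGroup E] {f : E → ℂ}

/-- The spherefication of `f`. -/
noncomputable def spher (f : E → ℂ) (x : E) : ℂ := (‖x‖ : ℂ) * (f x / ‖f x‖)

theorem norm_spher {x : E} (hx : f x ≠ 0) : ‖spher f x‖ = ‖x‖ := by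
  simp [spher, hx]

theorem spher_div {x : E} (hx : f x ≠ 0) (hx0 : x ≠ 0) :
    spher f x / ‖spher f x‖ = f x / ‖f x‖ := by
  have : (‖x‖ : ℂ) ≠ 0 := by simpa using hx0
  rw [norm_spher hx, spher, mul_div_cancel_left₀ _ this]

variable [InnerProductSpace ℂ E] {R : ℝ} {v w : E → E}

/-- Over the set of radii `S`, the spherefication is trivialized near `b` by transporting `x` along
the flow to the radius `r₀ ∈ S` and to argument `0`. -/
theorem Fields.exists_isLocTrivFib [FiniteDimensional ℂ E] (hF : Fields f R v w) {S : Set ℝ}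
    (hS : S ⊆ Ioo 0 R) {r₀ : ℝ} (hr₀ : r₀ ∈ S) {Zs : Set E}
    (hZ : ∀ x, x ∈ Zs ↔ ‖x‖ ∈ S ∧ f x ≠ 0) {Bs : Set ℂ} (hB : ∀ z, z ∈ Bs ↔ ‖z‖ ∈ S) :
    ∃ F : Zs → Bs, (∀ x, (F x : ℂ) = (‖(x.1 : E)‖ : ℂ) * (f x.1 / ‖f x.1‖)) ∧
      IsLocTrivFib F := by
  have hfx : ∀ x : Zs, f x.1 ≠ 0 := fun x => ((hZ x).1 x.2).2
  have hxS : ∀ x : Zs, ‖x.1‖ ∈ S := fun x => ((hZ x).1 x.2).1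
  have hxR : ∀ x : Zs, ‖x.1‖ < R := fun x => (hS (hxS x)).2
  let F : Zs → Bs := fun x => ⟨spher f x.1, (hB _).2 (by rw [norm_spher (hfx x)]; exact hxS x)⟩
  have hFc : Continuous F := by
    refine Continuous.subtype_mk (continuous_iff_continuousAt.2 fun x => ?_) _
    have h1 : ContinuousAt (fun x : Zs => f x.1) x :=
      (hF.differentiableAt x.1 (hxR x)).continuousAt.comp (f := Subtype.val)
        continuous_subtype_val.continuousAt
    exact (by fun_prop : ContinuousAt (fun x : Zs => (‖x.1‖ : ℂ)) x).mul
      (h1.div (Complex.continuous_ofReal.continuousAt.comp h1.norm) (by simpa using hfx x))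
  refine ⟨F, fun x => rfl, {y : E // ‖y‖ = r₀ ∧ f y ≠ 0 ∧ f y / ‖f y‖ = 1}, inferInstance, hFc, ?_⟩
  intro b
  have hz0 : ∀ z : Bs, 0 < ‖(z : ℂ)‖ := fun z => (hS ((hB z).1 z.2)).1
  have hzR : ∀ z : Bs, ‖(z : ℂ)‖ < R := fun z => (hS ((hB z).1 z.2)).2
  have hb0 : (b : ℂ) ≠ 0 := norm_pos_iff.1 (hz0 b)
  have hr0 : 0 < r₀ := (hS hr₀).1
  have hrR : r₀ < R := (hS hr₀).2
  let θ : ℂ → ℝ := argNear b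
  let τ : ℂ → ℝ := fun z => Real.log (‖z‖ / r₀)
  have hτ : ∀ z : Bs, Real.exp (τ z) = ‖(z : ℂ)‖ / r₀ := fun z =>
    Real.exp_log (div_pos (hz0 z) hr0)
  let W : Set Bs := {z | (z : ℂ) / b ∈ Complex.slitPlane}
  have hθc : Continuous fun z : W => θ z.1.1 :=
    (continuousOn_argNear b).comp_continuous (by fun_prop) fun z => z.2
  have hτc : Continuous fun z : Bs => τ z :=
    Continuous.log (by fun_prop) fun z => (div_pos (hz0 z) hr0).ne'
  have dom1 : ∀ x : Zs, (-θ (F x), -τ (F x), x.1) ∈ flowDom f R := fun x =>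
    mem_flowDom (hfx x) (hxR x) (by
      rw [Real.exp_neg, hτ, norm_spher (hfx x), inv_div, mul_div_cancel₀]
      · exact hrR
      · exact (hS (hxS x)).1.ne')
  have dom2 : ∀ (z : Bs) (y : E), ‖y‖ = r₀ → f y ≠ 0 → (θ z, τ z, y) ∈ flowDom f R :=
    fun z y h1 h2 => mem_flowDom h2 (h1 ▸ hrR) (by
      rw [hτ, h1, mul_div_cancel₀ _ hr0.ne']; exact hzR z)
  let A : Zs → E := fun x => flow f R v w (-θ (F x), -τ (F x), x.1)
  let B : Bs → E → E := fun z y => flow f R v w (θ z, τ z, y)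
  have hA : ∀ x, ‖A x‖ = r₀ ∧ f (A x) ≠ 0 ∧ f (A x) / ‖f (A x)‖ = 1 := fun x => by
    have hx0 : ‖x.1‖ ≠ 0 := (hS (hxS x)).1.ne'
    refine ⟨?_, hF.f_flow_ne_zero (dom1 x), ?_⟩
    · rw [hF.norm_flow (dom1 x)]
      simp only
      rw [Real.exp_neg, hτ, norm_spher (hfx x), inv_div, mul_div_cancel₀ _ hx0]
    · rw [hF.arg_flow (dom1 x)]
      simp only
      rw [← spher_div (hfx x) (norm_ne_zero_iff.1 hx0), Complex.ofReal_neg, neg_mul, Complex.exp_neg,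
        exp_argNear hb0 (norm_pos_iff.1 (hz0 (F x)))]
      have h3 : spher f x.1 ≠ 0 := norm_pos_iff.1 (hz0 (F x))
      exact inv_mul_cancel₀ (div_ne_zero h3 (by simpa using h3))
  have hBn : ∀ (z : Bs) (y : E), ‖y‖ = r₀ → f y ≠ 0 → ‖B z y‖ = ‖(z : ℂ)‖ := fun z y h1 h2 => by
    rw [hF.norm_flow (dom2 z y h1 h2)]
    simp only
    rw [hτ, h1, mul_div_cancel₀ _ hr0.ne']
  have hBf : ∀ (z : Bs) (y : E), ‖y‖ = r₀ → f y ≠ 0 → f y / ‖f y‖ = 1 →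
      spher f (B z y) = z := fun z y h1 h2 h3 => by
    have hz : (z : ℂ) ≠ 0 := norm_pos_iff.1 (hz0 z)
    rw [spher, hBn z y h1 h2, hF.arg_flow (dom2 z y h1 h2)]
    simp only
    rw [h3, mul_one, exp_argNear hb0 hz, mul_div_cancel₀ _ (by simpa using hz)]
  have hBZ : ∀ (z : Bs) (y : E), ‖y‖ = r₀ → f y ≠ 0 → B z y ∈ Zs := fun z y h1 h2 =>
    (hZ _).2 ⟨by rw [hBn z y h1 h2]; exact (hB z).1 z.2, hF.f_flow_ne_zero (dom2 z y h1 h2)⟩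
  have hBF : ∀ (z : Bs) (y : {y : E // ‖y‖ = r₀ ∧ f y ≠ 0 ∧ f y / ‖f y‖ = 1}),
      F ⟨B z y, hBZ z y y.2.1 y.2.2.1⟩ = z := fun z y =>
    Subtype.ext (hBf z y y.2.1 y.2.2.1 y.2.2.2)
  have hBA : ∀ x : Zs, B (F x) (A x) = x.1 := fun x => by
    have := hF.flow_neg (dom1 x)
    rwa [neg_neg, neg_neg] at this
  have hAB : ∀ (z : Bs) (x : Zs) (y : E), ‖y‖ = r₀ → f y ≠ 0 → x.1 = B z y → F x = z → A x = y :=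
    fun z x y h1 h2 h3 h4 => by
      have := hF.flow_neg (dom2 z y h1 h2)
      rw [← this]
      simp only [A, h4, h3, B]
  have hWo : IsOpen W := Complex.isOpen_slitPlane.preimage (by fun_prop : Continuous
    fun z : Bs => (z : ℂ) / b)
  refine ⟨W, hWo, by simp [W, hb0], ?_⟩
  have hFW : Continuous fun x : F ⁻¹' W => (⟨F x.1, x.2⟩ : W) :=
    (hFc.comp continuous_subtype_val).subtype_mk _
  have hAc : Continuous fun x : F ⁻¹' W => A x.1 := by
    refine hF.continuousOn_flow.comp_continuous ?_ fun x => dom1 x.1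
    exact (hθc.comp hFW).neg.prodMk ((hτc.comp (hFc.comp continuous_subtype_val)).neg.prodMk
      (continuous_subtype_val.comp continuous_subtype_val))
  have hBc : Continuous fun q : W × {y : E // ‖y‖ = r₀ ∧ f y ≠ 0 ∧ f y / ‖f y‖ = 1} =>
      B q.1.1 q.2.1 := by
    refine hF.continuousOn_flow.comp_continuous ?_ fun q => dom2 q.1.1 q.2.1 q.2.2.1 q.2.2.2.1
    exact (hθc.comp continuous_fst).prodMk
      ((hτc.comp (continuous_subtype_val.comp continuous_fst)).prodMk
        (continuous_subtype_val.comp continuous_snd))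
  have hBW : ∀ q : W × {y : E // ‖y‖ = r₀ ∧ f y ≠ 0 ∧ f y / ‖f y‖ = 1},
      (⟨B q.1.1 q.2.1, hBZ _ _ q.2.2.1 q.2.2.2.1⟩ : Zs) ∈ F ⁻¹' W := fun q => by
    rw [mem_preimage, hBF]
    exact q.1.2
  refine ⟨⟨⟨fun x => (⟨F x.1, x.2⟩, ⟨A x.1, hA x.1⟩),
    fun q => ⟨⟨B q.1.1 q.2.1, hBZ _ _ q.2.2.1 q.2.2.2.1⟩, hBW q⟩,
    fun x => Subtype.ext (Subtype.ext (hBA x.1)), fun q => Prod.ext (Subtype.ext (hBF q.1.1 q.2))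
      (Subtype.ext (hAB q.1.1 _ _ q.2.2.1 q.2.2.2.1 rfl (hBF q.1.1 q.2)))⟩,
    hFW.prodMk (hAc.subtype_mk _), (hBc.subtype_mk _).subtype_mk hBW⟩, fun z => rfl⟩
end
end MilnorFib

end

theorem stmt_6 (n : ℕ) (hn : 1 ≤ n)
    (U : Set (EuclideanSpace ℂ (Fin n))) (hU : IsOpen U)
    (h0U : (0 : EuclideanSpace ℂ (Fin n)) ∈ U)
    (f : EuclideanSpace ℂ (Fin n) → ℂ) (hf : DifferentiableOn ℂ f U) (hf0 : f 0 = 0)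
    (hfnz : ∀ W ∈ nhds (0 : EuclideanSpace ℂ (Fin n)), ∃ x ∈ W ∩ U, f x ≠ 0) :
    ∃ ε₀ > (0 : ℝ), Metric.closedBall (0 : EuclideanSpace ℂ (Fin n)) ε₀ ⊆ U ∧
      ∀ ε : ℝ, 0 < ε → ε ≤ ε₀ →
      -- the spherefication ℱ(x) = ‖x‖·f(x)/‖f(x)‖ on B̄(0,ε) \ V is a locally
      -- trivial fibration over the punctured disc {z : 0 < ‖z‖ ≤ ε}
      (∃ F : (Metric.closedBall (0 : EuclideanSpace ℂ (Fin n)) ε \ {x ∈ U | f x = 0} : Set _) →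
            ({z : ℂ | 0 < ‖z‖ ∧ ‖z‖ ≤ ε} : Set ℂ),
        (∀ x, (F x : ℂ) = (‖(x.1 : EuclideanSpace ℂ (Fin n))‖ : ℂ) *
            (f (x.1 : EuclideanSpace ℂ (Fin n)) / ‖f (x.1 : EuclideanSpace ℂ (Fin n))‖)) ∧
        IsLocTrivFib F) ∧
      -- moreover the restriction to each sphere S(0,ε') fibres over the circle of radius ε'
      ∀ ε' : ℝ, 0 < ε' → ε' ≤ ε →
        ∃ F' : (Metric.sphere (0 : EuclideanSpace ℂ (Fin n)) ε' \ {x ∈ U | f x = 0} : Set _) →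
            ({z : ℂ | ‖z‖ = ε'} : Set ℂ),
          (∀ x, (F' x : ℂ) = (‖(x.1 : EuclideanSpace ℂ (Fin n))‖ : ℂ) *
              (f (x.1 : EuclideanSpace ℂ (Fin n)) / ‖f (x.1 : EuclideanSpace ℂ (Fin n))‖)) ∧
          IsLocTrivFib F' := by
  have han : AnalyticAt ℂ f 0 := MilnorFib.osgood
    (Filter.mem_of_superset (hU.mem_nhds h0U) fun x hx => hf.differentiableAt (hU.mem_nhds hx))
  obtain ⟨R, hR, v, w, hF⟩ := MilnorFib.exists_fields han hf0
  obtain ⟨r, hr, hrU⟩ := Metric.isOpen_iff.1 hU 0 h0U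
  have hball : Metric.closedBall (0 : EuclideanSpace ℂ (Fin n)) (min (R / 2) (r / 2)) ⊆ U :=
    (Metric.closedBall_subset_ball ((min_le_right _ _).trans_lt (half_lt_self hr))).trans hrU
  have hlt : min (R / 2) (r / 2) < R := (min_le_left _ _).trans_lt (half_lt_self hR)
  refine ⟨min (R / 2) (r / 2), lt_min (half_pos hR) (half_pos hr), hball, fun ε hε hε₀ => ⟨?_, ?_⟩⟩
  · refine hF.exists_isLocTrivFib (S := Set.Ioc 0 ε) (fun t ht => ⟨ht.1, by linarith [ht.2]⟩)
      (Set.right_mem_Ioc.2 hε) (fun x => ?_) fun z => Iff.rfl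
    simp only [Set.mem_sdiff, mem_closedBall_zero_iff, Set.mem_ofPred_eq, Set.mem_Ioc]
    constructor
    · rintro ⟨h1, h2⟩
      have hfx : f x ≠ 0 := fun h =>
        h2 ⟨hball (mem_closedBall_zero_iff.2 (h1.trans hε₀)), h⟩
      exact ⟨⟨norm_pos_iff.2 (hF.ne_zero hfx), h1⟩, hfx⟩
    · rintro ⟨h1, h2⟩
      exact ⟨h1.2, fun h => h2 h.2⟩
  · intro ε' hε' hε'ε
    refine hF.exists_isLocTrivFib (S := {ε'}) (r₀ := ε')
      (Set.singleton_subset_iff.2 ⟨hε', by linarith⟩) rfl (fun x => ?_) fun z => Iff.rfl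
    simp only [Set.mem_sdiff, mem_sphere_zero_iff_norm, Set.mem_ofPred_eq, Set.mem_singleton_iff]
    refine and_congr_right fun h1 => ⟨fun h2 h => h2 ⟨hball ?_, h⟩, fun h2 h => h2 h.2⟩
    exact mem_closedBall_zero_iff.2 (by linarith)
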